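/- Let ψ : ℝ_{>0} → ℝ_{>0} be a decreasing function. Then γ(ψ) ≥ 0, and the Hausdorff dimension of the set of non-ψ-Diophantine l-dimensional subspaces for approximation by k-dimensional rational subspaces equals dim_H E_{l,k}(ψ)^c = (l − k)(n − l) + n/(n/(k(n − l)) + γ(ψ)), valid for every value 0 ≤ γ(ψ) ≤ ∞ (the second summand being interpreted as 0 when γ(ψ) = ∞). -/

import Mathlib

open Filter
open scoped ENNReal NNReal

noncomputable section

/-! ### Distances between linear subspaces of `ℝ^n` -/

/-- The Euclidean norm on `ι → ℝ`. -/
def eucNorm {ι : Type*} [Fintype ι] (v : ι → ℝ) : ℝ := Real.sqrt (∑ i, (v i) ^ 2)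

/-- The Euclidean norm of `v ∧ w` in `⋀² ℝ^n` (standard wedge basis orthonormal). -/
def wedge2Norm {n : ℕ} (v w : Fin n → ℝ) : ℝ :=
  Real.sqrt (∑ i, ∑ j, if i < j then (v i * w j - v j * w i) ^ 2 else 0)

/-- The distance between the lines spanned by the nonzero vectors `v` and `w`:
`d(ℝv, ℝw) = ‖v ∧ w‖ / (‖v‖·‖w‖)`. -/
def dLL {n : ℕ} (v w : Fin n → ℝ) : ℝ := wedge2Norm v w / (eucNorm v * eucNorm w)

/-- The distance from the line spanned by `v` to the subspace `P`: the infimum of the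
distances from the line of `v` to the one-dimensional subspaces of `P`. -/
def dLP {n : ℕ} (v : Fin n → ℝ) (P : Submodule ℝ (Fin n → ℝ)) : ℝ :=
  sInf {r | ∃ w ∈ P, w ≠ 0 ∧ dLL v w = r}

/-- The distance between two subspaces `P, Q` of `ℝ^n`: the maximum, over the
one-dimensional subspaces of the one of smaller dimension, of the distance to the other. -/
def dPP {n : ℕ} (P Q : Submodule ℝ (Fin n → ℝ)) : ℝ :=
  if Module.finrank ℝ P ≤ Module.finrank ℝ Q then
    sSup {r | ∃ v ∈ P, v ≠ 0 ∧ dLP v Q = r}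
  else
    sSup {r | ∃ v ∈ Q, v ≠ 0 ∧ dLP v P = r}

/-- The Grassmannian `X_l(ℝ)` of `l`-dimensional subspaces of `ℝ^n`. -/
abbrev Grass (n l : ℕ) := {P : Submodule ℝ (Fin n → ℝ) // Module.finrank ℝ P = l}

/-- The distance on the Grassmannian `X_l(ℝ)`. -/
def dGr {n l : ℕ} (x y : Grass n l) : ℝ := dPP x.1 y.1

/-! ### Hausdorff dimension with respect to a distance function -/

/-- The (extended) diameter of a set with respect to a distance function. -/
def ediamD {X : Type*} (d : X → X → ℝ) (A : Set X) : ℝ≥0∞ :=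
  ⨆ (x) (_ : x ∈ A) (y) (_ : y ∈ A), ENNReal.ofReal (d x y)

/-- The `s`-dimensional Hausdorff measure with respect to a distance function: the limit
as `δ → 0` of the infimum, over countable covers of mesh at most `δ`, of the sum of the
`s`-th powers of the diameters. -/
def hMeasD {X : Type*} (d : X → X → ℝ) (s : ℝ) (E : Set X) : ℝ≥0∞ :=
  ⨆ (δ : ℝ≥0∞) (_ : 0 < δ),
    ⨅ (t : ℕ → Set X) (_ : E ⊆ ⋃ i, t i) (_ : ∀ i, ediamD d (t i) ≤ δ),
      ∑' i, ediamD d (t i) ^ s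

/-- The Hausdorff dimension of a set with respect to a distance function. -/
def hDimD {X : Type*} (d : X → X → ℝ) (E : Set X) : ℝ≥0∞ :=
  ⨆ (s : ℝ≥0) (_ : hMeasD d s E = ⊤), (s : ℝ≥0∞)

/-! ### Heights of rational subspaces -/

/-- `k`-element subsets of `Fin n`, indexing the wedge basis of `⋀^k ℝ^n`. -/
abbrev WedgeIdx (n k : ℕ) := {s : Finset (Fin n) // s.card = k}

/-- The increasing enumeration of a `k`-element subset of `Fin n`. -/
def subsetEmb {n k : ℕ} (I : WedgeIdx n k) : Fin k → Fin n :=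
  fun a => ((I.1.orderIsoOfFin I.2) a : Fin n)

/-- The coordinates, in the wedge basis of `⋀^k ℤ^n`, of the pure tensor
`f 0 ∧ ⋯ ∧ f (k-1)` of integer vectors. -/
def wedgeCoordsZ {n k : ℕ} (f : Fin k → Fin n → ℤ) : WedgeIdx n k → ℤ :=
  fun I => (Matrix.of fun a b : Fin k => f b (subsetEmb I a)).det

/-- The height `H(P) = ‖v₁ ∧ ⋯ ∧ v_k‖` of the rational subspace with ℤ-basis `f`. -/
def heightB {n k : ℕ} (f : Fin k → Fin n → ℤ) : ℝ :=
  Real.sqrt (∑ I : WedgeIdx n k, ((wedgeCoordsZ f I : ℝ)) ^ 2)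

/-- Cast an integer vector to a real vector. -/
def castVec {n : ℕ} (m : Fin n → ℤ) : Fin n → ℝ := fun i => (m i : ℝ)

/-! ### The Diophantine set and the lower order at infinity -/

/-- The set `E_{l,k}(ψ)` of `ψ`-Diophantine `l`-dimensional subspaces of `ℝ^n`, for
approximation by `k`-dimensional rational subspaces.  Rational subspaces are represented by
tuples `f` of integer vectors that are linearly independent and form a ℤ-basis of
`(span f) ∩ ℤ^n`; the height and distance are then those of the subspace `span f`. -/
def Elk (n k l : ℕ) (ψ : ℝ → ℝ) : Set (Grass n l) :=
  {x | ∃ C > 0, ∀ f : Fin k → Fin n → ℤ,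
    LinearIndependent ℝ (fun i => castVec (f i)) →
    (∀ m : Fin n → ℤ,
        castVec m ∈ Submodule.span ℝ (Set.range fun i => castVec (f i)) →
          ∃ c : Fin k → ℤ, m = fun j => ∑ i, c i * f i j) →
    C * (heightB f) ^ (-(n : ℝ) / ((k : ℝ) * ((n : ℝ) - (l : ℝ)))) * ψ (heightB f) ≤
      dPP (Submodule.span ℝ (Set.range fun i => castVec (f i))) x.1}

/-- `γ(ψ) = liminf_{t → ∞} (-ln ψ(t))/(ln t)`, the lower order of `ψ` at infinity, as an
extended real number. -/
def gammaE (ψ : ℝ → ℝ) : EReal :=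
  liminf (fun t : ℝ => ((-Real.log (ψ t) / Real.log t : ℝ) : EReal)) atTop

/-!
Put `l = k + m`, `n = k + m + N` and `α = n / (kN)`. A subspace that is a graph over the first `l`
coordinates has as coordinates an `N × k` matrix `B₁` and an `N × m` matrix `B₂`.

Upper bound: the subspaces `x` with `d(v, x) < ε` form a neighbourhood of a Schubert variety of
dimension `mN`, covered by `O(ε ^ (-mN))` balls of radius `O(ε)`. A rational subspace of height `H`
has a basis of integer vectors whose lengths have product `O(H)`, so summing over rational subspaces
is dominated by summing over tuples of integer vectors, and for `p (α + γ) > n` the sum of the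
`(p + mN)`-th powers of the radii converges.

Lower bound: for generic `B₂`, a pigeonhole argument shows that away from a set of `B₁` of small
measure there are, within `O(Q ^ (-n / N))` of `B₁`, matrices whose subspace contains a rational
`k`-dimensional subspace of height `O(Q ^ k)`. Shrink these balls to radius `Q ^ (-k (α + γ'))` with
`γ' > γ`. A nested-ball argument shows that their limsup set has positive `s`-dimensional Hausdorff
content for `s (α + γ') < n`, and integrating over `B₂` adds `mN` to the dimension.
-/

/-! ### Distances between subspaces -/

lemma eucNorm_nonneg {ι : Type*} [Fintype ι] (v : ι → ℝ) : 0 ≤ eucNorm v := Real.sqrt_nonneg _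

lemma eucNorm_sq {ι : Type*} [Fintype ι] (v : ι → ℝ) : eucNorm v ^ 2 = ∑ i, v i ^ 2 :=
  Real.sq_sqrt (Finset.sum_nonneg fun _ _ ↦ sq_nonneg _)

lemma abs_le_eucNorm {ι : Type*} [Fintype ι] (v : ι → ℝ) (i : ι) : |v i| ≤ eucNorm v :=
  Real.abs_le_sqrt <|
    Finset.single_le_sum (f := fun i ↦ v i ^ 2) (fun _ _ ↦ sq_nonneg _) (Finset.mem_univ i)

lemma eucNorm_pos {ι : Type*} [Fintype ι] {v : ι → ℝ} (hv : v ≠ 0) : 0 < eucNorm v := by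
  obtain ⟨i, hi⟩ := Function.ne_iff.mp hv
  exact (abs_pos.mpr hi).trans_le (abs_le_eucNorm v i)

lemma eucNorm_le_card_mul {ι : Type*} [Fintype ι] {v : ι → ℝ} {c : ℝ} (hc : 0 ≤ c)
    (h : ∀ i, |v i| ≤ c) : eucNorm v ≤ Fintype.card ι * c := by
  refine Real.sqrt_le_iff.mpr ⟨by positivity, ?_⟩
  have hcard : (Fintype.card ι : ℝ) ≤ (Fintype.card ι : ℝ) ^ 2 := by
    exact_mod_cast Nat.le_self_pow two_ne_zero _
  calc ∑ i, v i ^ 2 ≤ ∑ _i : ι, c ^ 2 :=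
        Finset.sum_le_sum fun i _ ↦ sq_le_sq' (abs_le.mp (h i)).1 (abs_le.mp (h i)).2
    _ = Fintype.card ι * c ^ 2 := by simp
    _ ≤ Fintype.card ι ^ 2 * c ^ 2 := by gcongr
    _ = (Fintype.card ι * c) ^ 2 := by ring

lemma eucNorm_sub_smul_sq {ι : Type*} [Fintype ι] (v w : ι → ℝ) (s : ℝ) :
    eucNorm (v - s • w) ^ 2
      = eucNorm v ^ 2 - 2 * s * (∑ i, v i * w i) + s ^ 2 * eucNorm w ^ 2 := by
  simp only [eucNorm_sq, Pi.sub_apply, Pi.smul_apply, smul_eq_mul, Finset.mul_sum,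
    ← Finset.sum_sub_distrib, ← Finset.sum_add_distrib]
  exact Finset.sum_congr rfl fun i _ ↦ by ring

lemma sum_sum_sq_sub_mul_comm {ι : Type*} [Fintype ι] (v w : ι → ℝ) :
    ∑ i, ∑ j, (v i * w j - v j * w i) ^ 2
      = 2 * ((∑ i, v i ^ 2) * (∑ i, w i ^ 2) - (∑ i, v i * w i) ^ 2) := by
  have hexpand : ∀ i j, (v i * w j - v j * w i) ^ 2
      = v i ^ 2 * w j ^ 2 + w i ^ 2 * v j ^ 2 - 2 * ((v i * w i) * (v j * w j)) :=
    fun i j ↦ by ring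
  simp only [hexpand, Finset.sum_sub_distrib, Finset.sum_add_distrib, ← Finset.mul_sum,
    ← Finset.sum_mul]
  ring

lemma sum_sum_eq_two_mul_sum_sum_lt {ι : Type*} [Fintype ι] [LinearOrder ι] {a : ι → ι → ℝ}
    (hsymm : ∀ i j, a i j = a j i) (hdiag : ∀ i, a i i = 0) :
    ∑ i, ∑ j, a i j = 2 * ∑ i, ∑ j, if i < j then a i j else 0 := by
  have hsplit : ∀ i j, a i j = (if i < j then a i j else 0) + if j < i then a i j else 0 := by
    intro i j
    rcases lt_trichotomy i j with h | rfl | h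
    · simp [h, h.not_gt]
    · simp [hdiag]
    · simp [h, h.not_gt]
  have hswap : ∑ i, ∑ j, (if j < i then a i j else 0) = ∑ i, ∑ j, if i < j then a i j else 0 := by
    rw [Finset.sum_comm]
    simp only [hsymm]
  calc ∑ i, ∑ j, a i j
      = ∑ i, ∑ j, ((if i < j then a i j else 0) + if j < i then a i j else 0) :=
        Finset.sum_congr rfl fun i _ ↦ Finset.sum_congr rfl fun j _ ↦ hsplit i j
    _ = 2 * ∑ i, ∑ j, if i < j then a i j else 0 := by
        simp only [Finset.sum_add_distrib]
        rw [hswap, two_mul]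

section Distance

variable {n : ℕ}

/-- Lagrange's identity. -/
lemma wedge2Norm_sq (v w : Fin n → ℝ) :
    wedge2Norm v w ^ 2 = eucNorm v ^ 2 * eucNorm w ^ 2 - (∑ i, v i * w i) ^ 2 := by
  have hsq : wedge2Norm v w ^ 2 = ∑ i, ∑ j, if i < j then (v i * w j - v j * w i) ^ 2 else 0 := by
    refine Real.sq_sqrt (Finset.sum_nonneg fun i _ ↦ Finset.sum_nonneg fun j _ ↦ ?_)
    split_ifs <;> positivity
  have hdouble := sum_sum_eq_two_mul_sum_sum_lt (a := fun i j ↦ (v i * w j - v j * w i) ^ 2)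
    (fun i j ↦ by ring) fun i ↦ by ring
  rw [sum_sum_sq_sub_mul_comm] at hdouble
  rw [hsq, eucNorm_sq, eucNorm_sq]
  linarith

lemma wedge2Norm_nonneg (v w : Fin n → ℝ) : 0 ≤ wedge2Norm v w := Real.sqrt_nonneg _

lemma wedge2Norm_le (v w : Fin n → ℝ) (s : ℝ) :
    wedge2Norm v w ≤ eucNorm (v - s • w) * eucNorm w := by
  refine (abs_le_of_sq_le_sq' ?_ (mul_nonneg (eucNorm_nonneg _) (eucNorm_nonneg _))).2
  rw [mul_pow, wedge2Norm_sq, eucNorm_sub_smul_sq]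
  nlinarith [sq_nonneg ((∑ i, v i * w i) - s * eucNorm w ^ 2)]

lemma dLL_nonneg (v w : Fin n → ℝ) : 0 ≤ dLL v w :=
  div_nonneg (wedge2Norm_nonneg _ _) (mul_nonneg (eucNorm_nonneg _) (eucNorm_nonneg _))

lemma dLL_le_eucNorm_sub_smul_div {v w : Fin n → ℝ} (hw : w ≠ 0) (s : ℝ) :
    dLL v w ≤ eucNorm (v - s • w) / eucNorm v := by
  have hw' := eucNorm_pos hw
  rcases (eucNorm_nonneg v).eq_or_lt with hv | hv
  · simp [dLL, ← hv]
  · rw [dLL, div_le_div_iff₀ (by positivity) hv]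
    nlinarith [wedge2Norm_le v w s]

lemma exists_eucNorm_sub_smul_eq_dLL_mul {v w : Fin n → ℝ} (hv : v ≠ 0) (hw : w ≠ 0) :
    ∃ s : ℝ, eucNorm (v - s • w) = dLL v w * eucNorm v := by
  have hv' := eucNorm_pos hv
  have hw' := eucNorm_pos hw
  refine ⟨(∑ i, v i * w i) / eucNorm w ^ 2, ?_⟩
  rw [← sq_eq_sq₀ (eucNorm_nonneg _) (mul_nonneg (dLL_nonneg v w) hv'.le), dLL, mul_pow, div_pow,
    wedge2Norm_sq, eucNorm_sub_smul_sq]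
  field_simp
  ring

lemma dLL_le_one {v w : Fin n → ℝ} (hw : w ≠ 0) : dLL v w ≤ 1 :=
  (dLL_le_eucNorm_sub_smul_div hw 0).trans (by simpa using div_self_le_one _)

lemma dLP_le_dLL {v w : Fin n → ℝ} {P : Submodule ℝ (Fin n → ℝ)} (hw : w ∈ P) (hw0 : w ≠ 0) :
    dLP v P ≤ dLL v w :=
  csInf_le ⟨0, by rintro _ ⟨w, -, -, rfl⟩; exact dLL_nonneg v w⟩ ⟨w, hw, hw0, rfl⟩

lemma dLP_nonneg (v : Fin n → ℝ) (P : Submodule ℝ (Fin n → ℝ)) : 0 ≤ dLP v P :=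
  Real.sInf_nonneg (by rintro _ ⟨w, -, -, rfl⟩; exact dLL_nonneg v w)

lemma dPP_nonneg (P Q : Submodule ℝ (Fin n → ℝ)) : 0 ≤ dPP P Q := by
  unfold dPP
  split_ifs <;> exact Real.sSup_nonneg (by rintro _ ⟨v, -, -, rfl⟩; exact dLP_nonneg v _)

lemma dLP_le_one (v : Fin n → ℝ) (P : Submodule ℝ (Fin n → ℝ)) : dLP v P ≤ 1 := by
  rcases eq_or_ne P ⊥ with rfl | hP
  · simp [dLP]
  · obtain ⟨w, hw, hw0⟩ := P.exists_mem_ne_zero_of_ne_bot hP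
    exact (dLP_le_dLL hw hw0).trans (dLL_le_one hw0)

lemma dLP_le_dPP {P Q : Submodule ℝ (Fin n → ℝ)}
    (hPQ : Module.finrank ℝ P ≤ Module.finrank ℝ Q) {v : Fin n → ℝ} (hv : v ∈ P) (hv0 : v ≠ 0) :
    dLP v Q ≤ dPP P Q := by
  rw [dPP, if_pos hPQ]
  exact le_csSup ⟨1, by rintro _ ⟨w, -, -, rfl⟩; exact dLP_le_one w Q⟩ ⟨v, hv, hv0, rfl⟩

lemma dPP_le_of_forall_exists {P Q : Submodule ℝ (Fin n → ℝ)}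
    (hPQ : Module.finrank ℝ P ≤ Module.finrank ℝ Q) {ε : ℝ} (hε : 0 ≤ ε)
    (h : ∀ v ∈ P, ∃ w ∈ Q, eucNorm (v - w) ≤ ε * eucNorm v) : dPP P Q ≤ ε := by
  rw [dPP, if_pos hPQ]
  refine Real.sSup_le ?_ hε
  rintro _ ⟨v, hv, hv0, rfl⟩
  rcases lt_or_ge ε 1 with hε1 | hε1
  · obtain ⟨w, hw, hvw⟩ := h v hv
    have hvpos := eucNorm_pos hv0
    have hw0 : w ≠ 0 := by
      rintro rfl
      rw [sub_zero] at hvw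
      nlinarith
    refine (dLP_le_dLL hw hw0).trans ((dLL_le_eucNorm_sub_smul_div hw0 1).trans ?_)
    rwa [one_smul, div_le_iff₀ hvpos]
  · exact (dLP_le_one v Q).trans hε1

lemma exists_mem_ne_zero_of_finrank_le {P Q : Submodule ℝ (Fin n → ℝ)}
    (hPQ : Module.finrank ℝ P ≤ Module.finrank ℝ Q) {v : Fin n → ℝ} (hv : v ∈ P) (hv0 : v ≠ 0) :
    ∃ w ∈ Q, w ≠ 0 := by
  refine Submodule.exists_mem_ne_zero_of_ne_bot fun hQ ↦ hv0 ?_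
  rw [hQ, finrank_bot, Nat.le_zero, Submodule.finrank_eq_zero] at hPQ
  simpa [hPQ] using hv

lemma exists_mem_eucNorm_sub_le_of_dPP_lt {P Q : Submodule ℝ (Fin n → ℝ)}
    (hPQ : Module.finrank ℝ P ≤ Module.finrank ℝ Q) {η : ℝ} (h : dPP P Q < η)
    {v : Fin n → ℝ} (hv : v ∈ P) : ∃ w ∈ Q, eucNorm (v - w) ≤ η * eucNorm v := by
  by_cases hv0 : v = 0
  · exact ⟨0, Q.zero_mem, by simp [hv0, eucNorm]⟩
  obtain ⟨w₀, hw₀, hw₀'⟩ := exists_mem_ne_zero_of_finrank_le hPQ hv hv0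
  obtain ⟨_, ⟨w, hw, hw0, rfl⟩, hlt⟩ :=
    exists_lt_of_csInf_lt (s := {r | ∃ w ∈ Q, w ≠ 0 ∧ dLL v w = r}) ⟨_, w₀, hw₀, hw₀', rfl⟩
      ((dLP_le_dPP hPQ hv hv0).trans_lt h)
  obtain ⟨s, hs⟩ := exists_eucNorm_sub_smul_eq_dLL_mul hv0 hw0
  exact ⟨s • w, Q.smul_mem s hw,
    hs.le.trans (mul_le_mul_of_nonneg_right hlt.le (eucNorm_nonneg v))⟩

end Distance

/-! ### Graphs of linear maps between coordinate subspaces -/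

section Graph

lemma forall_sum_iff {ι α β : Type*} (e : α ⊕ β ≃ ι) {p : ι → Prop} :
    (∀ j, p j) ↔ (∀ a, p (e (Sum.inl a))) ∧ ∀ i, p (e (Sum.inr i)) := by
  rw [← e.forall_congr_right, Sum.forall]

variable {ι α β : Type*} [Fintype α] (e : α ⊕ β ≃ ι)

/-- The graph `{(y, B y)}` of the linear map with matrix `B`, inside `ι → ℝ` with its coordinates
split by `e` into those of `y` and those of `B y`. -/
def graphSub (B : β → α → ℝ) : Submodule ℝ (ι → ℝ) where
  carrier := {v | ∀ i, v (e (Sum.inr i)) = ∑ a, B i a * v (e (Sum.inl a))}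
  add_mem' {v w} hv hw i := by
    simp only [Pi.add_apply, hv i, hw i, mul_add, Finset.sum_add_distrib]
  zero_mem' i := by simp
  smul_mem' c v hv i := by
    simp only [Pi.smul_apply, smul_eq_mul, hv i, Finset.mul_sum]
    exact Finset.sum_congr rfl fun a _ ↦ by ring

/-- The point `(y, B y)` of the graph of `B` above `y`. -/
def graphPt (B : β → α → ℝ) (y : α → ℝ) : ι → ℝ :=
  fun j ↦ Sum.elim y (fun i ↦ ∑ a, B i a * y a) (e.symm j)

@[simp] lemma graphPt_inl (B : β → α → ℝ) (y : α → ℝ) (a : α) :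
    graphPt e B y (e (Sum.inl a)) = y a := by simp [graphPt]

@[simp] lemma graphPt_inr (B : β → α → ℝ) (y : α → ℝ) (i : β) :
    graphPt e B y (e (Sum.inr i)) = ∑ a, B i a * y a := by simp [graphPt]

lemma graphPt_mem (B : β → α → ℝ) (y : α → ℝ) : graphPt e B y ∈ graphSub e B :=
  fun i ↦ by simp

lemma finrank_graphSub (B : β → α → ℝ) :
    Module.finrank ℝ (graphSub e B) = Fintype.card α := by
  let f : graphSub e B ≃ₗ[ℝ] (α → ℝ) :=
    { toFun := fun v a ↦ v.1 (e (Sum.inl a))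
      map_add' := fun _ _ ↦ rfl
      map_smul' := fun _ _ ↦ rfl
      invFun := fun y ↦ ⟨graphPt e B y, graphPt_mem e B y⟩
      left_inv := fun v ↦ by
        refine Subtype.ext (funext ?_)
        rw [forall_sum_iff e]
        exact ⟨fun a ↦ by simp, fun i ↦ by simp [v.2 i]⟩
      right_inv := fun y ↦ by ext; simp }
  rw [f.finrank_eq, Module.finrank_fintype_fun_eq_card]

lemma abs_sum_mul_le_card_mul {b c : ℝ} {B y : α → ℝ} (hB : ∀ a, |B a| ≤ b)
    (hy : ∀ a, |y a| ≤ c) : |∑ a, B a * y a| ≤ Fintype.card α * (b * c) :=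
  calc |∑ a, B a * y a| ≤ ∑ a, |B a * y a| := Finset.abs_sum_le_sum_abs _ _
    _ ≤ ∑ _a : α, b * c := Finset.sum_le_sum fun a _ ↦ by
        rw [abs_mul]
        exact mul_le_mul (hB a) (hy a) (abs_nonneg _) ((abs_nonneg _).trans (hB a))
    _ = Fintype.card α * (b * c) := by simp

end Graph

section GraphDistance

variable {n : ℕ} {α β : Type*} [Fintype α] (e : α ⊕ β ≃ Fin n) {P : Submodule ℝ (Fin n → ℝ)}
  {B : β → α → ℝ}

lemma dPP_graphSub_le (hP : Module.finrank ℝ P ≤ Fintype.card α) {c : ℝ} (hc : 0 ≤ c)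
    (h : ∀ v ∈ P, ∀ i, |v (e (Sum.inr i)) - ∑ a, B i a * v (e (Sum.inl a))| ≤ c * eucNorm v) :
    dPP P (graphSub e B) ≤ n * c := by
  refine dPP_le_of_forall_exists (by rwa [finrank_graphSub]) (by positivity) fun v hv ↦
    ⟨graphPt e B fun a ↦ v (e (Sum.inl a)), graphPt_mem e B _, ?_⟩
  have hnonneg : 0 ≤ c * eucNorm v := mul_nonneg hc (eucNorm_nonneg v)
  have hcoord := (forall_sum_iff e (p := fun j ↦
    |(v - graphPt e B fun a ↦ v (e (Sum.inl a))) j| ≤ c * eucNorm v)).mpr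
      ⟨fun a ↦ by simpa using hnonneg, fun i ↦ by simpa using h v hv i⟩
  simpa [mul_assoc] using eucNorm_le_card_mul hnonneg hcoord

lemma abs_sub_le_of_dPP_graphSub_lt (hP : Module.finrank ℝ P ≤ Fintype.card α)
    (hB : ∀ i a, |B i a| ≤ 1) {η : ℝ} (h : dPP P (graphSub e B) < η) {v : Fin n → ℝ} (hv : v ∈ P)
    (i : β) :
    |v (e (Sum.inr i)) - ∑ a, B i a * v (e (Sum.inl a))|
      ≤ (Fintype.card α + 1) * (η * eucNorm v) := by
  obtain ⟨w, hw, hvw⟩ := exists_mem_eucNorm_sub_le_of_dPP_lt (by rwa [finrank_graphSub]) h hv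
  have hcoord : ∀ j, |v j - w j| ≤ η * eucNorm v := fun j ↦ (abs_le_eucNorm (v - w) j).trans hvw
  calc |v (e (Sum.inr i)) - ∑ a, B i a * v (e (Sum.inl a))|
      = |(v (e (Sum.inr i)) - w (e (Sum.inr i)))
          - ∑ a, B i a * (v (e (Sum.inl a)) - w (e (Sum.inl a)))| := by
        simp only [mul_sub, Finset.sum_sub_distrib, hw i]
        ring_nf
    _ ≤ η * eucNorm v + Fintype.card α * (1 * (η * eucNorm v)) :=
        (abs_sub _ _).trans <|
          add_le_add (hcoord _) (abs_sum_mul_le_card_mul (hB i) fun a ↦ hcoord _)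
    _ = (Fintype.card α + 1) * (η * eucNorm v) := by ring

end GraphDistance

/-! ### Maximal minors -/

section MaximalMinor

lemma updateCol_submatrix {α ι K : Type*} [DecidableEq α] (M : Matrix α ι K) (s : α → ι) (a : α)
    (j : ι) :
    (M.submatrix id s).updateCol a (M.col j) = M.submatrix id (Function.update s a j) := by
  ext i b
  rcases eq_or_ne b a with rfl | hb
  · simp
  · simp [hb]

variable {α ι : Type*} [Fintype α]

section

variable [DecidableEq α] [Finite ι]

lemma exists_submatrix_det_ne_zero {K : Type*} [Field K] {M : Matrix α ι K}
    (hM : LinearIndependent K M.row) : ∃ s : α → ι, (M.submatrix id s).det ≠ 0 := by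
  have := Fintype.ofFinite ι
  have hrank : M.rank = Fintype.card α := LinearIndependent.rank_matrix hM
  rw [Matrix.rank_eq_finrank_span_cols] at hrank
  obtain ⟨f, hf, -, hfi⟩ := Submodule.exists_fun_fin_finrank_span_eq K (Set.range M.col)
  let σ : α ≃ Fin (Module.finrank K (Submodule.span K (Set.range M.col))) :=
    (Fintype.equivFin α).trans (finCongr hrank.symm)
  choose t ht using hf
  refine ⟨t ∘ σ, ?_⟩
  have hcol : (M.submatrix id (t ∘ σ)).col = f ∘ σ := funext fun b ↦ ht (σ b)
  have hind : LinearIndependent K (M.submatrix id (t ∘ σ)).col :=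
    hcol ▸ hfi.comp _ σ.injective
  rw [Matrix.linearIndependent_cols_iff_isUnit, Matrix.isUnit_iff_isUnit_det] at hind
  exact hind.ne_zero

lemma exists_max_submatrix_det {M : Matrix α ι ℝ} (hM : LinearIndependent ℝ M.row) :
    ∃ s : α → ι, (M.submatrix id s).det ≠ 0 ∧
      ∀ t : α → ι, |(M.submatrix id t).det| ≤ |(M.submatrix id s).det| := by
  obtain ⟨s₀, hs₀⟩ := exists_submatrix_det_ne_zero hM
  have : Nonempty (α → ι) := ⟨s₀⟩
  obtain ⟨s, hs⟩ := Finite.exists_max fun s : α → ι ↦ |(M.submatrix id s).det|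
  exact ⟨s, abs_pos.mp ((abs_pos.mpr hs₀).trans_le (hs s₀)), hs⟩

-- The coefficients are quotients of maximal minors, by Cramer's rule.
lemma exists_coordinates_spanning {M : Matrix α ι ℝ} (hM : LinearIndependent ℝ M.row) :
    ∃ (s : α → ι) (W : ι → α → ℝ), (M.submatrix id s).det ≠ 0 ∧ (∀ j a, |W j a| ≤ 1) ∧
      ∀ v ∈ Submodule.span ℝ (Set.range M.row), ∀ j, v j = ∑ a, W j a * v (s a) := by
  obtain ⟨s, hs0, hs⟩ := exists_max_submatrix_det hM
  set D := M.submatrix id s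
  refine ⟨s, fun j a ↦ D.cramer (M.col j) a / D.det, hs0, fun j a ↦ ?_, fun v hv j ↦ ?_⟩
  · rw [abs_div, div_le_one (abs_pos.mpr hs0), Matrix.cramer_apply, updateCol_submatrix]
    exact hs _
  induction hv using Submodule.span_induction with
  | mem x hx =>
    obtain ⟨i, rfl⟩ := hx
    have hcramer : ∑ a, M i (s a) * D.cramer (M.col j) a = D.det * M i j :=
      congrFun (D.mulVec_cramer (M.col j)) i
    calc M i j = (D.det * M i j) / D.det := (mul_div_cancel_left₀ _ hs0).symm
      _ = ∑ a, D.cramer (M.col j) a / D.det * M i (s a) := by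
          rw [← hcramer, Finset.sum_div]
          exact Finset.sum_congr rfl fun a _ ↦ by ring
  | zero => simp
  | add x y _ _ hx hy => simp only [Pi.add_apply, mul_add, Finset.sum_add_distrib, ← hx, ← hy]
  | smul c x _ hx =>
    simp only [Pi.smul_apply, smul_eq_mul, mul_left_comm _ c, ← Finset.mul_sum, ← hx]

end

variable {β : Type*} [Fintype β] [Fintype ι]

lemma exists_sumEquiv_inl_eq {s : α → ι}
    (hs : Function.Injective s) (hcard : Fintype.card ι = Fintype.card α + Fintype.card β) :
    ∃ e : α ⊕ β ≃ ι, ∀ a, e (Sum.inl a) = s a := by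
  classical
  have hc : Fintype.card β = Fintype.card ((Set.range s)ᶜ : Set ι) := by
    rw [Fintype.card_compl_set, Set.card_range_of_injective hs, hcard]
    omega
  exact ⟨(Equiv.sumCongr (Equiv.ofInjective s hs) (Fintype.equivOfCardEq hc)).trans
    (Equiv.Set.sumCompl (Set.range s)), fun a ↦ by simp⟩

lemma exists_eq_graphSub (V : Submodule ℝ (ι → ℝ))
    (hV : Module.finrank ℝ V = Fintype.card α)
    (hcard : Fintype.card ι = Fintype.card α + Fintype.card β) :
    ∃ (e : α ⊕ β ≃ ι) (B : β → α → ℝ), (∀ i a, |B i a| ≤ 1) ∧ V = graphSub e B := by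
  classical
  let b := (Module.finBasisOfFinrankEq ℝ V hV).reindex (Fintype.equivFin α).symm
  let M : Matrix α ι ℝ := Matrix.of fun a ↦ (b a : ι → ℝ)
  have hM : LinearIndependent ℝ M.row :=
    b.linearIndependent.map' V.subtype (Submodule.ker_subtype V)
  have hspan : Submodule.span ℝ (Set.range M.row) = V := by
    have hrange : Set.range M.row = V.subtype '' Set.range b := by
      rw [← Set.range_comp]; rfl
    rw [hrange, Submodule.span_image, b.span_eq, Submodule.map_top, Submodule.range_subtype]
  obtain ⟨s, W, hdet, hW, hcoord⟩ := exists_coordinates_spanning hM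
  have hs : Function.Injective s := fun a a' haa ↦ by
    by_contra hne
    exact hdet (Matrix.det_zero_of_column_eq hne fun i ↦ by simp [haa])
  obtain ⟨e, he⟩ := exists_sumEquiv_inl_eq (β := β) hs hcard
  refine ⟨e, fun i ↦ W (e (Sum.inr i)), fun i ↦ hW _, Submodule.eq_of_le_of_finrank_eq ?_ ?_⟩
  · intro v hv i
    simpa only [he] using hcoord v (hspan.symm ▸ hv) (e (Sum.inr i))
  · rw [hV, finrank_graphSub]

end MaximalMinor

/-! ### Successive minima of integral lattices -/

section Minkowski

lemma castVec_eq_zero {n : ℕ} {m : Fin n → ℤ} : castVec m = 0 ↔ m = 0 := by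
  simp [funext_iff, castVec]

lemma castVec_mulVec {m n : ℕ} (F : Matrix (Fin m) (Fin n) ℤ) (d : Fin n → ℤ) :
    castVec (F.mulVec d) = (F.map (Int.cast : ℤ → ℝ)).mulVec (castVec d) := by
  ext i
  simp [castVec, Matrix.mulVec, dotProduct]

lemma span_range_castVec (n : ℕ) :
    Submodule.span ℝ (Set.range (castVec : (Fin n → ℤ) → Fin n → ℝ)) = ⊤ := by
  rw [eq_top_iff, ← (Pi.basisFun ℝ (Fin n)).span_eq]
  refine Submodule.span_mono (Set.range_subset_iff.mpr fun i ↦ ⟨Pi.single i 1, ?_⟩)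
  ext a
  simp [castVec, Pi.single_apply]

lemma exists_castVec_eq_of_mem_span {n : ℕ} {x : Fin n → ℝ}
    (hx : x ∈ Submodule.span ℤ (Set.range (Pi.basisFun ℝ (Fin n)))) : ∃ d, castVec d = x := by
  have hx' : ∀ i, ∃ c : ℤ, (c : ℝ) = x i := by
    simpa using ((Pi.basisFun ℝ (Fin n)).mem_span_iff_repr_mem ℤ x).mp hx
  choose d hd using hx'
  exact ⟨d, funext hd⟩

lemma setOf_abs_mulVec_lt_eq_preimage {ι : Type*} [Fintype ι] [DecidableEq ι] (A : Matrix ι ι ℝ)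
    (r : ι → ℝ) :
    {x | ∀ j, |A.mulVec x j| < r j}
      = Matrix.toLin' A ⁻¹' Set.pi Set.univ fun j ↦ Set.Ioo (-r j) (r j) := by
  ext x
  simp [abs_lt]

open MeasureTheory in
lemma volume_setOf_abs_mulVec_lt {ι : Type*} [Fintype ι] [DecidableEq ι] {A : Matrix ι ι ℝ}
    (hA : A.det ≠ 0) {r : ι → ℝ} (hr : ∀ j, 0 ≤ r j) :
    volume {x | ∀ j, |A.mulVec x j| < r j} = ENNReal.ofReal (|A.det|⁻¹ * ∏ j, (2 * r j)) := by
  rw [setOf_abs_mulVec_lt_eq_preimage,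
    Measure.addHaar_preimage_linearMap _ (by rwa [LinearMap.det_toLin']), Real.volume_pi_Ioo,
    LinearMap.det_toLin', abs_inv, ENNReal.ofReal_mul (by positivity),
    ← ENNReal.ofReal_prod_of_nonneg fun j _ ↦ by linarith [hr j]]
  congr 3
  exact funext fun j ↦ by ring

open MeasureTheory in
/-- Minkowski's theorem on linear forms. -/
lemma exists_int_abs_mulVec_lt {k : ℕ} {A : Matrix (Fin k) (Fin k) ℝ} (hA : A.det ≠ 0)
    {r : Fin k → ℝ} (hr : ∀ j, 0 < r j) (hlt : |A.det| < ∏ j, r j) :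
    ∃ d : Fin k → ℤ, d ≠ 0 ∧ ∀ j, |A.mulVec (castVec d) j| < r j := by
  have hconv : Convex ℝ {x | ∀ j, |A.mulVec x j| < r j} := by
    rw [setOf_abs_mulVec_lt_eq_preimage]
    exact (convex_pi fun j _ ↦ convex_Ioo _ _).linear_preimage _
  have hsymm : ∀ x ∈ {x | ∀ j, |A.mulVec x j| < r j}, -x ∈ {x | ∀ j, |A.mulVec x j| < r j} :=
    fun x hx j ↦ by simpa [Matrix.mulVec_neg] using hx j
  have hvol : volume (ZSpan.fundamentalDomain (Pi.basisFun ℝ (Fin k)))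
      * 2 ^ Module.finrank ℝ (Fin k → ℝ) < volume {x | ∀ j, |A.mulVec x j| < r j} := by
    have htwo : (2 : ℝ≥0∞) ^ k = ENNReal.ofReal (2 ^ k) := by
      rw [ENNReal.ofReal_pow zero_le_two, ENNReal.ofReal_ofNat]
    have : 0 ≤ ∏ j, r j := (abs_nonneg _).trans hlt.le
    rw [volume_setOf_abs_mulVec_lt hA fun j ↦ (hr j).le, ZSpan.fundamentalDomain_pi_basisFun,
      Real.volume_pi_Ico]
    simp only [sub_zero, ENNReal.ofReal_one, Finset.prod_const_one, one_mul,
      Module.finrank_fin_fun, htwo, Finset.prod_mul_distrib, Finset.prod_const, Finset.card_univ,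
      Fintype.card_fin]
    refine (ENNReal.ofReal_lt_ofReal_iff_of_nonneg (by positivity)).mpr ?_
    rw [inv_mul_eq_div, lt_div_iff₀ (abs_pos.mpr hA)]
    exact mul_lt_mul_of_pos_left hlt (by positivity)
  have : Countable (Submodule.span ℤ (Set.range (Pi.basisFun ℝ (Fin k)))).toAddSubgroup :=
    inferInstanceAs (Countable (Submodule.span ℤ (Set.range (Pi.basisFun ℝ (Fin k)))))
  obtain ⟨⟨x, hx⟩, hx0, hxs⟩ := exists_ne_zero_mem_lattice_of_measure_mul_two_pow_lt_measure
    (ZSpan.isAddFundamentalDomain' (Pi.basisFun ℝ (Fin k)) volume) hsymm hconv hvol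
  obtain ⟨d, rfl⟩ := exists_castVec_eq_of_mem_span hx
  exact ⟨d, fun hd ↦ hx0 (Subtype.ext (castVec_eq_zero.mpr hd)), hxs⟩

lemma exists_greedy_linearIndependent {K V ι α : Type*} [DivisionRing K] [AddCommGroup V]
    [Module K V] [LinearOrder α] [WellFoundedLT α] {φ : ι → V}
    (hφ : Submodule.span K (Set.range φ) = ⊤) (ν : ι → α) {j : ℕ} (hj : j ≤ Module.finrank K V) :
    ∃ c : Fin j → ι, LinearIndependent K (φ ∘ c) ∧
      ∀ i d, φ d ∉ Submodule.span K ((φ ∘ c) '' Set.Iio i) → ν (c i) ≤ ν d := by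
  induction j with
  | zero => exact ⟨Fin.elim0, linearIndependent_empty_type, fun i ↦ i.elim0⟩
  | succ j ih =>
    obtain ⟨c, hc, hmin⟩ := ih (by omega)
    have hne : ∃ d, φ d ∉ Submodule.span K (Set.range (φ ∘ c)) := by
      by_contra! hall
      have htop : Submodule.span K (Set.range (φ ∘ c)) = ⊤ :=
        top_le_iff.mp (hφ ▸ Submodule.span_le.mpr (Set.range_subset_iff.mpr hall))
      have hcard := finrank_span_eq_card hc
      rw [htop, finrank_top, Fintype.card_fin] at hcard
      omega
    obtain ⟨d₀, hd₀, hd₀min⟩ := exists_minimalFor_of_wellFoundedLT _ ν hne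
    have hsnoc : φ ∘ (Fin.snoc c d₀ : Fin (j + 1) → ι) = Fin.snoc (φ ∘ c) (φ d₀) :=
      (Fin.comp_snoc φ c d₀)
    refine ⟨Fin.snoc c d₀, ?_, fun i d hd ↦ ?_⟩
    · rw [hsnoc, linearIndependent_finSnoc]
      exact ⟨hc, hd₀⟩
    rw [hsnoc] at hd
    induction i using Fin.lastCases with
    | last =>
      rw [Fin.snoc_last]
      refine (le_total (ν d₀) (ν d)).elim id (hd₀min fun hmem ↦ hd (Submodule.span_mono ?_ hmem))
      rintro _ ⟨a, rfl⟩
      exact ⟨a.castSucc, Fin.castSucc_lt_last a, by simp⟩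
    | cast i =>
      rw [Fin.snoc_castSucc]
      refine hmin i d fun hmem ↦ hd (Submodule.span_mono ?_ hmem)
      rintro _ ⟨a, ha, rfl⟩
      exact ⟨a.castSucc, by simpa using ha, by simp⟩

lemma exists_orthogonal_upperTriangular {k : ℕ} (v : Fin k → Fin k → ℝ) :
    ∃ O : Matrix (Fin k) (Fin k) ℝ, |O.det| = 1 ∧ (∀ x, eucNorm (O.mulVec x) = eucNorm x) ∧
      ∀ i, ∀ x ∈ Submodule.span ℝ (v '' Set.Iic i), ∀ j, i < j → O.mulVec x j = 0 := by
  let toL2 : (Fin k → ℝ) ≃ₗ[ℝ] EuclideanSpace ℝ (Fin k) := (WithLp.linearEquiv 2 ℝ _).symm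
  obtain ⟨o, ho⟩ : ∃ o : OrthonormalBasis (Fin k) ℝ (EuclideanSpace ℝ (Fin k)),
      ∀ i j, i < j → inner ℝ (o j) (toL2 (v i)) = 0 :=
    ⟨InnerProductSpace.gramSchmidtOrthonormalBasis (by simp) fun a ↦ toL2 (v a), fun i j hij ↦
      InnerProductSpace.gramSchmidtOrthonormalBasis_inv_triangular _ _ hij⟩
  let O : Matrix (Fin k) (Fin k) ℝ := Matrix.of fun i j ↦ o i j
  have hinner : ∀ x j, O.mulVec x j = inner ℝ (o j) (toL2 x) := fun x j ↦ by
    simp [O, toL2, Matrix.mulVec, dotProduct, PiLp.inner_apply, mul_comm]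
  have hOO : O * O.transpose = 1 := by
    ext i j
    rw [Matrix.mul_apply, Matrix.one_apply, ← orthonormal_iff_ite.mp o.orthonormal i j]
    simp [O, PiLp.inner_apply, mul_comm]
  refine ⟨O, ?_, fun x ↦ ?_, fun i x hx j hij ↦ ?_⟩
  · have hdet := congrArg Matrix.det hOO
    rw [Matrix.det_mul, Matrix.det_transpose, Matrix.det_one] at hdet
    rw [← abs_one, ← sq_eq_sq_iff_abs_eq_abs, one_pow, sq, hdet]
  · have hsq : ∑ j, O.mulVec x j ^ 2 = ‖toL2 x‖ ^ 2 :=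
      (Finset.sum_congr rfl fun j _ ↦ by rw [hinner]).trans (o.sum_sq_inner_right _)
    rw [eucNorm, hsq, EuclideanSpace.norm_sq_eq]
    simp [toL2, eucNorm]
  · have hle : Submodule.span ℝ (v '' Set.Iic i)
        ≤ LinearMap.ker ((innerₛₗ ℝ (o j)).comp toL2.toLinearMap) := by
      rw [Submodule.span_le]
      rintro _ ⟨a, ha, rfl⟩
      exact ho a j (lt_of_le_of_lt ha hij)
    exact (hinner x j).trans (hle hx)

lemma exists_notMem_span_Iio_mem_span_Iic {K V : Type*} [DivisionRing K] [AddCommGroup V]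
    [Module K V] {ι : Type*} [LinearOrder ι] [Finite ι] {v : ι → V} {x : V} (hx : x ≠ 0)
    (hmem : x ∈ Submodule.span K (Set.range v)) :
    ∃ i, x ∉ Submodule.span K (v '' Set.Iio i) ∧ x ∈ Submodule.span K (v '' Set.Iic i) := by
  have hne : ∃ i, x ∈ Submodule.span K (v '' Set.Iic i) := by
    rcases isEmpty_or_nonempty ι with h | h
    · exact absurd (by simpa [Set.range_eq_empty] using hmem) hx
    obtain ⟨i, hi⟩ := Finite.exists_max (id : ι → ι)
    exact ⟨i, by rwa [Set.eq_univ_of_forall (s := Set.Iic i) hi, Set.image_univ]⟩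
  obtain ⟨i, hi, hmin⟩ := exists_minimalFor_of_wellFoundedLT _ (id : ι → ι) hne
  refine ⟨i, fun hlt ↦ ?_, hi⟩
  rcases (Set.Iio i).eq_empty_or_nonempty with hempty | hIio
  · simp [hempty, hx] at hlt
  obtain ⟨j, hj, hjmax⟩ := Set.exists_max_image (Set.Iio i) id (Set.toFinite _) hIio
  have hle : i ≤ j :=
    hmin (Submodule.span_mono (Set.image_mono fun a ha ↦ hjmax a ha) hlt) (le_of_lt hj)
  exact absurd hj hle.not_gt

/-- The upper bound in Minkowski's second theorem: were it false, the theorem on linear forms, in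
the orthonormal coordinates adapted to the greedy vectors, would give a vector beating one. -/
lemma prod_eucNorm_mulVec_le_of_greedy {k : ℕ} {F : Matrix (Fin k) (Fin k) ℝ} (hF : F.det ≠ 0)
    {c : Fin k → Fin k → ℤ} (hc : LinearIndependent ℝ (castVec ∘ c))
    (hmin : ∀ i d, castVec d ∉ Submodule.span ℝ ((castVec ∘ c) '' Set.Iio i) →
      eucNorm (F.mulVec (castVec (c i))) ≤ eucNorm (F.mulVec (castVec d))) :
    ∏ i, eucNorm (F.mulVec (castVec (c i))) ≤ (2 * k) ^ k * |F.det| := by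
  rcases k.eq_zero_or_pos with rfl | hk
  · simp
  by_contra! hbig
  set r : Fin k → ℝ := fun i ↦ eucNorm (F.mulVec (castVec (c i)))
  have hmono : ∀ j i, j ≤ i → r j ≤ r i := fun j i hji ↦
    hmin j (c i) (hc.notMem_span_image (by simpa using hji))
  have hpos : ∀ i, 0 < r i := fun i ↦
    eucNorm_pos fun h0 ↦ hc.ne_zero i (Matrix.eq_zero_of_mulVec_eq_zero hF h0)
  obtain ⟨O, hdet, hnorm, hzero⟩ :=
    exists_orthogonal_upperTriangular fun a ↦ F.mulVec (castVec (c a))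
  have hOF : |(O * F).det| = |F.det| := by rw [Matrix.det_mul, abs_mul, hdet, one_mul]
  obtain ⟨d, hd0, hd⟩ := exists_int_abs_mulVec_lt (A := O * F) (r := fun j ↦ r j / (2 * k))
    (abs_pos.mp (hOF ▸ abs_pos.mpr hF)) (fun j ↦ div_pos (hpos j) (by positivity)) (by
      rw [hOF, Finset.prod_div_distrib, Finset.prod_const, Finset.card_univ, Fintype.card_fin,
        lt_div_iff₀ (by positivity), mul_comm]
      exact hbig)
  have htop : Submodule.span ℝ (Set.range (castVec ∘ c)) = ⊤ :=
    hc.span_eq_top_of_card_eq_finrank' (by simp)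
  obtain ⟨i, hIio, hIic⟩ := exists_notMem_span_Iio_mem_span_Iic
    (mt castVec_eq_zero.mp hd0) (htop ▸ Submodule.mem_top)
  have hFd : F.mulVec (castVec d)
      ∈ Submodule.span ℝ ((fun a ↦ F.mulVec (castVec (c a))) '' Set.Iic i) := by
    have hmap := Submodule.mem_map_of_mem (f := F.mulVecLin) hIic
    rwa [Submodule.map_span, ← Set.image_comp] at hmap
  have hcoord : ∀ j, |O.mulVec (F.mulVec (castVec d)) j| ≤ r i / (2 * k) := fun j ↦ by
    rcases le_or_gt j i with hji | hij
    · rw [Matrix.mulVec_mulVec]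
      exact (hd j).le.trans (by gcongr; exact hmono j i hji)
    · rw [hzero i _ hFd j hij, abs_zero]
      exact div_nonneg (hpos i).le (by positivity)
  have hle : eucNorm (F.mulVec (castVec d)) ≤ r i / 2 := by
    rw [← hnorm]
    refine (eucNorm_le_card_mul (div_nonneg (hpos i).le (by positivity)) hcoord).trans_eq ?_
    rw [Fintype.card_fin]
    field_simp
  linarith [hmin i d hIio, hpos i]

lemma eucNorm_castVec_sq {n : ℕ} (m : Fin n → ℤ) :
    eucNorm (castVec m) ^ 2 = (∑ j, (m j).natAbs ^ 2 : ℕ) := by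
  rw [eucNorm_sq]
  push_cast
  exact Finset.sum_congr rfl fun j _ ↦ by rw [castVec, Nat.cast_natAbs, Int.cast_abs, sq_abs]

lemma exists_prod_eucNorm_mulVec_le {k : ℕ} {F : Matrix (Fin k) (Fin k) ℤ} (hF : F.det ≠ 0) :
    ∃ c : Fin k → Fin k → ℤ, LinearIndependent ℝ (castVec ∘ c) ∧
      ∏ i, eucNorm (castVec (F.mulVec (c i))) ≤ (2 * k) ^ k * |(F.det : ℝ)| := by
  obtain ⟨c, hc, hmin⟩ := exists_greedy_linearIndependent (span_range_castVec k)
    (fun d ↦ ∑ j, (F.mulVec d j).natAbs ^ 2) (j := k) (by simp)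
  have hdet : (F.map (Int.cast : ℤ → ℝ)).det = F.det := (Int.cast_det F).symm
  refine ⟨c, hc, ?_⟩
  simp only [castVec_mulVec, ← hdet]
  refine prod_eucNorm_mulVec_le_of_greedy (by rwa [hdet, Int.cast_ne_zero]) hc fun i d hd ↦ ?_
  simp only [← castVec_mulVec]
  refine le_of_sq_le_sq ?_ (eucNorm_nonneg _)
  rw [eucNorm_castVec_sq, eucNorm_castVec_sq]
  exact_mod_cast hmin i d hd

end Minkowski

/-! ### Rational subspaces and their heights -/

section Height

variable {n k : ℕ}

/-- The rational subspace of `ℝ^n` spanned by a tuple of integer vectors. -/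
def ratSpan (f : Fin k → Fin n → ℤ) : Submodule ℝ (Fin n → ℝ) :=
  Submodule.span ℝ (Set.range (castVec ∘ f))

/-- The tuples representing rational subspaces in `Elk`: they are linearly independent, and every
integer point of the rational subspace they span is an integer combination of them. -/
structure IsPrimitive (f : Fin k → Fin n → ℤ) : Prop where
  linearIndependent : LinearIndependent ℝ (castVec ∘ f)
  exists_eq_sum : ∀ m : Fin n → ℤ, castVec m ∈ ratSpan f →
    ∃ c : Fin k → ℤ, m = fun j ↦ ∑ i, c i * f i j

lemma castVec_mem_ratSpan (f : Fin k → Fin n → ℤ) (i : Fin k) : castVec (f i) ∈ ratSpan f :=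
  Submodule.subset_span ⟨i, rfl⟩

lemma finrank_ratSpan {f : Fin k → Fin n → ℤ} (hf : LinearIndependent ℝ (castVec ∘ f)) :
    Module.finrank ℝ (ratSpan f) = k := by
  rw [ratSpan, finrank_span_eq_card hf, Fintype.card_fin]

lemma ratSpan_eq_of_forall_mem {f p : Fin k → Fin n → ℤ} (hf : LinearIndependent ℝ (castVec ∘ f))
    (hp : LinearIndependent ℝ (castVec ∘ p)) (h : ∀ i, castVec (p i) ∈ ratSpan f) :
    ratSpan p = ratSpan f :=
  Submodule.eq_of_le_of_finrank_eq (Submodule.span_le.mpr (Set.range_subset_iff.mpr h))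
    ((finrank_ratSpan hp).trans (finrank_ratSpan hf).symm)

lemma castVec_sum_mul (f : Fin k → Fin n → ℤ) (c : Fin k → ℤ) :
    castVec (fun j ↦ ∑ i, c i * f i j) = Fintype.linearCombination ℝ (castVec ∘ f) (castVec c) := by
  ext j
  simp [castVec, Fintype.linearCombination_apply]

lemma castVec_sum_mul_mem_ratSpan (f : Fin k → Fin n → ℤ) (c : Fin k → ℤ) :
    castVec (fun j ↦ ∑ i, c i * f i j) ∈ ratSpan f := by
  rw [castVec_sum_mul, ratSpan, ← Fintype.range_linearCombination ℝ]
  exact LinearMap.mem_range_self _ _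

lemma linearIndependent_castVec_sum_mul {f : Fin k → Fin n → ℤ} {κ : Type*} {c : κ → Fin k → ℤ}
    (hf : LinearIndependent ℝ (castVec ∘ f)) (hc : LinearIndependent ℝ (castVec ∘ c)) :
    LinearIndependent ℝ (castVec ∘ fun i j ↦ ∑ a, c i a * f a j) := by
  have hcomp : (castVec ∘ fun i j ↦ ∑ a, c i a * f a j)
      = Fintype.linearCombination ℝ (castVec ∘ f) ∘ castVec ∘ c :=
    funext fun i ↦ castVec_sum_mul f (c i)
  rw [hcomp]
  exact hc.map' _ (LinearMap.ker_eq_bot.mpr hf.fintypeLinearCombination_injective)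

lemma heightB_nonneg (f : Fin k → Fin n → ℤ) : 0 ≤ heightB f := Real.sqrt_nonneg _

lemma exists_perm_subsetEmb_eq {s : Fin k → Fin n} (hs : Function.Injective s) :
    ∃ (I : WedgeIdx n k) (σ : Equiv.Perm (Fin k)), ∀ a, subsetEmb I (σ a) = s a := by
  let I : WedgeIdx n k := ⟨Finset.univ.image s, by
    rw [Finset.card_image_of_injective _ hs, Finset.card_univ, Fintype.card_fin]⟩
  have hex : ∀ a, ∃ b, subsetEmb I b = s a := fun a ↦
    ⟨(I.1.orderIsoOfFin I.2).symm ⟨s a, Finset.mem_image_of_mem s (Finset.mem_univ a)⟩, by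
      simp [subsetEmb]⟩
  choose σ hσ using hex
  have hinj : Function.Injective σ := fun a b hab ↦ hs (by rw [← hσ a, ← hσ b, hab])
  exact ⟨I, Equiv.ofBijective σ (Finite.injective_iff_bijective.mp hinj), hσ⟩

lemma abs_wedgeCoordsZ_le_heightB (f : Fin k → Fin n → ℤ) (I : WedgeIdx n k) :
    |(wedgeCoordsZ f I : ℝ)| ≤ heightB f :=
  Real.abs_le_sqrt <| Finset.single_le_sum (f := fun I ↦ (wedgeCoordsZ f I : ℝ) ^ 2)
    (fun _ _ ↦ sq_nonneg _) (Finset.mem_univ I)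

lemma abs_det_submatrix_le_heightB (f : Fin k → Fin n → ℤ) (s : Fin k → Fin n) :
    |(((Matrix.of f).submatrix id s).det : ℝ)| ≤ heightB f := by
  by_cases hs : Function.Injective s
  · obtain ⟨I, σ, hσ⟩ := exists_perm_subsetEmb_eq hs
    have hsub : ((Matrix.of f).submatrix id s).transpose
        = (Matrix.of fun a b ↦ f b (subsetEmb I a)).submatrix σ (Equiv.refl _) := by
      ext a b
      simp [hσ]
    have hdet : |((Matrix.of f).submatrix id s).det| = |wedgeCoordsZ f I| := by
      rw [← Matrix.det_transpose, hsub, Matrix.abs_det_submatrix_equiv_equiv]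
      rfl
    rw [← Int.cast_abs, hdet, Int.cast_abs]
    exact abs_wedgeCoordsZ_le_heightB f I
  · obtain ⟨a, b, hab, hne⟩ := Function.not_injective_iff.mp hs
    rw [Matrix.det_zero_of_column_eq hne fun i ↦ by simp [hab]]
    simpa using heightB_nonneg f

lemma exists_int_coordinates_spanning {f : Fin k → Fin n → ℤ}
    (hf : LinearIndependent ℝ (castVec ∘ f)) :
    ∃ (s : Fin k → Fin n) (W : Fin n → Fin k → ℝ), ((Matrix.of f).submatrix id s).det ≠ 0 ∧
      (∀ j a, |W j a| ≤ 1) ∧ ∀ v ∈ ratSpan f, ∀ j, v j = ∑ a, W j a * v (s a) := by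
  obtain ⟨s, W, hdet, hW, hcoord⟩ :=
    exists_coordinates_spanning (M := Matrix.of (castVec ∘ f)) hf
  refine ⟨s, W, ?_, hW, hcoord⟩
  have hcast : (((Matrix.of f).submatrix id s).det : ℝ)
      = ((Matrix.of (castVec ∘ f)).submatrix id s).det := Int.cast_det _
  rwa [← hcast, Int.cast_ne_zero] at hdet

lemma one_le_heightB {f : Fin k → Fin n → ℤ} (hf : LinearIndependent ℝ (castVec ∘ f)) :
    1 ≤ heightB f := by
  obtain ⟨s, -, hdet, -⟩ := exists_int_coordinates_spanning hf
  refine le_trans ?_ (abs_det_submatrix_le_heightB f s)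
  exact_mod_cast Int.one_le_abs hdet

lemma exists_reduced_basis {f : Fin k → Fin n → ℤ} (hf : LinearIndependent ℝ (castVec ∘ f)) :
    ∃ b : Fin k → Fin n → ℤ, LinearIndependent ℝ (castVec ∘ b) ∧ ratSpan b = ratSpan f ∧
      ∏ i, eucNorm (castVec (b i)) ≤ (n * k) ^ k * ((2 * k) ^ k * heightB f) := by
  obtain ⟨s, W, hdet, hW, hcoord⟩ := exists_int_coordinates_spanning hf
  set F := ((Matrix.of f).submatrix id s).transpose
  have hFdet : F.det = ((Matrix.of f).submatrix id s).det := Matrix.det_transpose _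
  obtain ⟨c, hc, hprod⟩ := exists_prod_eucNorm_mulVec_le (F := F) (by rwa [hFdet])
  set b : Fin k → Fin n → ℤ := fun i j ↦ ∑ a, c i a * f a j
  have hb : LinearIndependent ℝ (castVec ∘ b) := linearIndependent_castVec_sum_mul hf hc
  have hmem : ∀ i, castVec (b i) ∈ ratSpan f := fun i ↦ castVec_sum_mul_mem_ratSpan f (c i)
  have hbs : ∀ i a, b i (s a) = F.mulVec (c i) a := fun i a ↦ by
    simp [b, F, Matrix.mulVec, dotProduct, mul_comm]
  refine ⟨b, hb, ratSpan_eq_of_forall_mem hf hb hmem, ?_⟩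
  have hle : ∀ i, eucNorm (castVec (b i)) ≤ n * k * eucNorm (castVec (F.mulVec (c i))) := by
    intro i
    have hnonneg := eucNorm_nonneg (castVec (F.mulVec (c i)))
    refine (eucNorm_le_card_mul (c := k * eucNorm (castVec (F.mulVec (c i)))) (by positivity)
      fun j ↦ ?_).trans_eq (by rw [Fintype.card_fin, mul_assoc])
    rw [hcoord _ (hmem i) j]
    refine (abs_sum_mul_le_card_mul (c := eucNorm (castVec (F.mulVec (c i)))) (hW j)
      fun a ↦ ?_).trans_eq (by rw [Fintype.card_fin, one_mul])
    rw [castVec, hbs]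
    exact abs_le_eucNorm (castVec (F.mulVec (c i))) a
  calc ∏ i, eucNorm (castVec (b i))
      ≤ ∏ i, (n * k * eucNorm (castVec (F.mulVec (c i)))) :=
        Finset.prod_le_prod (fun i _ ↦ eucNorm_nonneg _) fun i _ ↦ hle i
    _ = (n * k) ^ k * ∏ i, eucNorm (castVec (F.mulVec (c i))) := by
        rw [Finset.prod_mul_distrib]; simp
    _ ≤ (n * k) ^ k * ((2 * k) ^ k * heightB f) := by
        gcongr
        refine hprod.trans ?_
        gcongr
        exact hFdet ▸ abs_det_submatrix_le_heightB f s

lemma heightB_le_of_abs_le {f : Fin k → Fin n → ℤ} {x : ℝ} (hx : 0 ≤ x)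
    (h : ∀ i j, |(f i j : ℝ)| ≤ x) :
    heightB f ≤ Fintype.card (WedgeIdx n k) * (k.factorial * x ^ k) := by
  refine eucNorm_le_card_mul (v := fun I ↦ (wedgeCoordsZ f I : ℝ)) (by positivity) fun I ↦ ?_
  rw [wedgeCoordsZ, Int.cast_det]
  simpa using Matrix.det_le (abv := AbsoluteValue.abs) (x := x)
    (A := (Matrix.of fun a b : Fin k ↦ f b (subsetEmb I a)).map (Int.cast : ℤ → ℝ))
    fun i j ↦ by simpa using h _ _

lemma wedgeCoordsZ_sum_mul (f : Fin k → Fin n → ℤ) (c : Fin k → Fin k → ℤ) (I : WedgeIdx n k) :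
    wedgeCoordsZ (fun i j ↦ ∑ a, c i a * f a j) I = (Matrix.of c).det * wedgeCoordsZ f I := by
  rw [wedgeCoordsZ, wedgeCoordsZ, ← Matrix.det_transpose (Matrix.of c), mul_comm,
    ← Matrix.det_mul]
  congr 1
  ext a i
  simp [Matrix.mul_apply, mul_comm]

/-- The determinant of the integer matrix expressing `p` through `f` is at least `1` in absolute
value, and it multiplies every wedge coordinate. -/
lemma IsPrimitive.heightB_le {f p : Fin k → Fin n → ℤ} (hf : IsPrimitive f)
    (hp : LinearIndependent ℝ (castVec ∘ p)) (hmem : ∀ i, castVec (p i) ∈ ratSpan f) :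
    heightB f ≤ heightB p := by
  choose c hc using fun i ↦ hf.exists_eq_sum (p i) (hmem i)
  have hwedge : ∀ I, wedgeCoordsZ p I = (Matrix.of c).det * wedgeCoordsZ f I := fun I ↦ by
    rw [← wedgeCoordsZ_sum_mul, ← funext hc]
  have hdet : (Matrix.of c).det ≠ 0 := fun h0 ↦ by
    have hzero : heightB p = 0 := by simp [heightB, hwedge, h0]
    linarith [one_le_heightB hp]
  have hone : (1 : ℝ) ≤ ((Matrix.of c).det : ℝ) ^ 2 := by
    rw [one_le_sq_iff_one_le_abs]
    exact_mod_cast Int.one_le_abs hdet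
  refine Real.sqrt_le_sqrt (Finset.sum_le_sum fun I _ ↦ ?_)
  rw [hwedge, Int.cast_mul, mul_pow]
  exact le_mul_of_one_le_left (sq_nonneg _) hone

/-- The integer points of `V`. -/
def intPoints (V : Submodule ℝ (Fin n → ℝ)) : Submodule ℤ (Fin n → ℤ) :=
  (V.restrictScalars ℤ).comap ((Algebra.linearMap ℤ ℝ).compLeft (Fin n))

lemma mem_intPoints {V : Submodule ℝ (Fin n → ℝ)} {m : Fin n → ℤ} :
    m ∈ intPoints V ↔ castVec m ∈ V := Iff.rfl

lemma exists_isPrimitive {p : Fin k → Fin n → ℤ} (hp : LinearIndependent ℝ (castVec ∘ p)) :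
    ∃ f : Fin k → Fin n → ℤ, IsPrimitive f ∧ ratSpan f = ratSpan p := by
  obtain ⟨r, b⟩ := Submodule.basisOfPid (Pi.basisFun ℤ (Fin n)) (intPoints (ratSpan p))
  let f : Fin r → Fin n → ℤ := fun i ↦ b i
  have hrep : ∀ m, castVec m ∈ ratSpan p → ∃ c : Fin r → ℤ, m = fun j ↦ ∑ i, c i * f i j := by
    intro m hm
    refine ⟨b.repr ⟨m, mem_intPoints.mpr hm⟩, funext fun j ↦ ?_⟩
    have hsum := congrArg Subtype.val (b.sum_repr ⟨m, mem_intPoints.mpr hm⟩)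
    refine (congrFun hsum j).symm.trans ?_
    simp only [f, Submodule.coe_sum, Submodule.coe_smul, Finset.sum_apply, Pi.smul_apply,
      smul_eq_mul]
  have hf : LinearIndependent ℝ (castVec ∘ f) :=
    (linearIndependent_algebraMap_comp_iff (R := ℤ) (S := ℝ) (v := f)).mpr
      (b.linearIndependent.map' (Submodule.subtype _) (Submodule.ker_subtype _))
  have hspan : ratSpan f = ratSpan p := by
    refine le_antisymm (Submodule.span_le.mpr ?_) (Submodule.span_le.mpr ?_)
    · exact Set.range_subset_iff.mpr fun i ↦ mem_intPoints.mp (b i).2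
    · refine Set.range_subset_iff.mpr fun i ↦ ?_
      obtain ⟨c, hc⟩ := hrep (p i) (castVec_mem_ratSpan p i)
      rw [Function.comp_apply, hc]
      exact castVec_sum_mul_mem_ratSpan f c
  have hr : r = k := by rw [← finrank_ratSpan hf, hspan, finrank_ratSpan hp]
  subst hr
  exact ⟨f, ⟨hf, fun m hm ↦ hrep m (hspan ▸ hm)⟩, hspan⟩

lemma exists_isPrimitive_heightB_le {p : Fin k → Fin n → ℤ}
    (hp : LinearIndependent ℝ (castVec ∘ p)) :
    ∃ f : Fin k → Fin n → ℤ, IsPrimitive f ∧ ratSpan f = ratSpan p ∧ heightB f ≤ heightB p := by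
  obtain ⟨f, hf, hspan⟩ := exists_isPrimitive hp
  exact ⟨f, hf, hspan, hf.heightB_le hp fun i ↦ hspan ▸ castVec_mem_ratSpan p i⟩

end Height

/-! ### Sums over integer vectors -/

lemma castVec_mem_span_basisFun {n : ℕ} (v : Fin n → ℤ) :
    castVec v ∈ Submodule.span ℤ (Set.range (Pi.basisFun ℝ (Fin n))) :=
  ((Pi.basisFun ℝ (Fin n)).mem_span_iff_repr_mem ℤ _).mpr fun i ↦ ⟨v i, by simp [castVec]⟩

lemma castVec_injective {n : ℕ} : Function.Injective (castVec : (Fin n → ℤ) → Fin n → ℝ) :=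
  fun _ _ h ↦ funext fun i ↦ Int.cast_injective (congrFun h i)

lemma tsum_ofReal_eucNorm_rpow_ne_top {n : ℕ} {q : ℝ} (hq : (n : ℝ) < q) :
    ∑' v : Fin n → ℤ, ENNReal.ofReal (eucNorm (castVec v) ^ (-q)) ≠ ⊤ := by
  let L : Submodule ℤ (Fin n → ℝ) := Submodule.span ℤ (Set.range (Pi.basisFun ℝ (Fin n)))
  have hrank : Module.finrank ℤ L = n := by rw [ZLattice.rank ℝ L, Module.finrank_fin_fun]
  have hinj : Function.Injective fun v ↦ (⟨castVec v, castVec_mem_span_basisFun v⟩ : L) :=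
    fun _ _ h ↦ castVec_injective (congrArg Subtype.val h)
  have hsum := (ZLattice.summable_norm_rpow L (-q) (by rw [hrank]; linarith)).comp_injective hinj
  refine ne_top_of_le_ne_top hsum.tsum_ofReal_ne_top (ENNReal.tsum_le_tsum fun v ↦ ?_)
  refine ENNReal.ofReal_le_ofReal (?_ : eucNorm (castVec v) ^ (-q) ≤ ‖castVec v‖ ^ (-q))
  by_cases hv : castVec v = 0
  · simp [hv, eucNorm]
  · exact Real.rpow_le_rpow_of_nonpos (norm_pos_iff.mpr hv)
      ((pi_norm_le_iff_of_nonneg (eucNorm_nonneg _)).mpr fun i ↦ abs_le_eucNorm _ i)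
      (by linarith [n.cast_nonneg (α := ℝ)])

lemma tsum_prod_ne_top {V : Type*} {g : V → ℝ≥0∞} (hg : ∑' v, g v ≠ ⊤) (k : ℕ) :
    ∑' b : Fin k → V, ∏ i, g (b i) ≠ ⊤ := by
  induction k with
  | zero => simp [tsum_fintype]
  | succ k ih =>
    rw [← (Fin.consEquiv fun _ : Fin (k + 1) ↦ V).tsum_eq]
    simp only [Fin.consEquiv_apply, Fin.prod_univ_succ, Fin.cons_zero, Fin.cons_succ]
    rw [ENNReal.tsum_prod']
    simp only [ENNReal.tsum_mul_left, ENNReal.tsum_mul_right]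
    exact ENNReal.mul_ne_top hg ih

/-! ### Hausdorff measures of covered sets -/

section Cover

variable {X : Type*} {d : X → X → ℝ}

lemma ediamD_empty (d : X → X → ℝ) : ediamD d ∅ = 0 := by simp [ediamD]

lemma ediamD_le {A : Set X} {r : ℝ} (h : ∀ x ∈ A, ∀ y ∈ A, d x y ≤ r) :
    ediamD d A ≤ ENNReal.ofReal r :=
  iSup₂_le fun x hx ↦ iSup₂_le fun y hy ↦ ENNReal.ofReal_le_ofReal (h x hx y hy)

lemma ofReal_le_ediamD {A : Set X} {x y : X} (hx : x ∈ A) (hy : y ∈ A) :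
    ENNReal.ofReal (d x y) ≤ ediamD d A :=
  le_iSup₂_of_le x hx (le_iSup₂_of_le y hy le_rfl)

lemma hMeasD_le_of_covers {s : ℝ} (hs : 0 < s) {E : Set X} {M : ℝ≥0∞}
    (h : ∀ δ : ℝ≥0∞, 0 < δ → ∃ (ι : Type) (_ : Countable ι) (U : ι → Set X),
      E ⊆ ⋃ i, U i ∧ (∀ i, ediamD d (U i) ≤ δ) ∧ ∑' i, ediamD d (U i) ^ s ≤ M) :
    hMeasD d s E ≤ M := by
  refine iSup₂_le fun δ hδ ↦ ?_
  obtain ⟨ι, hι, U, hE, hU, hM⟩ := h δ hδ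
  have := Encodable.ofCountable ι
  refine iInf_le_of_le (fun i ↦ ⋃ b ∈ Encodable.decode₂ ι i, U b) <|
    iInf_le_of_le (by rwa [Encodable.iUnion_decode₂]) <| iInf_le_of_le (fun i ↦ ?_) ?_
  · exact Encodable.iUnion_decode₂_cases (C := fun A ↦ ediamD d A ≤ δ) (by simp [ediamD_empty]) hU
  · rwa [tsum_iUnion_decode₂ (fun A ↦ ediamD d A ^ s) (by simp [ediamD_empty, hs])]

end Cover

open MeasureTheory

/-! ### Neighbourhoods of rational subspaces in the Grassmannian -/

section Neighbourhood

variable {n : ℕ} {P : Submodule ℝ (Fin n → ℝ)} {ε : ℝ}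

section

variable {α β : Type*} [Fintype α] {e : α ⊕ β ≃ Fin n} {B B' : β → α → ℝ}

lemma eucNorm_le_of_dPP_graphSub_lt (hP : Module.finrank ℝ P ≤ Fintype.card α) (hε : 0 ≤ ε)
    (hεs : n * ((Fintype.card α + 1) * ε) ≤ 1 / 2) (hB : ∀ i a, |B i a| ≤ 1)
    (h : dPP P (graphSub e B) < ε) {v : Fin n → ℝ} (hv : v ∈ P) {c : ℝ} (hc : 0 ≤ c)
    (hvc : ∀ a, |v (e (Sum.inl a))| ≤ c) :
    eucNorm v ≤ 2 * (n * ((Fintype.card α + 1) * c)) := by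
  have hεv : 0 ≤ ε * eucNorm v := mul_nonneg hε (eucNorm_nonneg v)
  have hcoord : ∀ j, |v j| ≤ (Fintype.card α + 1) * (c + ε * eucNorm v) := by
    refine (forall_sum_iff e).mpr ⟨fun a ↦ (hvc a).trans ?_, fun i ↦ ?_⟩
    · nlinarith [(Fintype.card α).cast_nonneg (α := ℝ)]
    · have hdist := abs_sub_le_of_dPP_graphSub_lt e hP hB h hv i
      have hsum := abs_sum_mul_le_card_mul (hB i) hvc
      rw [abs_le] at hdist hsum ⊢
      constructor <;> linarith
  have hnorm := eucNorm_le_card_mul (by positivity) hcoord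
  rw [Fintype.card_fin] at hnorm
  nlinarith [mul_le_mul_of_nonneg_right hεs (eucNorm_nonneg v)]

lemma abs_sum_sub_mul_le_of_dPP_graphSub_lt (hP : Module.finrank ℝ P ≤ Fintype.card α)
    (hB : ∀ i a, |B i a| ≤ 1) (h : dPP P (graphSub e B) < ε) (hB' : ∀ i a, |B' i a| ≤ 1)
    (h' : dPP P (graphSub e B') < ε) {v : Fin n → ℝ} (hv : v ∈ P) (i : β) :
    |∑ a, (B i a - B' i a) * v (e (Sum.inl a))|
      ≤ 2 * ((Fintype.card α + 1) * (ε * eucNorm v)) := by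
  have hb := abs_sub_le_of_dPP_graphSub_lt e hP hB h hv i
  have hb' := abs_sub_le_of_dPP_graphSub_lt e hP hB' h' hv i
  simp only [sub_mul, Finset.sum_sub_distrib]
  rw [abs_le] at hb hb' ⊢
  constructor <;> linarith

lemma dPP_graphSub_graphSub_le {c : ℝ} (hc : 0 ≤ c) (h : ∀ i a, |B i a - B' i a| ≤ c) :
    dPP (graphSub e B) (graphSub e B') ≤ n * (Fintype.card α * c) := by
  refine dPP_graphSub_le e (finrank_graphSub e B).le (by positivity) fun v hv i ↦ ?_
  rw [hv i, ← Finset.sum_sub_distrib, mul_assoc]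
  simp only [← sub_mul]
  exact abs_sum_mul_le_card_mul (h i) fun a ↦ abs_le_eucNorm v _

lemma graphSub_sumCongr {α' : Type*} [Fintype α'] (e : α ⊕ β ≃ Fin n) (σ : α' ≃ α)
    (B : β → α → ℝ) :
    graphSub ((Equiv.sumCongr σ (Equiv.refl β)).trans e) (fun i a ↦ B i (σ a)) = graphSub e B := by
  ext v
  exact forall_congr' fun i ↦ by
    simpa using Eq.congr_right (Equiv.sum_comp σ fun a ↦ B i a * v (e (Sum.inl a)))

end

variable {κ μ ν : Type*} [DecidableEq κ]

/-- The splitting `e` of the coordinates is adapted to `P` if `P` has a basis whose coordinates in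
the first block form the identity matrix, while those in the second block are at most `1`. -/
def IsAdapted (P : Submodule ℝ (Fin n → ℝ)) (e : (κ ⊕ μ) ⊕ ν ≃ Fin n) : Prop :=
  ∀ a, ∃ v ∈ P, (∀ b, v (e (Sum.inl (Sum.inl b))) = Pi.single (M := fun _ ↦ ℝ) a 1 b) ∧
    ∀ j, |v (e (Sum.inl (Sum.inr j)))| ≤ 1

variable [Fintype κ] [Fintype μ]

lemma exists_isAdapted {α : Type*} [Fintype α] {e : α ⊕ ν ≃ Fin n}
    (hP : Module.finrank ℝ P = Fintype.card κ)
    (hcard : Fintype.card α = Fintype.card κ + Fintype.card μ)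
    (hinj : ∀ v ∈ P, (∀ a, v (e (Sum.inl a)) = 0) → v = 0) :
    ∃ σ : κ ⊕ μ ≃ α, IsAdapted P ((Equiv.sumCongr σ (Equiv.refl ν)).trans e) := by
  let pr : (Fin n → ℝ) →ₗ[ℝ] (α → ℝ) := LinearMap.funLeft ℝ ℝ (e ∘ Sum.inl)
  have hrank : Module.finrank ℝ (P.map pr) = Fintype.card κ := by
    rw [← LinearMap.range_domRestrict, LinearMap.finrank_range_of_inj, hP]
    rw [injective_iff_map_eq_zero]
    exact fun v hv ↦ Subtype.ext (hinj v v.2 fun a ↦ congrFun hv a)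
  obtain ⟨σ, A, hA, hgraph⟩ := exists_eq_graphSub (β := μ) (P.map pr) hrank hcard
  refine ⟨σ, fun a ↦ ?_⟩
  obtain ⟨v, hv, hpv⟩ : graphPt σ A (Pi.single a 1) ∈ P.map pr := hgraph ▸ graphPt_mem σ A _
  have hcoord : ∀ c, v (e (Sum.inl c)) = graphPt σ A (Pi.single a 1) c := congrFun hpv
  exact ⟨v, hv, fun b ↦ by simp [hcoord], fun j ↦ by simpa [hcoord, Pi.single_apply] using hA j a⟩

/-- The subspaces near `P` that are graphs with respect to the splitting `e`, adapted to `P`, and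
whose coefficients over the second block of coordinates lie in the cell `g` of mesh `ε`. The
coefficients over the first block are determined by `P` up to `O(ε)`. -/
def nbhdCell {l : ℕ} (P : Submodule ℝ (Fin n → ℝ)) (ε : ℝ) (e : (κ ⊕ μ) ⊕ ν ≃ Fin n)
    (g : ν → μ → ℕ) : Set (Grass n l) :=
  {x | dPP P x.1 < ε ∧ IsAdapted P e ∧ ∃ B : ν → κ ⊕ μ → ℝ, (∀ i a, |B i a| ≤ 1) ∧
    x.1 = graphSub e B ∧ ∀ i j, ⌊(B i (Sum.inr j) + 1) / ε⌋₊ = g i j}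

lemma exists_mem_nbhdCell [Fintype ν] {l : ℕ} (hP : Module.finrank ℝ P = Fintype.card κ)
    (hl : l = Fintype.card κ + Fintype.card μ) (hn : n = l + Fintype.card ν) (hε : 0 < ε)
    (hεs : n * ((l + 1) * ε) ≤ 1 / 2) {x : Grass n l} (hx : dPP P x.1 < ε) :
    ∃ (e : (κ ⊕ μ) ⊕ ν ≃ Fin n) (g : ν → μ → Fin (⌊2 / ε⌋₊ + 1)),
      x ∈ nbhdCell P ε e fun i j ↦ g i j := by
  obtain ⟨e₀, B, hB, hxB⟩ := exists_eq_graphSub (α := Fin l) (β := ν) x.1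
    (by rw [x.2, Fintype.card_fin]) (by simpa using hn)
  have hinj : ∀ v ∈ P, (∀ a, v (e₀ (Sum.inl a)) = 0) → v = 0 := by
    intro v hv h0
    have hnorm := eucNorm_le_of_dPP_graphSub_lt (e := e₀) (by simp [hP, hl]) hε.le
      (by rwa [Fintype.card_fin]) hB (hxB ▸ hx) hv le_rfl fun a ↦ by simp [h0]
    by_contra hv0
    exact (eucNorm_pos hv0).not_ge (by simpa using hnorm)
  obtain ⟨σ, hσ⟩ := exists_isAdapted (κ := κ) (μ := μ) hP (by simp [hl]) hinj
  refine ⟨_, fun i j ↦ ⟨⌊(B i (σ (Sum.inr j)) + 1) / ε⌋₊, Nat.lt_succ_of_le ?_⟩, hx, hσ,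
    fun i a ↦ B i (σ a), fun i a ↦ hB i _, by rw [hxB, graphSub_sumCongr], fun i j ↦ rfl⟩
  have hle := (abs_le.mp (hB i (σ (Sum.inr j)))).2
  gcongr
  linarith

lemma abs_sub_le_of_floor_div_eq {x y : ℝ} (hε : 0 < ε) (hx : 0 ≤ x) (hy : 0 ≤ y)
    (h : ⌊x / ε⌋₊ = ⌊y / ε⌋₊) : |x - y| ≤ ε := by
  have hx' := (Nat.floor_eq_iff (div_nonneg hx hε.le)).mp h
  have hy' := (Nat.floor_eq_iff (div_nonneg hy hε.le)).mp rfl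
  have hdiv : |x / ε - y / ε| ≤ 1 := abs_le.mpr ⟨by linarith, by linarith⟩
  rwa [← sub_div, abs_div, abs_of_pos hε, div_le_one hε] at hdiv

lemma abs_sub_inl_le_of_isAdapted {e : (κ ⊕ μ) ⊕ ν ≃ Fin n} {B B' : ν → κ ⊕ μ → ℝ}
    (hP : Module.finrank ℝ P ≤ Fintype.card (κ ⊕ μ)) (hPe : IsAdapted P e) (hε : 0 ≤ ε)
    (hεs : n * ((Fintype.card (κ ⊕ μ) + 1) * ε) ≤ 1 / 2)
    (hB : ∀ i a, |B i a| ≤ 1) (h : dPP P (graphSub e B) < ε)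
    (hB' : ∀ i a, |B' i a| ≤ 1) (h' : dPP P (graphSub e B') < ε)
    (hinr : ∀ i j, |B i (Sum.inr j) - B' i (Sum.inr j)| ≤ ε) (i : ν) (a : κ) :
    |B i (Sum.inl a) - B' i (Sum.inl a)|
      ≤ (4 * n * (Fintype.card (κ ⊕ μ) + 1) ^ 2 + Fintype.card μ) * ε := by
  obtain ⟨v, hv, hvK, hvM⟩ := hPe a
  have hv1 : ∀ b, |v (e (Sum.inl b))| ≤ 1 :=
    Sum.forall.mpr ⟨fun b ↦ by rw [hvK, Pi.single_apply]; split_ifs <;> simp, hvM⟩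
  have hnorm := eucNorm_le_of_dPP_graphSub_lt hP hε hεs hB h hv zero_le_one hv1
  have hfirst := abs_sum_sub_mul_le_of_dPP_graphSub_lt hP hB h hB' h' hv i
  have hsecond := abs_sum_mul_le_card_mul (hinr i) hvM
  simp only [Fintype.sum_sum_type, hvK, Pi.single_apply, mul_ite, mul_one, mul_zero,
    Finset.sum_ite_eq', Finset.mem_univ, if_true] at hfirst
  have hscale : (Fintype.card (κ ⊕ μ) + 1) * (ε * eucNorm v)
      ≤ (Fintype.card (κ ⊕ μ) + 1) * (ε * (2 * (n * ((Fintype.card (κ ⊕ μ) + 1) * 1)))) := by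
    gcongr
  rw [abs_le] at hfirst hsecond ⊢
  constructor <;> linarith

/-- The diameter of a cell is at most `cellConst n l` times its mesh. -/
def cellConst (n l : ℕ) : ℝ := n * (l * (4 * n * (l + 1) ^ 2 + l + 1))

lemma cellConst_nonneg (n l : ℕ) : 0 ≤ cellConst n l := by unfold cellConst; positivity

lemma ediamD_nbhdCell_le {l : ℕ} (hP : Module.finrank ℝ P ≤ Fintype.card (κ ⊕ μ))
    (hl : l = Fintype.card (κ ⊕ μ)) (hε : 0 < ε) (hεs : n * ((l + 1) * ε) ≤ 1 / 2)
    (e : (κ ⊕ μ) ⊕ ν ≃ Fin n) (g : ν → μ → ℕ) :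
    ediamD dGr (nbhdCell (l := l) P ε e g) ≤ ENNReal.ofReal (cellConst n l * ε) := by
  refine ediamD_le ?_
  rintro x ⟨hx, hPe, B, hB, hxB, hg⟩ x' ⟨hx', -, B', hB', hxB', hg'⟩
  subst hl
  have hinr : ∀ i j, |B i (Sum.inr j) - B' i (Sum.inr j)| ≤ ε := fun i j ↦ by
    simpa using abs_sub_le_of_floor_div_eq hε
      (neg_le_iff_add_nonneg.mp (abs_le.mp (hB i (Sum.inr j))).1)
      (neg_le_iff_add_nonneg.mp (abs_le.mp (hB' i (Sum.inr j))).1) ((hg i j).trans (hg' i j).symm)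
  have hinl := abs_sub_inl_le_of_isAdapted hP hPe hε.le hεs hB (hxB ▸ hx) hB' (hxB' ▸ hx') hinr
  have hμ : (Fintype.card μ : ℝ) ≤ Fintype.card (κ ⊕ μ) := by simp
  have hall : ∀ i b, |B i b - B' i b|
      ≤ (4 * n * (Fintype.card (κ ⊕ μ) + 1) ^ 2 + Fintype.card (κ ⊕ μ) + 1) * ε := fun i ↦
    Sum.forall.mpr ⟨fun a ↦ (hinl i a).trans (mul_le_mul_of_nonneg_right (by linarith) hε.le),
      fun j ↦ (hinr i j).trans
        (le_mul_of_one_le_left hε.le (by rw [le_add_iff_nonneg_left]; positivity))⟩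
  rw [dGr, hxB, hxB', cellConst, mul_assoc, mul_assoc]
  exact dPP_graphSub_graphSub_le (by positivity) hall

lemma exists_cover_setOf_dPP_lt {k m N : ℕ} (hn : n = k + m + N)
    (hP : Module.finrank ℝ P = k) (hε : 0 < ε) (hε1 : ε ≤ 1)
    (hεs : n * (((k + m : ℕ) + 1) * ε) ≤ 1 / 2) :
    ∃ (ι : Type) (_ : Fintype ι) (U : ι → Set (Grass n (k + m))),
      {x | dPP P x.1 < ε} ⊆ ⋃ i, U i ∧
      (∀ i, ediamD dGr (U i) ≤ ENNReal.ofReal (cellConst n (k + m) * ε)) ∧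
      Fintype.card ι * ε ^ (m * N)
        ≤ Fintype.card ((Fin k ⊕ Fin m) ⊕ Fin N ≃ Fin n) * 3 ^ (m * N) := by
  refine ⟨((Fin k ⊕ Fin m) ⊕ Fin N ≃ Fin n) × (Fin N → Fin m → Fin (⌊2 / ε⌋₊ + 1)),
    inferInstance, fun i ↦ nbhdCell P ε i.1 fun a j ↦ i.2 a j, fun x hx ↦ ?_, fun i ↦ ?_, ?_⟩
  · obtain ⟨e, g, hxg⟩ := exists_mem_nbhdCell (κ := Fin k) (μ := Fin m) (ν := Fin N)
      (by simpa using hP) (by simp) (by simpa using hn) hε hεs hx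
    exact Set.mem_iUnion.mpr ⟨(e, g), hxg⟩
  · exact ediamD_nbhdCell_le (by simp [hP]) (by simp) hε hεs _ _
  · have hcells : ((⌊2 / ε⌋₊ + 1 : ℕ) : ℝ) * ε ≤ 3 := by
      have hfloor := (le_div_iff₀ hε).mp (Nat.floor_le (div_nonneg zero_le_two hε.le))
      push_cast
      linarith
    calc _ = Fintype.card ((Fin k ⊕ Fin m) ⊕ Fin N ≃ Fin n)
          * (((⌊2 / ε⌋₊ + 1 : ℕ) : ℝ) * ε) ^ (m * N) := by
          simp only [Fintype.card_prod, Fintype.card_pi, Fintype.card_fin, Finset.prod_const,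
            Finset.card_univ, Nat.cast_mul, Nat.cast_pow]
          ring
      _ ≤ _ := by gcongr

lemma exists_forall_cover_setOf_dPP_lt {k m N : ℕ} (hn : n = k + m + N) {p : ℝ} (hp : 0 < p) :
    ∃ K : ℝ, 0 ≤ K ∧ ∀ (P : Submodule ℝ (Fin n → ℝ)) (ε : ℝ), Module.finrank ℝ P = k → 0 < ε →
      ε ≤ 1 → n * (((k + m : ℕ) + 1) * ε) ≤ 1 / 2 →
      ∃ (ι : Type) (_ : Fintype ι) (U : ι → Set (Grass n (k + m))),
        {x | dPP P x.1 < ε} ⊆ ⋃ i, U i ∧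
        (∀ i, ediamD dGr (U i) ≤ ENNReal.ofReal (cellConst n (k + m) * ε)) ∧
        ∑' i, ediamD dGr (U i) ^ (p + (m * N : ℕ)) ≤ ENNReal.ofReal (K * ε ^ p) := by
  set s : ℝ := p + (m * N : ℕ) with hs
  set C := cellConst n (k + m)
  have hC : 0 ≤ C := cellConst_nonneg _ _
  refine ⟨Fintype.card ((Fin k ⊕ Fin m) ⊕ Fin N ≃ Fin n) * 3 ^ (m * N) * C ^ s, by positivity,
    fun P ε hP hε hε1 hεs ↦ ?_⟩
  obtain ⟨ι, hι, U, hcover, hdiam, hcard⟩ := exists_cover_setOf_dPP_lt hn hP hε hε1 hεs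
  refine ⟨ι, hι, U, hcover, hdiam, ?_⟩
  calc ∑' i, ediamD dGr (U i) ^ s
      ≤ ∑' _i : ι, ENNReal.ofReal (C * ε) ^ s :=
        ENNReal.tsum_le_tsum fun i ↦ ENNReal.rpow_le_rpow (hdiam i) (by positivity)
    _ = ENNReal.ofReal (Fintype.card ι * (C * ε) ^ s) := by
        rw [tsum_fintype, Finset.sum_const, Finset.card_univ, nsmul_eq_mul,
          ENNReal.ofReal_rpow_of_nonneg (by positivity) (by positivity),
          ENNReal.ofReal_mul (by positivity), ENNReal.ofReal_natCast]
    _ ≤ _ := ENNReal.ofReal_le_ofReal ?_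
  calc Fintype.card ι * (C * ε) ^ s = Fintype.card ι * ε ^ (m * N) * C ^ s * ε ^ p := by
        rw [Real.mul_rpow hC hε.le, hs, Real.rpow_add hε, Real.rpow_natCast]
        ring
    _ ≤ _ := by gcongr

end Neighbourhood

/-! ### Finiteness of Hausdorff measures -/

lemma one_le_eucNorm_castVec {n : ℕ} {v : Fin n → ℤ} (hv : v ≠ 0) : 1 ≤ eucNorm (castVec v) := by
  obtain ⟨i, hi⟩ := Function.ne_iff.mp hv
  refine le_trans ?_ (abs_le_eucNorm (castVec v) i)
  rw [castVec]
  exact_mod_cast Int.one_le_abs hi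

lemma one_le_prod_eucNorm_castVec {n k : ℕ} {b : Fin k → Fin n → ℤ}
    (hb : LinearIndependent ℝ (castVec ∘ b)) : 1 ≤ ∏ i, eucNorm (castVec (b i)) :=
  Finset.prod_induction _ (1 ≤ ·) (fun _ _ ↦ one_le_mul_of_one_le_of_one_le) le_rfl fun i _ ↦
    one_le_eucNorm_castVec fun h0 ↦ hb.ne_zero i (castVec_eq_zero.mpr h0)

lemma exists_pos_mul_le_ofReal_mul_le (a b : ℝ) {c : ℝ} (hc : 0 < c) {δ : ℝ≥0∞} (hδ : 0 < δ) :
    ∃ η : ℝ, 0 < η ∧ η ≤ 1 ∧ a * η ≤ c ∧ ENNReal.ofReal (b * η) ≤ δ := by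
  have hlim : ∀ a : ℝ, Tendsto (fun η ↦ a * η) (nhdsWithin 0 (Set.Ioi 0)) (nhds 0) := fun a ↦
    (Continuous.tendsto' (by fun_prop) 0 0 (mul_zero a)).mono_left nhdsWithin_le_nhds
  have hδ' : Tendsto (fun η ↦ ENNReal.ofReal (b * η)) (nhdsWithin 0 (Set.Ioi 0)) (nhds 0) := by
    simpa using ENNReal.tendsto_ofReal (hlim b)
  obtain ⟨η, hη, hη1, hac, hbδ⟩ := (eventually_mem_nhdsWithin.and <|
    ((hlim 1).eventually_le_const one_pos).and <| ((hlim a).eventually_le_const hc).and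
      (hδ'.eventually_le_const hδ)).exists
  exact ⟨η, hη, one_mul η ▸ hη1, hac, hbδ⟩

lemma mul_rpow_neg_div_rpow_le {η h p q : ℝ} (hη0 : 0 ≤ η) (hη1 : η ≤ 1) (hh : 0 ≤ h)
    (hp : 0 < p) : (η * h ^ (-(q / p))) ^ p ≤ h ^ (-q) := by
  rw [Real.mul_rpow hη0 (Real.rpow_nonneg hh _), ← Real.rpow_mul hh, neg_mul,
    div_mul_cancel₀ q hp.ne']
  exact mul_le_of_le_one_left (Real.rpow_nonneg hh _) (Real.rpow_le_one hη0 hη1 hp.le)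

-- The tuples `b` index the covers: their sum converges exactly when `n < q`.
lemma hMeasD_ne_top_of_approx {n k m N : ℕ} (hn : n = k + m + N) {p q : ℝ} (hp : 0 < p)
    (hq : (n : ℝ) < q) {E : Set (Grass n (k + m))}
    (hE : ∀ x ∈ E, ∀ η > 0, ∃ b : Fin k → Fin n → ℤ, LinearIndependent ℝ (castVec ∘ b) ∧
      dPP (ratSpan b) x.1 < η * (∏ i, eucNorm (castVec (b i))) ^ (-(q / p))) :
    hMeasD dGr (p + (m * N : ℕ)) E ≠ ⊤ := by
  obtain ⟨K, hK, hcover⟩ := exists_forall_cover_setOf_dPP_lt hn hp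
  refine ne_top_of_le_ne_top (ENNReal.mul_ne_top (ENNReal.ofReal_ne_top (r := K))
    (tsum_prod_ne_top (tsum_ofReal_eucNorm_rpow_ne_top hq) k)) ?_
  refine hMeasD_le_of_covers (by positivity) fun δ hδ ↦ ?_
  obtain ⟨η, hη0, hη1, hηn, hηδ⟩ := exists_pos_mul_le_ofReal_mul_le (n * ((k + m : ℕ) + 1))
    (cellConst n (k + m)) one_half_pos hδ
  let I := {b : Fin k → Fin n → ℤ // LinearIndependent ℝ (castVec ∘ b)}
  let h : I → ℝ := fun b ↦ ∏ i, eucNorm (castVec (b.1 i))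
  have hh : ∀ b, 1 ≤ h b := fun b ↦ one_le_prod_eucNorm_castVec b.2
  have hq0 : 0 < q := n.cast_nonneg.trans_lt hq
  have hε0 : ∀ b, 0 < η * h b ^ (-(q / p)) := fun b ↦
    mul_pos hη0 (Real.rpow_pos_of_pos (one_pos.trans_le (hh b)) _)
  have hεη : ∀ b, η * h b ^ (-(q / p)) ≤ η := fun b ↦ mul_le_of_le_one_right hη0.le
    (Real.rpow_le_one_of_one_le_of_nonpos (hh b) (neg_nonpos.mpr (by positivity)))
  choose ι hι U hU hdiam hsum using fun b : I ↦ hcover _ _ (finrank_ratSpan b.2) (hε0 b)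
    ((hεη b).trans hη1) (le_trans (by rw [← mul_assoc]; gcongr; exact hεη b) hηn)
  refine ⟨Σ b, ι b, inferInstance, fun i ↦ U i.1 i.2, fun x hx ↦ ?_, fun i ↦ ?_, ?_⟩
  · obtain ⟨b, hb, hbx⟩ := hE x hx η hη0
    obtain ⟨c, hc⟩ := Set.mem_iUnion.mp (hU ⟨b, hb⟩ hbx)
    exact Set.mem_iUnion.mpr ⟨⟨⟨b, hb⟩, c⟩, hc⟩
  · exact (hdiam _ _).trans ((ENNReal.ofReal_le_ofReal
      (mul_le_mul_of_nonneg_left (hεη _) (cellConst_nonneg _ _))).trans hηδ)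
  rw [ENNReal.tsum_sigma', ← ENNReal.tsum_mul_left]
  refine (ENNReal.tsum_le_tsum fun b ↦ (hsum b).trans ?_).trans
    (ENNReal.tsum_comp_le_tsum_of_injective Subtype.val_injective _)
  rw [← ENNReal.ofReal_prod_of_nonneg fun i _ ↦ Real.rpow_nonneg (eucNorm_nonneg _) _,
    ← ENNReal.ofReal_mul hK, Real.finsetProd_rpow _ _ fun i _ ↦ eucNorm_nonneg _]
  exact ENNReal.ofReal_le_ofReal (mul_le_mul_of_nonneg_left
    (mul_rpow_neg_div_rpow_le hη0.le hη1 (zero_le_one.trans (hh b)) hp) hK)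

/-! ### The upper bound -/

section UpperBound

variable {ψ : ℝ → ℝ}

lemma gammaE_nonneg (hψpos : ∀ t > 0, 0 < ψ t) (hψ : AntitoneOn ψ (Set.Ioi 0)) : 0 ≤ gammaE ψ := by
  have hlim : Tendsto (fun t : ℝ ↦ ((-Real.log (ψ 1) / Real.log t : ℝ) : EReal)) atTop
      (nhds ((0 : ℝ) : EReal)) :=
    (continuous_coe_real_ereal.tendsto 0).comp
      (Real.tendsto_log_atTop.const_div_atTop (-Real.log (ψ 1)))
  rw [← EReal.coe_zero, ← hlim.liminf_eq]
  refine liminf_le_liminf ?_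
  filter_upwards [eventually_gt_atTop (1 : ℝ)] with t ht
  have ht0 : 0 < t := one_pos.trans ht
  have hlog := Real.log_pos ht
  have hle := Real.log_le_log (hψpos t ht0) (hψ (Set.mem_Ioi.mpr one_pos) ht0 ht.le)
  rw [EReal.coe_le_coe_iff]
  gcongr

lemma one_le_rpow_abs_mul_rpow_neg {t T : ℝ} (ht : 1 ≤ t) (htT : t ≤ T) (g : ℝ) :
    1 ≤ T ^ |g| * t ^ (-g) := by
  have ht0 : 0 < t := one_pos.trans_le ht
  calc 1 ≤ t ^ (|g| + -g) := Real.one_le_rpow ht (by linarith [le_abs_self g])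
    _ = t ^ |g| * t ^ (-g) := Real.rpow_add ht0 _ _
    _ ≤ T ^ |g| * t ^ (-g) := by gcongr

lemma exists_le_rpow_of_lt_gammaE (hψpos : ∀ t > 0, 0 < ψ t) (hψ : AntitoneOn ψ (Set.Ioi 0))
    {g : ℝ} (hg : g < gammaE ψ) : ∃ C > 0, ∀ t ≥ 1, ψ t ≤ C * t ^ (-g) := by
  obtain ⟨T, hT⟩ := eventually_atTop.mp
    ((eventually_lt_of_lt_liminf hg).and (eventually_gt_atTop (1 : ℝ)))
  refine ⟨max 1 (ψ 1 * T ^ |g|), lt_max_of_lt_left one_pos, fun t ht ↦ ?_⟩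
  have ht0 : 0 < t := one_pos.trans_le ht
  rcases le_or_gt T t with h | h
  · obtain ⟨hlt, ht1⟩ := hT t h
    rw [EReal.coe_lt_coe_iff, lt_div_iff₀ (Real.log_pos ht1)] at hlt
    have hle : ψ t ≤ t ^ (-g) := by
      rw [← Real.exp_log (hψpos t ht0), Real.rpow_def_of_pos ht0, Real.exp_le_exp]
      linarith
    exact hle.trans (le_mul_of_one_le_left (by positivity) (le_max_left _ _))
  · calc ψ t ≤ ψ 1 := hψ (Set.mem_Ioi.mpr one_pos) ht0 ht
      _ ≤ ψ 1 * (T ^ |g| * t ^ (-g)) :=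
          le_mul_of_one_le_right (hψpos 1 one_pos).le (one_le_rpow_abs_mul_rpow_neg ht h.le g)
      _ = ψ 1 * T ^ |g| * t ^ (-g) := (mul_assoc _ _ _).symm
      _ ≤ _ := by gcongr; exact le_max_right _ _

lemma mem_compl_Elk_iff {n k l : ℕ} {x : Grass n l} : x ∈ (Elk n k l ψ)ᶜ ↔
    ∀ C > 0, ∃ f : Fin k → Fin n → ℤ, IsPrimitive f ∧ dPP (ratSpan f) x.1 <
      C * heightB f ^ (-(n : ℝ) / (k * (n - l))) * ψ (heightB f) := by
  simp only [Elk, Set.mem_compl_iff, Set.mem_ofPred_eq]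
  push Not
  refine forall₂_congr fun C _ ↦ exists_congr fun f ↦ ?_
  exact ⟨fun ⟨hli, hsum, hlt⟩ ↦ ⟨⟨hli, hsum⟩, hlt⟩, fun ⟨hf, hlt⟩ ↦ ⟨hf.1, hf.2, hlt⟩⟩

lemma IsPrimitive.exists_linearIndependent_heightB_rpow_le {n k : ℕ} (hn : 0 < n) (hk : 0 < k)
    {f : Fin k → Fin n → ℤ} (hf : IsPrimitive f) {τ : ℝ} (hτ : 0 ≤ τ) :
    ∃ b : Fin k → Fin n → ℤ, LinearIndependent ℝ (castVec ∘ b) ∧ ratSpan b = ratSpan f ∧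
      heightB f ^ (-τ) ≤ ((n * k : ℝ) ^ k * (2 * k) ^ k) ^ τ
        * (∏ i, eucNorm (castVec (b i))) ^ (-τ) := by
  obtain ⟨b, hb, hspan, hprod⟩ := exists_reduced_basis hf.linearIndependent
  refine ⟨b, hb, hspan, ?_⟩
  have hH : 0 < heightB f := one_pos.trans_le (one_le_heightB hf.linearIndependent)
  have hle := Real.rpow_le_rpow_of_nonpos (one_pos.trans_le (one_le_prod_eucNorm_castVec hb))
    (mul_assoc _ _ (heightB f) ▸ hprod) (neg_nonpos.mpr hτ)
  rwa [Real.mul_rpow (by positivity) hH.le, Real.rpow_neg (by positivity),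
    inv_mul_le_iff₀ (by positivity)] at hle

lemma neg_div_mul_sub_eq {n k m N : ℕ} (hn : n = k + m + N) :
    -(n : ℝ) / (k * (n - (k + m : ℕ))) = -(n / (k * N)) := by
  rw [neg_div, hn]
  push_cast
  rw [add_sub_cancel_left]

lemma hMeasD_compl_Elk_ne_top {n k m N : ℕ} (hk : 1 ≤ k) (hn : n = k + m + N)
    (hψpos : ∀ t > 0, 0 < ψ t) (hψ : AntitoneOn ψ (Set.Ioi 0)) {g p : ℝ} (hg : g < gammaE ψ)
    (hp : 0 < p) (hpg : n < p * (n / (k * N) + g)) :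
    hMeasD dGr (p + (m * N : ℕ)) (Elk n k (k + m) ψ)ᶜ ≠ ⊤ := by
  obtain ⟨C₁, hC₁, hψg⟩ := exists_le_rpow_of_lt_gammaE hψpos hψ hg
  have hn0 : 0 < n := by omega
  set τ : ℝ := n / (k * N) + g with hτ
  have hτ0 : 0 < τ := pos_of_mul_pos_right (n.cast_nonneg.trans_lt hpg) hp.le
  refine hMeasD_ne_top_of_approx hn hp hpg fun x hx η hη ↦ ?_
  rw [mul_div_cancel_left₀ τ hp.ne']
  set C₂ : ℝ := ((n * k : ℝ) ^ k * (2 * k) ^ k) ^ τ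
  have hC₂0 : 0 < C₂ := by positivity
  obtain ⟨f, hf, hfx⟩ := mem_compl_Elk_iff.mp hx (η / (C₁ * C₂)) (by positivity)
  obtain ⟨b, hb, hspan, hle⟩ := hf.exists_linearIndependent_heightB_rpow_le hn0 hk hτ0.le
  refine ⟨b, hb, hspan ▸ hfx.trans_le ?_⟩
  have hH := one_le_heightB hf.linearIndependent
  set H := heightB f
  have hH0 : 0 < H := one_pos.trans_le hH
  rw [neg_div_mul_sub_eq hn]
  calc η / (C₁ * C₂) * H ^ (-(n / (k * N) : ℝ)) * ψ H
      ≤ η / (C₁ * C₂) * H ^ (-(n / (k * N) : ℝ)) * (C₁ * H ^ (-g)) := by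
        gcongr
        exact hψg H hH
    _ = η / C₂ * H ^ (-τ) := by
        rw [hτ, neg_add, Real.rpow_add hH0]
        field_simp
    _ ≤ η / C₂ * (C₂ * (∏ i, eucNorm (castVec (b i))) ^ (-τ)) := by gcongr
    _ = η * (∏ i, eucNorm (castVec (b i))) ^ (-τ) := by field_simp

end UpperBound

/-! ### Hausdorff content -/

section Content

variable {X Y Z : Type*} [PseudoMetricSpace X] [PseudoMetricSpace Y] [PseudoMetricSpace Z]

/-- The `s`-dimensional Hausdorff content of `A`: the infimum of `∑ uᵢ ^ s` over the countable
covers of `A` by sets `Uᵢ` of diameter at most `uᵢ`, where empty sets do not contribute to the sum.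
The `uᵢ` are positive, so that the exponent `s = 0` needs no convention. -/
def hausdorffContent (s : ℝ) (A : Set X) : ℝ≥0∞ :=
  ⨅ (U : ℕ → Set X) (u : ℕ → ℝ) (_ : ∀ i, 0 < u i)
    (_ : ∀ i, ∀ x ∈ U i, ∀ y ∈ U i, dist x y ≤ u i) (_ : A ⊆ ⋃ i, U i),
    ∑' i, ⨆ _ : (U i).Nonempty, ENNReal.ofReal (u i) ^ s

lemma le_hausdorffContent_iff {s : ℝ} {A : Set X} {η : ℝ≥0∞} :
    η ≤ hausdorffContent s A ↔ ∀ (U : ℕ → Set X) (u : ℕ → ℝ), (∀ i, 0 < u i) →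
      (∀ i, ∀ x ∈ U i, ∀ y ∈ U i, dist x y ≤ u i) → A ⊆ ⋃ i, U i →
      η ≤ ∑' i, ⨆ _ : (U i).Nonempty, ENNReal.ofReal (u i) ^ s := by
  simp only [hausdorffContent, le_iInf_iff]

lemma one_le_hausdorffContent_zero {A : Set X} (hA : A.Nonempty) :
    1 ≤ hausdorffContent 0 A := by
  refine le_hausdorffContent_iff.mpr fun U u _ _ hAU ↦ ?_
  obtain ⟨x, hx⟩ := hA
  obtain ⟨i, hi⟩ := Set.mem_iUnion.mp (hAU hx)
  refine le_trans ?_ (ENNReal.le_tsum i)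
  simp only [Set.nonempty_of_mem hi, ENNReal.rpow_zero, iSup_pos, le_refl]

lemma hausdorffContent_mono {s : ℝ} {A B : Set X} (h : A ⊆ B) :
    hausdorffContent s A ≤ hausdorffContent s B :=
  le_hausdorffContent_iff.mpr fun U u hu hU hB ↦
    le_hausdorffContent_iff.mp le_rfl U u hu hU (h.trans hB)

lemma exists_measurableSet_image_snd_subset [MeasurableSpace Y] [OpensMeasurableSpace Y]
    {μ : Measure Y} {t : ℝ} {c : ℝ≥0∞}
    (hμ : ∀ y r, 0 < r → μ (Metric.closedBall y r) ≤ c * ENNReal.ofReal r ^ t)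
    {U : Set (X × Y)} {u : ℝ} (hu : 0 < u) (hU : ∀ z ∈ U, ∀ w ∈ U, dist z w ≤ u) :
    ∃ V : Set Y, MeasurableSet V ∧ Prod.snd '' U ⊆ V ∧
      μ V ≤ ⨆ _ : U.Nonempty, c * ENNReal.ofReal u ^ t := by
  rcases U.eq_empty_or_nonempty with rfl | ⟨z, hz⟩
  · exact ⟨∅, .empty, by simp, by simp⟩
  · refine ⟨Metric.closedBall z.2 u, measurableSet_closedBall, ?_, ?_⟩
    · rintro _ ⟨w, hw, rfl⟩
      exact (le_max_right _ _).trans (hU w hw z hz)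
    · exact (hμ _ _ hu).trans (le_iSup_of_le ⟨z, hz⟩ le_rfl)

-- For a cover `Uᵢ` of `A`, integrate over `y` the sum of `uᵢ ^ s` over the `Uᵢ` near the fibre.
lemma mul_measure_le_mul_hausdorffContent_prod [MeasurableSpace Y] [OpensMeasurableSpace Y]
    {μ : Measure Y} {s t : ℝ} {c : ℝ≥0∞} (hc₀ : c ≠ 0) (hc : c ≠ ⊤)
    (hμ : ∀ y r, 0 < r → μ (Metric.closedBall y r) ≤ c * ENNReal.ofReal r ^ t)
    {η : ℝ≥0∞} {T : Set Y} {A : Set (X × Y)}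
    (hA : ∀ y ∈ T, η ≤ hausdorffContent s {x | (x, y) ∈ A}) :
    η * μ T ≤ hausdorffContent (s + t) A * c := by
  rw [← ENNReal.div_le_iff_le_mul (.inl hc₀) (.inl hc), le_hausdorffContent_iff]
  intro U u hu hU hcov
  rw [ENNReal.div_le_iff_le_mul (.inl hc₀) (.inl hc)]
  choose V hV hUV hμV using fun i ↦ exists_measurableSet_image_snd_subset hμ (hu i) (hU i)
  let F : Y → ℝ≥0∞ := fun y ↦ ∑' i, (V i).indicator (fun _ ↦ ENNReal.ofReal (u i) ^ s) y
  have hF : ∀ y ∈ T, η ≤ F y := fun y hy ↦ by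
    refine (le_hausdorffContent_iff.mp (hA y hy) (fun i ↦ {x | (x, y) ∈ U i}) u hu
      (fun i x hx x' hx' ↦ (le_max_left _ _).trans (hU i _ hx _ hx'))
      (fun x hx ↦ by simpa using hcov hx)).trans
        (ENNReal.tsum_le_tsum fun i ↦ iSup_le fun ⟨x, hx⟩ ↦ ?_)
    rw [Set.indicator_of_mem (hUV i ⟨(x, y), hx, rfl⟩)]
  calc η * μ T ≤ η * μ {y | η ≤ F y} := by gcongr; exact hF
    _ ≤ ∫⁻ y, F y ∂μ :=
        mul_meas_ge_le_lintegral (.tsum fun i ↦ measurable_const.indicator (hV i)) η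
    _ = ∑' i, ∫⁻ y, (V i).indicator (fun _ ↦ ENNReal.ofReal (u i) ^ s) y ∂μ :=
        lintegral_tsum fun i ↦ (measurable_const.indicator (hV i)).aemeasurable
    _ = ∑' i, ENNReal.ofReal (u i) ^ s * μ (V i) := by
        simp only [lintegral_indicator_const (hV _)]
    _ ≤ ∑' i, (⨆ _ : (U i).Nonempty, ENNReal.ofReal (u i) ^ (s + t)) * c := by
        refine ENNReal.tsum_le_tsum fun i ↦ ?_
        refine (mul_le_mul_right (hμV i) (ENNReal.ofReal (u i) ^ s)).trans ?_
        simp only [ENNReal.mul_iSup, ENNReal.iSup_mul]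
        refine iSup_mono fun _ ↦ le_of_eq ?_
        rw [ENNReal.rpow_add _ _ (by simpa using hu i) ENNReal.ofReal_ne_top]
        ring
    _ = _ := ENNReal.tsum_mul_right

end Content

section Comparison

variable {X Z : Type*} [PseudoMetricSpace Z] {d : X → X → ℝ}

lemma exists_cover_of_hMeasD_ne_top {s : ℝ} {E : Set X} (hM : hMeasD d s E ≠ ⊤) {δ : ℝ≥0∞}
    (hδ : 0 < δ) : ∃ t : ℕ → Set X, E ⊆ ⋃ i, t i ∧ (∀ i, ediamD d (t i) ≤ δ) ∧
      ∑' i, ediamD d (t i) ^ s < hMeasD d s E + 1 := by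
  have hlt : _ < hMeasD d s E + 1 := (le_iSup₂ (f := fun (δ : ℝ≥0∞) (_ : 0 < δ) ↦
    ⨅ (t : ℕ → Set X) (_ : E ⊆ ⋃ i, t i) (_ : ∀ i, ediamD d (t i) ≤ δ),
      ∑' i, ediamD d (t i) ^ s) δ hδ).trans_lt (ENNReal.lt_add_right hM one_ne_zero)
  simpa only [iInf_lt_iff, exists_prop] using hlt

lemma exists_pos_radii {s δ : ℝ} (hs : 0 < s) (hδ : 0 < δ) {t : ℕ → Set X}
    (ht : ∀ i, ediamD d (t i) ≤ ENNReal.ofReal δ) :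
    ∃ v : ℕ → ℝ, (∀ i, 0 < v i) ∧ (∀ i, v i ≤ δ) ∧ (∀ i, ∀ x ∈ t i, ∀ y ∈ t i, d x y ≤ v i) ∧
      ∑' i, ENNReal.ofReal (v i) ^ s ≤ ∑' i, ediamD d (t i) ^ s + 1 := by
  obtain ⟨ε, hε, hsum⟩ := ENNReal.exists_pos_sum_of_countable one_ne_zero ℕ
  have htop i : ediamD d (t i) ≠ ⊤ := ne_top_of_le_ne_top ENNReal.ofReal_ne_top (ht i)
  let w : ℕ → ℝ := fun i ↦ min δ ((ε i : ℝ) ^ s⁻¹)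
  have hw i : 0 < w i := lt_min hδ (Real.rpow_pos_of_pos (hε i) _)
  refine ⟨fun i ↦ max (ediamD d (t i)).toReal (w i), fun i ↦ lt_max_of_lt_right (hw i),
    fun i ↦ max_le (ENNReal.toReal_le_of_le_ofReal hδ.le (ht i)) (min_le_left _ _),
    fun i x hx y hy ↦ ?_, ?_⟩
  · exact le_max_of_le_left ((ENNReal.ofReal_le_iff_le_toReal (htop i)).mp (ofReal_le_ediamD hx hy))
  · have hterm i : ENNReal.ofReal (max (ediamD d (t i)).toReal (w i)) ^ s
        ≤ ediamD d (t i) ^ s + ε i := by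
      have hwε : ENNReal.ofReal (w i) ^ s ≤ ε i := by
        rw [ENNReal.ofReal_rpow_of_pos (hw i), ← ENNReal.ofReal_coe_nnreal]
        refine ENNReal.ofReal_le_ofReal ?_
        exact (Real.le_rpow_inv_iff_of_pos (hw i).le (ε i).2 hs).mp (min_le_right _ _)
      rw [ENNReal.ofReal_max, ENNReal.ofReal_toReal (htop i)]
      rcases max_choice (ediamD d (t i)) (ENNReal.ofReal (w i)) with h | h <;> rw [h]
      exacts [le_self_add, hwε.trans le_add_self]
    calc _ ≤ ∑' i, (ediamD d (t i) ^ s + ε i) := ENNReal.tsum_le_tsum hterm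
      _ ≤ _ := by rw [ENNReal.tsum_add]; gcongr

variable {f : Z → X} {A B : Set Z} {E : Set X} {C S s : ℝ}

lemma hausdorffContent_le_mul_hMeasD (hC : 0 < C)
    (hf : ∀ z ∈ B, ∀ w ∈ B, dist z w ≤ C * d (f z) (f w)) (hAB : A ⊆ B) (hAE : Set.MapsTo f A E)
    (hs : 0 < s) (hsS : s ≤ S) (hM : hMeasD d s E ≠ ⊤) {δ : ℝ} (hδ : 0 < δ) :
    hausdorffContent S A
      ≤ ENNReal.ofReal C ^ S * (ENNReal.ofReal δ ^ (S - s) * (hMeasD d s E + 1 + 1)) := by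
  obtain ⟨t, hcov, hmesh, hsum⟩ :=
    exists_cover_of_hMeasD_ne_top hM (ENNReal.ofReal_pos.mpr hδ)
  obtain ⟨v, hv, hvδ, hdv, hvsum⟩ := exists_pos_radii hs hδ hmesh
  have hcontent := le_hausdorffContent_iff.mp (le_refl (hausdorffContent S A))
    (fun i ↦ B ∩ f ⁻¹' t i) (fun i ↦ C * v i) (fun i ↦ mul_pos hC (hv i))
    (fun i z hz w hw ↦ (hf z hz.1 w hw.1).trans (by gcongr; exact hdv i _ hz.2 _ hw.2))
    (fun z hz ↦ by simpa [hAB hz] using hcov (hAE hz))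
  have hterm i : ENNReal.ofReal (v i) ^ S
      ≤ ENNReal.ofReal δ ^ (S - s) * ENNReal.ofReal (v i) ^ s := by
    have h₀ : 0 ≤ S - s := sub_nonneg.mpr hsS
    calc ENNReal.ofReal (v i) ^ S = ENNReal.ofReal (v i) ^ (S - s) * ENNReal.ofReal (v i) ^ s := by
          rw [← ENNReal.rpow_add_of_nonneg _ _ h₀ hs.le, sub_add_cancel]
      _ ≤ _ := by gcongr; exact hvδ i
  calc hausdorffContent S A ≤ ∑' i, ENNReal.ofReal (C * v i) ^ S :=
        hcontent.trans (ENNReal.tsum_le_tsum fun i ↦ iSup_le fun _ ↦ le_rfl)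
    _ = ENNReal.ofReal C ^ S * ∑' i, ENNReal.ofReal (v i) ^ S := by
        simp only [ENNReal.ofReal_mul hC.le, ENNReal.mul_rpow_of_nonneg _ _ (hs.le.trans hsS),
          ENNReal.tsum_mul_left]
    _ ≤ ENNReal.ofReal C ^ S * (ENNReal.ofReal δ ^ (S - s) * ∑' i, ENNReal.ofReal (v i) ^ s) := by
        rw [← ENNReal.tsum_mul_left (a := ENNReal.ofReal δ ^ (S - s))]
        exact mul_le_mul_right (ENNReal.tsum_le_tsum hterm) _
    _ ≤ _ := by gcongr; exact hvsum.trans (by gcongr)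

lemma hMeasD_eq_top_of_hausdorffContent (hC : 0 < C)
    (hf : ∀ z ∈ B, ∀ w ∈ B, dist z w ≤ C * d (f z) (f w)) (hAB : A ⊆ B) (hAE : Set.MapsTo f A E)
    (hA : hausdorffContent S A ≠ 0) (hs : 0 < s) (hsS : s < S) : hMeasD d s E = ⊤ := by
  by_contra hM
  have hlim : Tendsto (fun δ : ℝ ↦
      ENNReal.ofReal C ^ S * (ENNReal.ofReal δ ^ (S - s) * (hMeasD d s E + 1 + 1)))
      (nhdsWithin 0 (Set.Ioi 0)) (nhds 0) := by
    have hpow : Tendsto (fun δ : ℝ ↦ ENNReal.ofReal δ ^ (S - s)) (nhds 0) (nhds 0) := by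
      have hcont : Continuous fun δ : ℝ ↦ ENNReal.ofReal δ ^ (S - s) :=
        ENNReal.continuous_rpow_const.comp ENNReal.continuous_ofReal
      simpa [ENNReal.zero_rpow_of_pos (sub_pos.mpr hsS)] using hcont.tendsto 0
    have hmul := ENNReal.Tendsto.const_mul (a := ENNReal.ofReal C ^ S)
      (ENNReal.Tendsto.mul_const (b := hMeasD d s E + 1 + 1)
        (hpow.mono_left (nhdsWithin_le_nhds (s := Set.Ioi 0))) (.inr (by simp [hM])))
      (.inr (ENNReal.rpow_ne_top_of_nonneg (hs.trans hsS).le ENNReal.ofReal_ne_top))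
    simpa using hmul
  exact hA <| le_zero_iff.mp <| ge_of_tendsto hlim <| eventually_mem_nhdsWithin.mono fun δ hδ ↦
    hausdorffContent_le_mul_hMeasD hC hf hAB hAE hs hsS.le hM hδ

end Comparison

/-! ### Charts of the Grassmannian -/

section Chart

variable {n k m N : ℕ} (e : (Fin k ⊕ Fin m) ⊕ Fin N ≃ Fin n)

lemma abs_sub_le_dPP_graphSub_graphSub {α β : Type*} [Fintype α]
    (e : α ⊕ β ≃ Fin n) {B B' : β → α → ℝ} (hB : ∀ i a, |B i a| ≤ 1) (hB' : ∀ i a, |B' i a| ≤ 1)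
    (i : β) (a : α) :
    |B' i a - B i a| ≤ (Fintype.card α + 1) * (n * dPP (graphSub e B') (graphSub e B)) := by
  classical
  have hsum (B : β → α → ℝ) (i : β) : ∑ b, B i b * Pi.single (M := fun _ ↦ ℝ) a 1 b = B i a := by
    simp [Pi.single_apply]
  have hnorm : eucNorm (graphPt e B' (Pi.single a 1)) ≤ n := by
    refine (eucNorm_le_card_mul zero_le_one ((forall_sum_iff e).mpr
      ⟨fun b ↦ ?_, fun j ↦ ?_⟩)).trans (by simp)
    · rw [graphPt_inl, Pi.single_apply]; split_ifs <;> simp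
    · simpa only [graphPt_inr, hsum] using hB' j a
  have hpos : 0 < eucNorm (graphPt e B' (Pi.single a 1)) :=
    one_pos.trans_le (by simpa using abs_le_eucNorm (graphPt e B' (Pi.single a 1)) (e (.inl a)))
  have hle : |B' i a - B i a| ≤ (Fintype.card α + 1) * eucNorm (graphPt e B' (Pi.single a 1))
      * dPP (graphSub e B') (graphSub e B) := by
    rw [← div_le_iff₀' (by positivity)]
    refine le_of_forall_gt_imp_ge_of_dense fun c hc ↦ ?_
    have hc := abs_sub_le_of_dPP_graphSub_lt e (finrank_graphSub e B').le hB hc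
      (graphPt_mem e B' (Pi.single a 1)) i
    simp only [graphPt_inl, graphPt_inr, hsum] at hc
    rw [div_le_iff₀' (by positivity)]
    linarith
  rw [mul_assoc] at hle
  refine hle.trans ?_
  have := dPP_nonneg (graphSub e B') (graphSub e B)
  gcongr

/-- The chart of the Grassmannian formed by the graphs over the coordinates `e ∘ inl`, its matrix
split into the columns of `Fin k` and those of `Fin m`. -/
def chart (B₁ : Fin N → Fin k → ℝ) (B₂ : Fin N → Fin m → ℝ) : Grass n (k + m) :=
  ⟨graphSub e fun i ↦ Sum.elim (B₁ i) (B₂ i), by rw [finrank_graphSub]; simp⟩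

lemma mem_closedBall_matrix_iff {B : Fin N → Fin k → ℝ} {r : ℝ} (hr : 0 ≤ r) :
    B ∈ Metric.closedBall 0 r ↔ ∀ i a, |B i a| ≤ r := by
  simp [pi_norm_le_iff_of_nonneg hr]

lemma dist_le_mul_dGr_chart {z w : (Fin N → Fin k → ℝ) × (Fin N → Fin m → ℝ)}
    (hz : z ∈ Metric.closedBall 0 1 ×ˢ Metric.closedBall 0 1)
    (hw : w ∈ Metric.closedBall 0 1 ×ˢ Metric.closedBall 0 1) :
    dist z w ≤ ((k + m + 1) * n : ℝ) * dGr (chart e z.1 z.2) (chart e w.1 w.2) := by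
  have hbd {z : (Fin N → Fin k → ℝ) × (Fin N → Fin m → ℝ)}
      (hz : z ∈ Metric.closedBall 0 1 ×ˢ Metric.closedBall 0 1) (i : Fin N) (a : Fin k ⊕ Fin m) :
      |Sum.elim (z.1 i) (z.2 i) a| ≤ 1 := by
    rw [Set.mem_prod, mem_closedBall_matrix_iff zero_le_one,
      mem_closedBall_matrix_iff zero_le_one] at hz
    rcases a with a | a
    exacts [hz.1 i a, hz.2 i a]
  have key := abs_sub_le_dPP_graphSub_graphSub e (hbd hw) (hbd hz)
  simp only [Fintype.card_sum, Fintype.card_fin, Nat.cast_add, ← mul_assoc] at key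
  have hd : 0 ≤ ((k + m + 1) * n : ℝ) * dGr (chart e z.1 z.2) (chart e w.1 w.2) :=
    mul_nonneg (by positivity) (dPP_nonneg _ _)
  simp only [Prod.dist_eq, max_le_iff, dist_pi_le_iff hd, Real.dist_eq]
  exact ⟨fun i a ↦ key i (.inl a), fun i a ↦ key i (.inr a)⟩

lemma volume_closedBall_matrix (x : Fin N → Fin m → ℝ) {r : ℝ} (hr : 0 < r) :
    volume (Metric.closedBall x r) = 2 ^ (m * N) * ENNReal.ofReal r ^ ((m * N : ℕ) : ℝ) := by
  rw [volume_pi_closedBall _ hr.le]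
  simp only [Real.volume_pi_closedBall _ hr.le, Finset.prod_const, Finset.card_univ,
    Fintype.card_fin, ENNReal.rpow_natCast]
  rw [ENNReal.ofReal_pow (by positivity), ← pow_mul, ENNReal.ofReal_mul zero_le_two, mul_pow,
    ENNReal.ofReal_ofNat]

lemma hMeasD_eq_top_of_fibres {s s' : ℝ} {η : ℝ≥0∞} (hη : η ≠ 0) {T : Set (Fin N → Fin m → ℝ)}
    (hn : 0 < n) (hT : T ⊆ Metric.closedBall 0 1) (hT₀ : volume T ≠ 0) {E : Set (Grass n (k + m))}
    (hE : ∀ y ∈ T, η ≤ hausdorffContent s {x | x ∈ Metric.closedBall 0 1 ∧ chart e x y ∈ E})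
    (hs' : 0 < s') (hs's : s' < s + (m * N : ℕ)) : hMeasD dGr s' E = ⊤ := by
  let A : Set ((Fin N → Fin k → ℝ) × (Fin N → Fin m → ℝ)) :=
    {z | z ∈ Metric.closedBall 0 1 ×ˢ Metric.closedBall 0 1 ∧ chart e z.1 z.2 ∈ E}
  have hfib : ∀ y ∈ T, η ≤ hausdorffContent s {x | (x, y) ∈ A} := fun y hy ↦
    (hE y hy).trans (hausdorffContent_mono fun x hx ↦ ⟨⟨hx.1, hT hy⟩, hx.2⟩)
  have hA : hausdorffContent (s + (m * N : ℕ)) A ≠ 0 := fun h₀ ↦ by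
    have hle := mul_measure_le_mul_hausdorffContent_prod (μ := volume) (c := 2 ^ (m * N))
      (by simp) (by simp) (fun y r hr ↦ (volume_closedBall_matrix y hr).le) hfib
    rw [h₀, zero_mul, nonpos_iff_eq_zero, mul_eq_zero] at hle
    exact hle.elim hη hT₀
  exact hMeasD_eq_top_of_hausdorffContent (d := dGr) (A := A)
    (C := (k + m + 1) * n) (f := fun z ↦ chart e z.1 z.2) (by positivity)
    (fun z hz w hw ↦ dist_le_mul_dGr_chart e hz hw) (fun z hz ↦ hz.1) (fun z hz ↦ hz.2) hA hs' hs's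

end Chart

/-! ### Limsup sets of balls -/

section Limsup

variable {X : Type*} {s d c : ℝ} {U : ℕ → Set X} {u : ℕ → ℝ}

/-- The total weight `∑ uᵢ ^ s` of the members of a cover `U` that meet `B`. -/
def coverWeight (s : ℝ) (U : ℕ → Set X) (u : ℕ → ℝ) (B : Set X) : ℝ≥0∞ :=
  ∑' i, ⨆ _ : (U i ∩ B).Nonempty, ENNReal.ofReal (u i) ^ s

lemma le_of_coverWeight_le {B : Set X} {η r : ℝ} (hs : 0 < s) (hr : 0 < r) (hη : η ≤ 1)
    (hw : coverWeight s U u B ≤ ENNReal.ofReal (η * r ^ s)) {i : ℕ} (hu : 0 < u i)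
    (hi : (U i ∩ B).Nonempty) : u i ≤ r := by
  have hle : ENNReal.ofReal (u i) ^ s ≤ ENNReal.ofReal (r ^ s) :=
    ((le_iSup_of_le hi le_rfl).trans (ENNReal.le_tsum i)).trans <| hw.trans <|
      ENNReal.ofReal_le_ofReal (mul_le_of_le_one_left (by positivity) hη)
  rw [ENNReal.ofReal_rpow_of_pos hu, ENNReal.ofReal_le_ofReal_iff (by positivity)] at hle
  exact (Real.rpow_le_rpow_iff hu.le hr.le hs).mp hle

/-- The constant for which, in dimension `d`, a ball `B` of radius `r` with
`coverWeight s U u B ≤ nestConst d * r ^ s` contains smaller balls with the same property. -/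
def nestConst (d : ℝ) : ℝ := 1 / (8 * 6 ^ d)

lemma nestConst_pos (d : ℝ) : 0 < nestConst d := by unfold nestConst; positivity

lemma nestConst_le_one (hd : 0 ≤ d) : nestConst d ≤ 1 := by
  unfold nestConst
  rw [div_le_one (by positivity)]
  linarith [Real.one_le_rpow (by norm_num : (1 : ℝ) ≤ 6) hd]

lemma min_mul_rpow_le {v ρ r r' η : ℝ} (hs : 0 < s) (hsd : s ≤ d) (hv : 0 < v) (hvr : v ≤ r)
    (hρ : 0 < ρ) (hr' : 0 < r') (hη : 0 < η) :
    min 1 (v ^ s / (η * r' ^ s)) * (v + 2 * ρ) ^ d ≤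
      v ^ s * (3 ^ d * r ^ (d - s) + (3 * ρ) ^ d / (η * r' ^ s)) := by
  have hr : 0 < r := hv.trans_le hvr
  have hd : 0 ≤ d := hs.le.trans hsd
  rw [mul_add]
  rcases le_total ρ v with h | h
  · calc min 1 (v ^ s / (η * r' ^ s)) * (v + 2 * ρ) ^ d ≤ 1 * (3 * v) ^ d := by
          gcongr
          exacts [min_le_left _ _, by linarith]
      _ = v ^ s * (3 ^ d * v ^ (d - s)) := by
          rw [Real.mul_rpow (by norm_num) hv.le, Real.rpow_sub hv]
          field_simp
      _ ≤ v ^ s * (3 ^ d * r ^ (d - s)) := by gcongr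
      _ ≤ _ := le_add_of_nonneg_right (by positivity)
  · calc min 1 (v ^ s / (η * r' ^ s)) * (v + 2 * ρ) ^ d
        ≤ v ^ s / (η * r' ^ s) * (3 * ρ) ^ d := by
          gcongr
          exacts [min_le_right _ _, by linarith]
      _ = v ^ s * ((3 * ρ) ^ d / (η * r' ^ s)) := by ring
      _ ≤ _ := le_add_of_nonneg_left (by positivity)

lemma nestConst_mul_rpow_mul_le {ρ r r' : ℝ} (hρ : 0 < ρ) (hr : 0 < r) (hr' : 0 < r')
    (hdec : 8 * (6 * ρ) ^ d * r ^ s ≤ r' ^ s * r ^ d) :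
    nestConst d * r ^ s * (3 ^ d * r ^ (d - s) + (3 * ρ) ^ d / (nestConst d * r' ^ s))
      ≤ (r / 2) ^ d / 4 := by
  have h6 : (6 : ℝ) ^ d = 3 ^ d * 2 ^ d := by
    rw [← Real.mul_rpow (by norm_num) (by norm_num)]; norm_num
  have hρr : r ^ s * (3 * ρ) ^ d / r' ^ s ≤ (r / 2) ^ d / 8 := by
    rw [Real.mul_rpow (by norm_num) hρ.le, h6] at hdec
    rw [Real.mul_rpow (by norm_num) hρ.le, Real.div_rpow hr.le (by norm_num),
      div_div, div_le_div_iff₀ (by positivity) (by positivity)]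
    linarith
  calc _ = r ^ s * r ^ (d - s) * (nestConst d * 3 ^ d) + r ^ s * (3 * ρ) ^ d / r' ^ s := by
        have := nestConst_pos d
        field_simp
    _ = (r / 2) ^ d / 8 + r ^ s * (3 * ρ) ^ d / r' ^ s := by
        rw [← Real.rpow_add hr, add_sub_cancel, nestConst, h6, Real.div_rpow hr.le (by norm_num)]
        field_simp
    _ ≤ _ := by linarith

lemma exists_mem_notMem_lt_one [MeasurableSpace X] {μ : Measure X} {F : X → ℝ≥0∞}
    (hF : Measurable F) {A Bad : Set X} (h : μ Bad + ∫⁻ x, F x ∂μ < μ A) :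
    ∃ x ∈ A, x ∉ Bad ∧ F x < 1 := by
  by_contra! hcon
  refine h.not_ge ?_
  calc μ A ≤ μ (Bad ∪ {x | 1 ≤ F x}) := measure_mono fun x hx ↦ or_iff_not_imp_left.mpr (hcon x hx)
    _ ≤ μ Bad + μ {x | 1 ≤ F x} := measure_union_le _ _
    _ ≤ μ Bad + ∫⁻ x, F x ∂μ := by
        gcongr
        simpa using mul_meas_ge_le_lintegral (μ := μ) hF 1

lemma coverWeight_le_ofReal {M : ℝ} (hM : 0 < M) (hu : ∀ i, 0 < u i) {B : Set X} {V : ℕ → Set X}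
    {x : X} (hV : ∀ i, (U i ∩ B).Nonempty → x ∈ V i)
    (hx : ∑' i, (V i).indicator (fun _ ↦ ENNReal.ofReal (min 1 (u i ^ s / M))) x < 1) :
    coverWeight s U u B ≤ ENNReal.ofReal M := by
  set w : ℕ → X → ℝ≥0∞ := fun i ↦ (V i).indicator fun _ ↦ ENNReal.ofReal (min 1 (u i ^ s / M))
  have hterm i : (⨆ _ : (U i ∩ B).Nonempty, ENNReal.ofReal (u i) ^ s)
      ≤ w i x * ENNReal.ofReal M := by
    refine iSup_le fun hi ↦ ?_
    have hwi : w i x = ENNReal.ofReal (min 1 (u i ^ s / M)) := Set.indicator_of_mem (hV i hi) _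
    have hlt : min 1 (u i ^ s / M) < 1 := by
      rw [← ENNReal.ofReal_lt_ofReal_iff one_pos, ENNReal.ofReal_one, ← hwi]
      exact (ENNReal.le_tsum i).trans_lt hx
    have hmin : min 1 (u i ^ s / M) = u i ^ s / M :=
      min_eq_right ((min_lt_iff.mp hlt).resolve_left (lt_irrefl _)).le
    rw [hwi, hmin, ← ENNReal.ofReal_mul (by have := hu i; positivity), div_mul_cancel₀ _ hM.ne',
      ENNReal.ofReal_rpow_of_pos (hu i)]
  calc coverWeight s U u B ≤ ∑' i, w i x * ENNReal.ofReal M := ENNReal.tsum_le_tsum hterm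
    _ = (∑' i, w i x) * ENNReal.ofReal M := ENNReal.tsum_mul_right
    _ ≤ ENNReal.ofReal M := mul_le_of_le_one_left' hx.le

lemma tsum_min_mul_le (hc : 0 < c) (hs : 0 < s) (hsd : s ≤ d) (hu : ∀ i, 0 < u i) {r r' ρ : ℝ}
    (hρ : 0 < ρ) (hr : 0 < r) (hr' : 0 < r') (hdec : 8 * (6 * ρ) ^ d * r ^ s ≤ r' ^ s * r ^ d)
    {B : Set X} (hw : coverWeight s U u B ≤ ENNReal.ofReal (nestConst d * r ^ s)) {a : ℕ → ℝ≥0∞}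
    (ha : ∀ i, a i ≤ ⨆ _ : (U i ∩ B).Nonempty, ENNReal.ofReal (c * (u i + 2 * ρ) ^ d)) :
    ∑' i, ENNReal.ofReal (min 1 (u i ^ s / (nestConst d * r' ^ s))) * a i
      ≤ ENNReal.ofReal (c * (r / 2) ^ d / 4) := by
  have hη := nestConst_pos d
  set K : ℝ := 3 ^ d * r ^ (d - s) + (3 * ρ) ^ d / (nestConst d * r' ^ s)
  have hterm i : ENNReal.ofReal (min 1 (u i ^ s / (nestConst d * r' ^ s))) * a i
      ≤ (⨆ _ : (U i ∩ B).Nonempty, ENNReal.ofReal (u i) ^ s) * ENNReal.ofReal (c * K) := by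
    have hui := hu i
    refine (mul_le_mul_right (ha i) _).trans ?_
    simp only [ENNReal.mul_iSup, ENNReal.iSup_mul]
    refine iSup_mono fun hi ↦ ?_
    rw [ENNReal.ofReal_rpow_of_pos hui, ← ENNReal.ofReal_mul (by positivity),
      ← ENNReal.ofReal_mul (by positivity), mul_left_comm, mul_left_comm _ c]
    have hur := le_of_coverWeight_le hs hr (nestConst_le_one (hs.le.trans hsd)) hw hui hi
    exact ENNReal.ofReal_le_ofReal <| mul_le_mul_of_nonneg_left
      (min_mul_rpow_le hs hsd hui hur hρ hr' hη) hc.le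
  calc _ ≤ ∑' i, (⨆ _ : (U i ∩ B).Nonempty, ENNReal.ofReal (u i) ^ s) * ENNReal.ofReal (c * K) :=
        ENNReal.tsum_le_tsum hterm
    _ = coverWeight s U u B * ENNReal.ofReal (c * K) := ENNReal.tsum_mul_right
    _ ≤ ENNReal.ofReal (nestConst d * r ^ s) * ENNReal.ofReal (c * K) := by gcongr
    _ = ENNReal.ofReal (c * (nestConst d * r ^ s * K)) := by
        rw [← ENNReal.ofReal_mul (by positivity), mul_left_comm]
    _ ≤ _ := by
        rw [mul_div_assoc]
        gcongr
        exact nestConst_mul_rpow_mul_le hρ hr hr' hdec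

variable [PseudoMetricSpace X]

lemma exists_mem_limsup_of_forall_exists_subball [ProperSpace X] {P : X → ℝ → Prop}
    (hP : ∀ b t, P b t → 0 < t) {S : ℕ → Set X} {r : ℕ → ℝ}
    (hstep : ∀ b t, P b t → ∀ j₀, ∃ j ≥ j₀, ∃ a ∈ S j,
      Metric.closedBall a (r j) ⊆ Metric.closedBall b t ∧ r j ≤ t / 2 ∧ P a (r j))
    {b₀ : X} {t₀ : ℝ} (h₀ : P b₀ t₀) :
    ∃ x ∈ Metric.closedBall b₀ t₀, (∀ j₀, ∃ j ≥ j₀, ∃ a ∈ S j, dist x a ≤ r j) ∧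
      ∀ ε > 0, ∃ b t, P b t ∧ t ≤ ε ∧ x ∈ Metric.closedBall b t := by
  choose! idx hidx ctr hctr hsub hhalf hgood using hstep
  let Q : ℕ → X × ℝ := fun i ↦
    Nat.rec (b₀, t₀) (fun i q ↦ (ctr q.1 q.2 i, r (idx q.1 q.2 i))) i
  have hQ i : P (Q i).1 (Q i).2 := by
    induction i with
    | zero => exact h₀
    | succ i ih => exact hgood _ _ ih i
  have hrad i : (Q i).2 ≤ t₀ * (1 / 2) ^ i := by
    induction i with
    | zero => simp [Q]
    | succ i ih =>
      have := hhalf _ _ (hQ i) i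
      change r (idx (Q i).1 (Q i).2 i) ≤ _
      rw [pow_succ]
      linarith
  obtain ⟨x, hx⟩ := IsCompact.nonempty_iInter_of_sequence_nonempty_isCompact_isClosed
    (fun i ↦ Metric.closedBall (Q i).1 (Q i).2) (fun i ↦ hsub _ _ (hQ i) i)
    (fun i ↦ Metric.nonempty_closedBall.mpr (hP _ _ (hQ i)).le)
    (isCompact_closedBall _ _) (fun i ↦ Metric.isClosed_closedBall)
  rw [Set.mem_iInter] at hx
  refine ⟨x, hx 0, fun j₀ ↦ ⟨_, hidx _ _ (hQ j₀) j₀, _, hctr _ _ (hQ j₀) j₀, hx (j₀ + 1)⟩,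
    fun ε hε ↦ ?_⟩
  have hlim : Tendsto (fun i : ℕ ↦ t₀ * (1 / 2 : ℝ) ^ i) atTop (nhds 0) := by
    simpa using (tendsto_pow_atTop_nhds_zero_of_lt_one (by norm_num)
      (by norm_num : (1 / 2 : ℝ) < 1)).const_mul t₀
  obtain ⟨i, hi⟩ := (hlim.eventually_le_const hε).exists
  exact ⟨_, _, hQ i, (hrad i).trans hi, hx i⟩

variable [MeasurableSpace X] [OpensMeasurableSpace X] {μ : Measure X}
  (hμ : ∀ x r, 0 < r → μ (Metric.closedBall x r) = ENNReal.ofReal (c * r ^ d))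

include hμ in
lemma exists_measurableSet_thickening_subset {A B : Set X} {v ρ : ℝ} (hv : 0 < v) (hρ : 0 < ρ)
    (hA : ∀ x ∈ A, ∀ y ∈ A, dist x y ≤ v) :
    ∃ V, MeasurableSet V ∧ (∀ x, ∀ z ∈ A ∩ B, dist x z ≤ 2 * ρ → x ∈ V) ∧
      μ V ≤ ⨆ _ : (A ∩ B).Nonempty, ENNReal.ofReal (c * (v + 2 * ρ) ^ d) := by
  rcases (A ∩ B).eq_empty_or_nonempty with h | ⟨y, hy⟩
  · exact ⟨∅, .empty, by simp [h], by simp⟩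
  · refine ⟨Metric.closedBall y (v + 2 * ρ), measurableSet_closedBall, fun x z hz hxz ↦ ?_,
      (hμ _ _ (by positivity)).le.trans (le_iSup_of_le ⟨y, hy⟩ le_rfl)⟩
    rw [Metric.mem_closedBall]
    linarith [dist_triangle x z y, hA z hz.1 y hy.1]

include hμ in
-- Integrate over `x` the capped weights of the members of the cover near `x`: a point where the
-- integral is less than `1` is the centre of a ball that no heavy member meets.
lemma exists_coverWeight_le (hc : 0 < c) (hs : 0 < s) (hsd : s ≤ d) (hu : ∀ i, 0 < u i)
    (hU : ∀ i, ∀ x ∈ U i, ∀ y ∈ U i, dist x y ≤ u i) {b : X} {r r' ρ : ℝ} (hr : 0 < r)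
    (hr' : 0 < r') (hr'ρ : r' ≤ ρ) (hdec : 8 * (6 * ρ) ^ d * r ^ s ≤ r' ^ s * r ^ d)
    {Bad : Set X} (hBad : μ Bad ≤ ENNReal.ofReal (c * (r / 2) ^ d / 2))
    (hw : coverWeight s U u (Metric.closedBall b r) ≤ ENNReal.ofReal (nestConst d * r ^ s)) :
    ∃ x ∈ Metric.closedBall b (r / 2), x ∉ Bad ∧ ∀ a, dist x a ≤ ρ →
      Metric.closedBall a r' ⊆ Metric.closedBall b r →
      coverWeight s U u (Metric.closedBall a r') ≤ ENNReal.ofReal (nestConst d * r' ^ s) := by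
  have hρ : 0 < ρ := hr'.trans_le hr'ρ
  set η := nestConst d
  have hη₀ : 0 < η := nestConst_pos d
  choose V hV hmem hμV using fun i ↦
    exists_measurableSet_thickening_subset hμ (B := Metric.closedBall b r) (hu i) hρ (hU i)
  let F : X → ℝ≥0∞ := fun x ↦
    ∑' i, (V i).indicator (fun _ ↦ ENNReal.ofReal (min 1 (u i ^ s / (η * r' ^ s)))) x
  have hF : Measurable F := .tsum fun i ↦ measurable_const.indicator (hV i)
  have hFint : ∫⁻ x, F x ∂μ ≤ ENNReal.ofReal (c * (r / 2) ^ d / 4) := by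
    rw [lintegral_tsum fun i ↦ (measurable_const.indicator (hV i)).aemeasurable]
    simp only [lintegral_indicator_const (hV _)]
    exact tsum_min_mul_le hc hs hsd hu hρ hr hr' hdec hw hμV
  obtain ⟨x, hxb, hxBad, hxF⟩ := exists_mem_notMem_lt_one (A := Metric.closedBall b (r / 2)) hF <|
    calc μ Bad + ∫⁻ x, F x ∂μ
        ≤ ENNReal.ofReal (c * (r / 2) ^ d / 2) + ENNReal.ofReal (c * (r / 2) ^ d / 4) := by gcongr
      _ = ENNReal.ofReal (c * (r / 2) ^ d / 2 + c * (r / 2) ^ d / 4) :=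
          (ENNReal.ofReal_add (by positivity) (by positivity)).symm
      _ < ENNReal.ofReal (c * (r / 2) ^ d) := by
          have : 0 < c * (r / 2) ^ d := by positivity
          exact (ENNReal.ofReal_lt_ofReal_iff this).mpr (by linarith)
      _ = μ (Metric.closedBall b (r / 2)) := (hμ b _ (by positivity)).symm
  refine ⟨x, hxb, hxBad, fun a hxa hsub ↦ coverWeight_le_ofReal (by positivity) hu
    (fun i ⟨z, hzU, hza⟩ ↦ hmem i x z ⟨hzU, hsub hza⟩ ?_) hxF⟩
  rw [Metric.mem_closedBall] at hza
  linarith [dist_triangle_right x z a]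

include hμ in
lemma exists_subball (hc : 0 < c) (hs : 0 < s) (hsd : s ≤ d) (hu : ∀ i, 0 < u i)
    (hU : ∀ i, ∀ x ∈ U i, ∀ y ∈ U i, dist x y ≤ u i) {b : X} {r r' ρ : ℝ}
    (hr' : 0 < r') (hr'ρ : r' ≤ ρ) (hρr : 4 * ρ ≤ r)
    (hdec : 8 * (6 * ρ) ^ d * r ^ s ≤ r' ^ s * r ^ d)
    {Bad : Set X} (hBad : μ Bad ≤ ENNReal.ofReal (c * (r / 2) ^ d / 2))
    {S : Set X} (hS : ∀ x ∈ Metric.closedBall b (r / 2), x ∉ Bad → ∃ a ∈ S, dist x a ≤ ρ)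
    (hw : coverWeight s U u (Metric.closedBall b r) ≤ ENNReal.ofReal (nestConst d * r ^ s)) :
    ∃ a ∈ S, Metric.closedBall a r' ⊆ Metric.closedBall b r ∧
      coverWeight s U u (Metric.closedBall a r') ≤ ENNReal.ofReal (nestConst d * r' ^ s) := by
  obtain ⟨x, hxb, hxBad, hx⟩ :=
    exists_coverWeight_le hμ hc hs hsd hu hU (by linarith) hr' hr'ρ hdec hBad hw
  obtain ⟨a, haS, hxa⟩ := hS x hxb hxBad
  have hsub : Metric.closedBall a r' ⊆ Metric.closedBall b r := by
    refine Metric.closedBall_subset_closedBall' ?_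
    rw [Metric.mem_closedBall] at hxb
    linarith [dist_triangle_left a b x]
  exact ⟨a, haS, hsub, hx a hxa hsub⟩

include hμ in
lemma le_hausdorffContent_limsup [ProperSpace X] (hc : 0 < c) (hs : 0 < s) (hsd : s ≤ d)
    {r ρ : ℕ → ℝ} (hr : ∀ j, 0 < r j) (hrρ : ∀ j, r j ≤ ρ j) {S : ℕ → Set X} {x₀ : X} {R : ℝ}
    (hR : 0 < R)
    (H : ∀ b t, 0 < t → Metric.closedBall b t ⊆ Metric.closedBall x₀ R → ∀ j₀, ∃ j ≥ j₀,
      4 * ρ j ≤ t ∧ 8 * (6 * ρ j) ^ d * t ^ s ≤ r j ^ s * t ^ d ∧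
      ∃ Bad : Set X, μ Bad ≤ ENNReal.ofReal (c * (t / 2) ^ d / 2) ∧
        ∀ x ∈ Metric.closedBall b (t / 2), x ∉ Bad → ∃ a ∈ S j, dist x a ≤ ρ j) :
    ENNReal.ofReal (nestConst d * R ^ s) ≤ hausdorffContent s
      {x | x ∈ Metric.closedBall x₀ R ∧ ∀ j₀, ∃ j ≥ j₀, ∃ a ∈ S j, dist x a ≤ r j} := by
  rw [le_hausdorffContent_iff]
  intro U u hu hU hcov
  by_contra! hlt
  let P : X → ℝ → Prop := fun b t ↦ 0 < t ∧ Metric.closedBall b t ⊆ Metric.closedBall x₀ R ∧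
    coverWeight s U u (Metric.closedBall b t) ≤ ENNReal.ofReal (nestConst d * t ^ s)
  have hstep : ∀ b t, P b t → ∀ j₀, ∃ j ≥ j₀, ∃ a ∈ S j,
      Metric.closedBall a (r j) ⊆ Metric.closedBall b t ∧ r j ≤ t / 2 ∧ P a (r j) := by
    rintro b t ⟨ht, hsub, hw⟩ j₀
    obtain ⟨j, hj, h4, hdec, Bad, hBad, hnear⟩ := H b t ht hsub j₀
    obtain ⟨a, haS, hab, hwa⟩ :=
      exists_subball hμ hc hs hsd hu hU (hr j) (hrρ j) h4 hdec hBad hnear hw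
    exact ⟨j, hj, a, haS, hab, by linarith [hrρ j, hr j], hr j, hab.trans hsub, hwa⟩
  have hstart : P x₀ R := by
    refine ⟨hR, le_rfl, le_trans ?_ hlt.le⟩
    exact ENNReal.tsum_le_tsum fun i ↦ iSup_le fun hi ↦ le_iSup_of_le hi.left le_rfl
  obtain ⟨x, hx, hlimsup, hsmall⟩ :=
    exists_mem_limsup_of_forall_exists_subball (fun _ _ h ↦ h.1) hstep hstart
  obtain ⟨i, hi⟩ := Set.mem_iUnion.mp (hcov ⟨hx, hlimsup⟩)
  obtain ⟨b, t, ⟨ht, -, hw⟩, htu, hxb⟩ := hsmall (u i / 2) (half_pos (hu i))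
  have := le_of_coverWeight_le hs ht (nestConst_le_one (hs.le.trans hsd)) hw (hu i) ⟨x, hi, hxb⟩
  linarith [hu i]

end Limsup

/-! ### Matrices with nearly integral values at short integer vectors -/

lemma card_Icc_ceil_floor_le {a b : ℝ} (h : a ≤ b) :
    ((Finset.Icc ⌈a⌉ ⌊b⌋).card : ℝ) ≤ b - a + 1 := by
  have hcard : ((Finset.Icc ⌈a⌉ ⌊b⌋).card : ℝ) = (max (⌊b⌋ + 1 - ⌈a⌉) 0 : ℤ) := by
    rw [Int.card_Icc, ← Int.toNat_eq_max, Int.cast_natCast]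
  rw [hcard, Int.cast_max]
  push_cast
  refine max_le ?_ (by linarith)
  linarith [Int.floor_le b, Int.le_ceil a]

lemma volume_setOf_near_int_le {y b c r η : ℝ} (hy : y ≠ 0) (hr : 0 ≤ r) (hη₀ : 0 ≤ η)
    (hη : η ≤ 1 / 2) :
    volume {t : ℝ | |t - b| ≤ r ∧ ∃ z : ℤ, |t * y + c - z| ≤ η} ≤
      ENNReal.ofReal (2 * η / |y| * (2 * r * |y| + 2)) := by
  have hy₀ : 0 < |y| := abs_pos.mpr hy
  set A := b * y + c with hA
  set L := r * |y| + η with hL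
  have hsub : {t : ℝ | |t - b| ≤ r ∧ ∃ z : ℤ, |t * y + c - z| ≤ η} ⊆
      ⋃ z ∈ Finset.Icc ⌈A - L⌉ ⌊A + L⌋, Metric.closedBall (((z : ℝ) - c) / y) (η / |y|) := by
    rintro t ⟨ht, z, hz⟩
    have hzA : |(z : ℝ) - A| ≤ L :=
      calc |(z : ℝ) - A| = |(t - b) * y - (t * y + c - z)| := by congr 1; rw [hA]; ring
        _ ≤ |(t - b) * y| + |t * y + c - z| := abs_sub _ _
        _ ≤ L := by rw [abs_mul, hL]; gcongr
    rw [abs_le] at hzA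
    refine Set.mem_biUnion (x := z) ?_ ?_
    · rw [Finset.mem_coe, Finset.mem_Icc]
      exact ⟨Int.ceil_le.mpr (by linarith [hzA.1]), Int.le_floor.mpr (by linarith [hzA.2])⟩
    · have : (t - ((z : ℝ) - c) / y) * y = t * y + c - z := by field_simp; ring
      rwa [Metric.mem_closedBall, Real.dist_eq, le_div_iff₀ hy₀, ← abs_mul, this]
  refine (measure_mono hsub).trans ((measure_biUnion_finset_le _ _).trans ?_)
  simp only [Real.volume_closedBall, Finset.sum_const, nsmul_eq_mul]
  rw [← ENNReal.ofReal_natCast, ← ENNReal.ofReal_mul (by positivity)]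
  refine ENNReal.ofReal_le_ofReal ?_
  have hL₀ : 0 ≤ L := by positivity
  calc ((Finset.Icc ⌈A - L⌉ ⌊A + L⌋).card : ℝ) * (2 * (η / |y|))
      ≤ (2 * r * |y| + 2) * (2 * (η / |y|)) := by
        gcongr
        linarith [card_Icc_ceil_floor_le (show A - L ≤ A + L by linarith)]
    _ = _ := by ring

section NearInteger

variable {N k : ℕ} {r η : ℝ}

/-- The vectors of the cube of centre `b` and radius `r` at which the affine form `x ↦ x ⬝ y + σ`
is within `η` of an integer. -/
def nearIntRow (b : Fin k → ℝ) (r η σ : ℝ) (y : Fin k → ℝ) : Set (Fin k → ℝ) :=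
  {x | x ∈ Metric.closedBall b r ∧ ∃ z : ℤ, |∑ a, x a * y a + σ - z| ≤ η}

lemma measurableSet_nearIntRow (b : Fin k → ℝ) (r η σ : ℝ) (y : Fin k → ℝ) :
    MeasurableSet (nearIntRow b r η σ y) := by
  have h : nearIntRow b r η σ y = Metric.closedBall b r ∩
      ⋃ z : ℤ, {x | |∑ a, x a * y a + σ - z| ≤ η} := by
    ext x; simp [nearIntRow]
  rw [h]
  exact measurableSet_closedBall.inter
    (.iUnion fun z ↦ measurableSet_le (by fun_prop) measurable_const)

lemma volume_insertNth_preimage_nearIntRow_le {b : Fin (k + 1) → ℝ} {σ : ℝ} {y : Fin (k + 1) → ℝ}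
    {a : Fin (k + 1)} (hy : y a ≠ 0) (hr : 0 ≤ r) (hη₀ : 0 ≤ η) (hη : η ≤ 1 / 2) (w : Fin k → ℝ) :
    volume {t : ℝ | a.insertNth t w ∈ nearIntRow b r η σ y} ≤
      (Metric.closedBall (fun i ↦ b (a.succAbove i)) r).indicator
        (fun _ ↦ ENNReal.ofReal (2 * η / |y a| * (2 * r * |y a| + 2))) w := by
  have hball (t : ℝ) : (a.insertNth t w : Fin (k + 1) → ℝ) ∈ Metric.closedBall b r ↔
      |t - b a| ≤ r ∧ w ∈ Metric.closedBall (fun i ↦ b (a.succAbove i)) r := by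
    simp [dist_pi_le_iff hr, Fin.forall_iff_succAbove a, Real.dist_eq]
  by_cases hw : w ∈ Metric.closedBall (fun i ↦ b (a.succAbove i)) r
  · rw [Set.indicator_of_mem hw]
    refine (measure_mono ?_).trans (volume_setOf_near_int_le (b := b a)
      (c := ∑ i, w i * y (a.succAbove i) + σ) hy hr hη₀ hη)
    rintro t ⟨ht, z, hz⟩
    refine ⟨((hball t).mp ht).1, z, ?_⟩
    simpa [Fin.sum_univ_succAbove _ a, add_assoc] using hz
  · have hempty : {t : ℝ | a.insertNth t w ∈ nearIntRow b r η σ y} = ∅ :=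
      Set.eq_empty_of_forall_notMem fun t ht ↦ hw ((hball t).mp ht.1).2
    rw [hempty, measure_empty]
    exact zero_le

lemma volume_nearIntRow_le (b : Fin k → ℝ) {σ : ℝ} {y : Fin k → ℝ} (a : Fin k)
    (hy : y a ≠ 0) (hr : 0 < r) (hη₀ : 0 ≤ η) (hη : η ≤ 1 / 2) :
    volume (nearIntRow b r η σ y) ≤
      ENNReal.ofReal ((2 * r) ^ k * (2 * η * (1 + 1 / (r * |y a|)))) := by
  obtain ⟨k, rfl⟩ : ∃ k', k = k' + 1 := ⟨k - 1, by have := a.pos; omega⟩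
  have hmp := (volume_preserving_piFinSuccAbove (fun _ : Fin (k + 1) ↦ ℝ) a).symm
  have hmeas := measurableSet_nearIntRow b r η σ y
  rw [← hmp.measure_preimage hmeas.nullMeasurableSet, Measure.volume_eq_prod,
    Measure.prod_apply_symm (hmp.measurable hmeas)]
  refine (lintegral_mono (volume_insertNth_preimage_nearIntRow_le hy hr.le hη₀ hη)).trans ?_
  rw [lintegral_indicator measurableSet_closedBall, lintegral_const, Measure.restrict_apply_univ,
    Real.volume_pi_closedBall _ hr.le, ← ENNReal.ofReal_mul (by positivity), Fintype.card_fin]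
  refine ENNReal.ofReal_le_ofReal (le_of_eq ?_)
  have := abs_ne_zero.mpr hy
  field_simp
  ring

lemma volume_setOf_nearIntRow_le (b : Fin N → Fin k → ℝ) {σ : Fin N → ℝ} {y : Fin k → ℝ}
    (a : Fin k) (hy : y a ≠ 0) (hr : 0 < r) (hη₀ : 0 ≤ η) (hη : η ≤ 1 / 2) :
    volume {x : Fin N → Fin k → ℝ | ∀ i, x i ∈ nearIntRow (b i) r η (σ i) y} ≤
      ENNReal.ofReal (((2 * r) ^ k * (2 * η * (1 + 1 / (r * |y a|)))) ^ N) := by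
  have hpi : {x : Fin N → Fin k → ℝ | ∀ i, x i ∈ nearIntRow (b i) r η (σ i) y} =
      Set.univ.pi fun i ↦ nearIntRow (b i) r η (σ i) y := by
    ext x; simp
  rw [hpi, volume_pi_pi, ENNReal.ofReal_pow (by positivity)]
  refine (Finset.prod_le_prod' fun i _ ↦ volume_nearIntRow_le (b i) a hy hr hη₀ hη).trans ?_
  simp

/-- The integer points of the cube `[-Q, Q]^k`. -/
def intBox (k Q : ℕ) : Finset (Fin k → ℤ) :=
  Fintype.piFinset fun _ ↦ Finset.Icc (-(Q : ℤ)) Q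

lemma mem_intBox {Q : ℕ} {y : Fin k → ℤ} : y ∈ intBox k Q ↔ ∀ a, |y a| ≤ Q := by
  simp [intBox, Fintype.mem_piFinset, abs_le]

lemma card_intBox (k Q : ℕ) : (intBox k Q).card = (2 * Q + 1) ^ k := by
  simp only [intBox, Fintype.card_piFinset, Int.card_Icc, Finset.prod_const, Finset.card_univ,
    Fintype.card_fin]
  congr 1
  omega

lemma exists_one_add_inv_mul_abs_pow_le (hr : 0 < r) (N : ℕ) {y : Fin k → ℤ} (hy : y ≠ 0) :
    ∃ a, y a ≠ 0 ∧ (1 + 1 / (r * |(y a : ℝ)|)) ^ N ≤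
      2 ^ N + if y ∈ intBox k ⌈1 / r⌉₊ then (1 + 1 / r) ^ N else 0 := by
  by_cases hbig : ∃ a, 1 / r ≤ |(y a : ℝ)|
  · obtain ⟨a, ha⟩ := hbig
    have hpos : 0 < |(y a : ℝ)| := (by positivity : 0 < 1 / r).trans_le ha
    refine ⟨a, by exact_mod_cast abs_pos.mp hpos, le_add_of_le_of_nonneg ?_ (by positivity)⟩
    have : 1 / (r * |(y a : ℝ)|) ≤ 1 := by
      rwa [div_le_one (by positivity), ← div_le_iff₀' hr]
    exact pow_le_pow_left₀ (by positivity) (by linarith) N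
  · push Not at hbig
    have hmem : y ∈ intBox k ⌈1 / r⌉₊ := mem_intBox.mpr fun a ↦ by
      have : (|y a| : ℝ) ≤ ⌈1 / r⌉₊ := (hbig a).le.trans (Nat.le_ceil _)
      exact_mod_cast this
    obtain ⟨a, ha⟩ := Function.ne_iff.mp hy
    have hone : (1 : ℝ) ≤ |(y a : ℝ)| := by exact_mod_cast Int.one_le_abs ha
    refine ⟨a, ha, ?_⟩
    rw [if_pos hmem]
    refine le_add_of_nonneg_of_le (by positivity) ?_
    gcongr
    exact le_mul_of_one_le_right hr.le hone

lemma volume_setOf_nearIntRow_int_le (b : Fin N → Fin k → ℝ) (σ : Fin N → ℝ)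
    {y : Fin k → ℤ} (hy : y ≠ 0) (hr : 0 < r) (hη₀ : 0 ≤ η) (hη : η ≤ 1 / 2) :
    volume {x : Fin N → Fin k → ℝ | ∀ i, x i ∈ nearIntRow (b i) r η (σ i) (fun a ↦ y a)} ≤
      ENNReal.ofReal (((2 * r) ^ k * (2 * η)) ^ N *
        (2 ^ N + if y ∈ intBox k ⌈1 / r⌉₊ then (1 + 1 / r) ^ N else 0)) := by
  obtain ⟨a, ha, hle⟩ := exists_one_add_inv_mul_abs_pow_le hr N hy
  refine (volume_setOf_nearIntRow_le b a (by exact_mod_cast ha) hr hη₀ hη).trans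
    (ENNReal.ofReal_le_ofReal ?_)
  rw [← mul_assoc, mul_pow ((2 * r) ^ k * (2 * η))]
  gcongr

lemma sum_intBox_le (Q R : ℕ) {c d : ℝ} (hd : 0 ≤ d) :
    ∑ y ∈ intBox k Q, (c + if y ∈ intBox k R then d else 0) ≤
      c * (2 * Q + 1) ^ k + d * (2 * R + 1) ^ k := by
  have hcard (Q : ℕ) : ((intBox k Q).card : ℝ) = (2 * Q + 1) ^ k := by
    rw [card_intBox]; push_cast; rfl
  rw [Finset.sum_add_distrib, Finset.sum_const, nsmul_eq_mul, ← Finset.sum_filter,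
    Finset.sum_const, nsmul_eq_mul, ← hcard, ← hcard, mul_comm c, mul_comm d]
  gcongr
  exact fun y hy ↦ (Finset.mem_filter.mp hy).2

/-- The matrices of the ball of centre `b` and radius `r` that map some nonzero integer vector of
size at most `Q` to within `η` of an integer vector, up to a shift from `S`. -/
def nearSet (b : Fin N → Fin k → ℝ) (r : ℝ) (S : Finset (Fin N → ℝ)) (Q : ℕ) (η : ℝ) :
    Set (Fin N → Fin k → ℝ) :=
  {x | x ∈ Metric.closedBall b r ∧ ∃ σ ∈ S, ∃ y ∈ intBox k Q, y ≠ 0 ∧ ∀ i, ∃ z : ℤ,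
    |∑ a, x i a * (y a : ℝ) + σ i - z| ≤ η}

lemma volume_nearSet_le (b : Fin N → Fin k → ℝ) (S : Finset (Fin N → ℝ)) (Q : ℕ) (hr : 0 < r)
    (hη₀ : 0 ≤ η) (hη : η ≤ 1 / 2) :
    volume (nearSet b r S Q η) ≤ ENNReal.ofReal (S.card * (((2 * r) ^ k * (2 * η)) ^ N *
      (2 ^ N * (2 * Q + 1) ^ k + (1 + 1 / r) ^ N * (2 * ⌈1 / r⌉₊ + 1) ^ k))) := by
  classical
  set F : (Fin k → ℤ) → ℝ := fun y ↦ ((2 * r) ^ k * (2 * η)) ^ N *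
    (2 ^ N + if y ∈ intBox k ⌈1 / r⌉₊ then (1 + 1 / r) ^ N else 0)
  have hF₀ y : 0 ≤ F y := by positivity
  have hsub : nearSet b r S Q η ⊆ ⋃ σ ∈ S, ⋃ y ∈ (intBox k Q).filter (· ≠ 0),
      {x : Fin N → Fin k → ℝ | ∀ i, x i ∈ nearIntRow (b i) r η (σ i) (fun a ↦ y a)} := by
    rintro x ⟨hx, σ, hσ, y, hy, hy₀, h⟩
    refine Set.mem_biUnion hσ (Set.mem_biUnion (by simp [hy, hy₀]) fun i ↦ ⟨?_, h i⟩)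
    exact (dist_pi_le_iff hr.le).mp hx i
  refine (measure_mono hsub).trans ((measure_biUnion_finset_le _ _).trans ?_)
  rw [ENNReal.ofReal_mul (Nat.cast_nonneg _), ENNReal.ofReal_natCast, ← nsmul_eq_mul]
  refine Finset.sum_le_card_nsmul _ _ _ fun σ _ ↦ ?_
  calc _ ≤ ∑ y ∈ (intBox k Q).filter (· ≠ 0), ENNReal.ofReal (F y) :=
        (measure_biUnion_finset_le _ _).trans <| Finset.sum_le_sum fun y hy ↦
          volume_setOf_nearIntRow_int_le b σ (Finset.mem_filter.mp hy).2 hr hη₀ hη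
    _ ≤ ∑ y ∈ intBox k Q, ENNReal.ofReal (F y) :=
        Finset.sum_le_sum_of_subset (Finset.filter_subset _ _)
    _ = ENNReal.ofReal (∑ y ∈ intBox k Q, F y) :=
        (ENNReal.ofReal_sum_of_nonneg fun y _ ↦ hF₀ y).symm
    _ ≤ _ := by
        refine ENNReal.ofReal_le_ofReal ?_
        rw [← Finset.mul_sum]
        gcongr
        exact sum_intBox_le Q _ (by positivity)

end NearInteger

section Scale

variable {κ : ℝ}

/-- The scale `κ Q^{-l/N}` at which Dirichlet's theorem makes the values of `N` linear forms in `l`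
variables nearly integral, for integer variables of size `Q`. -/
def dirichletScale (κ : ℝ) (l N Q : ℕ) : ℝ := κ * (Q : ℝ) ^ (-((l : ℝ) / N))

lemma dirichletScale_pos (hκ : 0 < κ) (l N : ℕ) {Q : ℕ} (hQ : 1 ≤ Q) :
    0 < dirichletScale κ l N Q := by
  have : (0 : ℝ) < Q := by exact_mod_cast hQ
  unfold dirichletScale; positivity

lemma dirichletScale_le (hκ : 0 ≤ κ) (l N : ℕ) {Q : ℕ} (hQ : 1 ≤ Q) :
    dirichletScale κ l N Q ≤ κ := by
  refine mul_le_of_le_one_right hκ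
    (Real.rpow_le_one_of_one_le_of_nonpos (by exact_mod_cast hQ) ?_)
  rw [neg_nonpos]; positivity

lemma dirichletScale_pow (l : ℕ) {N Q : ℕ} (hN : N ≠ 0) :
    dirichletScale κ l N Q ^ N = κ ^ N / (Q : ℝ) ^ l := by
  rw [dirichletScale, mul_pow, ← Real.rpow_mul_natCast (by positivity), neg_mul,
    div_mul_cancel₀ _ (by exact_mod_cast hN), Real.rpow_neg (by positivity), Real.rpow_natCast,
    div_eq_mul_inv]

lemma volume_nearSet_dirichletScale_le {N k m Q : ℕ} (hN : N ≠ 0) (hκ₀ : 0 < κ) (hκ : κ ≤ 1 / 2)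
    (hQ : 1 ≤ Q) {r c : ℝ} (hr : 0 < r)
    (hc : (1 + 1 / r) ^ N * (2 * ⌈1 / r⌉₊ + 1) ^ k ≤ c * (Q : ℝ) ^ k)
    (b : Fin N → Fin k → ℝ) (S : Finset (Fin N → ℝ)) :
    volume (nearSet b r S Q (dirichletScale κ (k + m) N Q)) ≤ ENNReal.ofReal
      (S.card * (2 ^ (k * N) * 2 ^ N * (2 ^ N * 3 ^ k + c) * κ ^ N * r ^ (k * N) / Q ^ m)) := by
  have hQ₁ : (1 : ℝ) ≤ Q := by exact_mod_cast hQ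
  have hη₀ := dirichletScale_pos hκ₀ (k + m) N hQ
  have hη := (dirichletScale_le hκ₀.le (k + m) N hQ).trans hκ
  refine (volume_nearSet_le b S Q hr hη₀.le hη).trans (ENNReal.ofReal_le_ofReal ?_)
  gcongr
  calc ((2 * r) ^ k * (2 * dirichletScale κ (k + m) N Q)) ^ N *
        (2 ^ N * (2 * Q + 1) ^ k + (1 + 1 / r) ^ N * (2 * ⌈1 / r⌉₊ + 1) ^ k)
      ≤ ((2 * r) ^ k * (2 * dirichletScale κ (k + m) N Q)) ^ N *
        (2 ^ N * (3 * Q) ^ k + c * Q ^ k) := by gcongr; linarith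
    _ = 2 ^ (k * N) * r ^ (k * N) * (2 ^ N * (κ ^ N / (Q : ℝ) ^ (k + m))) *
        (2 ^ N * (3 * Q) ^ k + c * Q ^ k) := by
        rw [mul_pow ((2 * r) ^ k), ← pow_mul, mul_pow 2 r, mul_pow 2 (dirichletScale _ _ _ _),
          dirichletScale_pow _ hN]
    _ = _ := by field_simp; ring

-- `κ` must not depend on `r`: the integer vectors shorter than `1 / r`, whose contribution is
-- governed by `1 / r`, are outnumbered by the others once `Q` is large.
lemma exists_scale_volume_nearSet_le (N k m : ℕ) (hN : N ≠ 0) (hk : 1 ≤ k) :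
    ∃ κ : ℝ, 0 < κ ∧ κ ≤ 1 / 2 ∧ ∀ r : ℝ, 0 < r → ∀ᶠ Q : ℕ in atTop,
      ∀ (b : Fin N → Fin k → ℝ) (S : Finset (Fin N → ℝ)), S.card ≤ (2 * Q + 1) ^ m →
        volume (nearSet b r S Q (dirichletScale κ (k + m) N Q)) ≤
          ENNReal.ofReal (r ^ (k * N) / 2) := by
  set M : ℝ := 2 ^ (k * N) * 2 ^ N * (2 ^ N * 3 ^ k + 1)
  have hM : 0 < M := by positivity
  set κ : ℝ := min (1 / 2) (1 / (2 * 3 ^ m * M))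
  have hκ₀ : 0 < κ := by positivity
  refine ⟨κ, hκ₀, min_le_left _ _, fun r hr ↦ ?_⟩
  filter_upwards [tendsto_natCast_atTop_atTop.eventually_ge_atTop
      ((1 + 1 / r) ^ N * (2 * ⌈1 / r⌉₊ + 1 : ℝ) ^ k), eventually_ge_atTop 1] with Q hKQ hQ b S hS
  have hQ₁ : (1 : ℝ) ≤ Q := by exact_mod_cast hQ
  refine (volume_nearSet_dirichletScale_le hN hκ₀ (min_le_left _ _) hQ hr (c := 1) ?_ b S).trans
    (ENNReal.ofReal_le_ofReal ?_)
  · rw [one_mul]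
    exact hKQ.trans (le_self_pow₀ hQ₁ (by omega))
  have hκN : κ ^ N ≤ 1 / (2 * 3 ^ m * M) :=
    (pow_le_of_le_one hκ₀.le ((min_le_left _ _).trans (by norm_num)) hN).trans (min_le_right _ _)
  have hcard : (S.card : ℝ) ≤ (3 * Q) ^ m :=
    calc (S.card : ℝ) ≤ (2 * Q + 1) ^ m := by exact_mod_cast hS
      _ ≤ (3 * Q) ^ m := by gcongr; linarith
  calc (S.card : ℝ) * (M * κ ^ N * r ^ (k * N) / Q ^ m)
      ≤ (3 * Q) ^ m * (M * (1 / (2 * 3 ^ m * M)) * r ^ (k * N) / Q ^ m) := by gcongr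
    _ = r ^ (k * N) / 2 := by rw [mul_pow]; field_simp

lemma tendsto_volume_nearSet_singleton {N k m : ℕ} (hN : N ≠ 0) (hk : 1 ≤ k) (hκ₀ : 0 < κ)
    (hκ : κ ≤ 1 / 2) {r : ℝ} (hr : 0 < r) (b : Fin N → Fin m → ℝ) (σ : Fin N → ℝ) :
    Tendsto (fun Q : ℕ ↦ volume (nearSet b r {σ} Q (dirichletScale κ (k + m) N Q)))
      atTop (nhds 0) := by
  set c : ℝ := (1 + 1 / r) ^ N * (2 * ⌈1 / r⌉₊ + 1) ^ m
  set M : ℝ := 2 ^ (m * N) * 2 ^ N * (2 ^ N * 3 ^ m + c) * κ ^ N * r ^ (m * N)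
  have hlim : Tendsto (fun Q : ℕ ↦ ENNReal.ofReal (M / (Q : ℝ) ^ k)) atTop (nhds 0) := by
    simpa only [ENNReal.ofReal_zero, Function.comp_def] using ENNReal.tendsto_ofReal
      (((tendsto_pow_atTop (by omega)).comp tendsto_natCast_atTop_atTop).const_div_atTop M)
  refine tendsto_of_tendsto_of_tendsto_of_le_of_le' tendsto_const_nhds hlim
    (.of_forall fun _ ↦ zero_le) ?_
  filter_upwards [eventually_ge_atTop 1] with Q hQ
  have hQ₁ : (1 : ℝ) ≤ Q := by exact_mod_cast hQ
  rw [add_comm k m]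
  refine (volume_nearSet_dirichletScale_le hN hκ₀ hκ hQ hr (c := c)
    (le_mul_of_one_le_right (by positivity) (one_le_pow₀ hQ₁)) b {σ}).trans_eq ?_
  rw [Finset.card_singleton, Nat.cast_one, one_mul]

end Scale

/-! ### Rational subspaces close to a generic graph -/

section Pigeonhole

variable {ι β : Type*}

lemma exists_abs_sub_sub_int_le {M : ℕ} (hM : 0 < M) {x y : ℝ}
    (h : ⌊M * Int.fract x⌋ = ⌊M * Int.fract y⌋) : ∃ z : ℤ, |x - y - z| ≤ 1 / M := by
  have hM' : (0 : ℝ) < M := by exact_mod_cast hM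
  refine ⟨⌊x⌋ - ⌊y⌋, ?_⟩
  rw [le_div_iff₀' hM']
  nth_rw 1 [← abs_of_pos hM']
  rw [← abs_mul]
  refine le_trans (le_of_eq ?_) (Int.abs_sub_lt_one_of_floor_eq_floor h).le
  push_cast [Int.fract]
  ring_nf

lemma abs_sub_lt_of_ediv_eq {w x y : ℤ} (hw : 0 < w) (h : x / w = y / w) : |x - y| < w := by
  have hx := Int.mul_ediv_add_emod x w
  have hy := Int.mul_ediv_add_emod y w
  rw [h] at hx
  have := Int.emod_nonneg x hw.ne'
  have := Int.emod_nonneg y hw.ne'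
  have := Int.emod_lt_of_pos x hw
  have := Int.emod_lt_of_pos y hw
  rw [abs_sub_lt_iff]
  constructor <;> linarith

variable [Fintype ι]

lemma exists_ne_zero_near_int [Fintype β] {P D w M : ℕ} (hM : 0 < M) (hw : P < D * w)
    (hcard : M ^ Fintype.card β * D ^ (Fintype.card ι - 1) < (P + 1) ^ Fintype.card ι)
    (B : β → ι → ℝ) (a₀ : ι) :
    ∃ v : ι → ℤ, v ≠ 0 ∧ (∀ a, |v a| ≤ P) ∧ (∀ b ≠ a₀, |v b| < w) ∧
      ∀ i, ∃ z : ℤ, |∑ a, B i a * (v a : ℝ) - z| ≤ 1 / M := by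
  classical
  have hM' : (0 : ℝ) < M := by exact_mod_cast hM
  have hw₀ : (0 : ℤ) < w := by exact_mod_cast pos_of_mul_pos_right (by omega : 0 < D * w) D.zero_le
  set L : (ι → ℤ) → β → ℝ := fun y i ↦ ∑ a, B i a * (y a : ℝ)
  set box : Finset (ι → ℤ) := Fintype.piFinset fun _ ↦ Finset.Icc 0 (P : ℤ)
  set cells : Finset ((β → ℤ) × ({b // b ≠ a₀} → ℤ)) :=
    (Fintype.piFinset fun _ ↦ Finset.Ico 0 (M : ℤ)) ×ˢ
      (Fintype.piFinset fun _ ↦ Finset.Ico 0 (D : ℤ))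
  have hbox {y} (hy : y ∈ box) (a) : 0 ≤ y a ∧ y a ≤ P :=
    Finset.mem_Icc.mp (Fintype.mem_piFinset.mp hy a)
  have hlt : cells.card < box.card := by
    simpa [box, cells, Fintype.card_subtype_compl, Fintype.card_piFinset] using hcard
  obtain ⟨y, hy, y', hy', hne, h⟩ := Finset.exists_ne_map_eq_of_card_lt_of_maps_to hlt
    (f := fun y ↦ (fun i ↦ ⌊M * Int.fract (L y i)⌋, fun b ↦ y b / w)) fun y hy ↦ by
      refine Finset.mem_product.mpr ⟨Fintype.mem_piFinset.mpr fun i ↦ Finset.mem_Ico.mpr ⟨?_, ?_⟩,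
        Fintype.mem_piFinset.mpr fun b ↦ Finset.mem_Ico.mpr ⟨?_, ?_⟩⟩
      · have := Int.fract_nonneg (L y i)
        positivity
      · exact Int.floor_lt.mpr (mul_lt_of_lt_one_right hM' (Int.fract_lt_one _))
      · exact Int.ediv_nonneg (hbox hy b).1 hw₀.le
      · exact Int.ediv_lt_of_lt_mul hw₀ ((hbox hy b).2.trans_lt (by exact_mod_cast hw))
  refine ⟨y - y', sub_ne_zero.mpr hne, fun a ↦ abs_sub_le_of_nonneg_of_le (hbox hy a).1
    (hbox hy a).2 (hbox hy' a).1 (hbox hy' a).2, fun b hb ↦ abs_sub_lt_of_ediv_eq hw₀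
      (congrFun (congrArg Prod.snd h) ⟨b, hb⟩), fun i ↦ ?_⟩
  simpa [mul_sub, L] using exists_abs_sub_sub_int_le hM (congrFun (congrArg Prod.fst h) i)

lemma exists_long_coordinate [Fintype β] {k Q R M : ℕ} (hk : 1 ≤ k) (hR : 1 ≤ R) (hM : 0 < M)
    (hcard : M ^ Fintype.card β * (R * k) ^ (Fintype.card ι - 1) < (R * Q + 1) ^ Fintype.card ι)
    (B : β → ι → ℝ) (hB : ∀ y : ι → ℤ, y ≠ 0 → (∀ a, |y a| ≤ Q) →
      ¬ ∀ i, ∃ z : ℤ, |∑ a, B i a * (y a : ℝ) - z| ≤ 1 / M) (a₀ : ι) :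
    ∃ y : ι → ℤ, (∀ a, |y a| ≤ R * Q) ∧ (Q : ℤ) < |y a₀| ∧ (∀ b ≠ a₀, k * |y b| ≤ Q) ∧
      ∀ i, ∃ z : ℤ, |∑ a, B i a * (y a : ℝ) - z| ≤ 1 / M := by
  have hw : R * Q < R * k * (Q / k + 1) := by
    rw [mul_assoc]
    exact Nat.mul_lt_mul_of_pos_left (Nat.lt_mul_div_succ Q hk) hR
  obtain ⟨v, hv₀, hvP, hvw, hvB⟩ := exists_ne_zero_near_int hM hw hcard B a₀
  have hshort : ∀ b ≠ a₀, k * |v b| ≤ Q := fun b hb ↦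
    calc (k : ℤ) * |v b| ≤ k * ((Q / k : ℕ) : ℤ) := by
          have := hvw b hb
          gcongr
          push_cast at this ⊢
          omega
      _ ≤ Q := by exact_mod_cast Nat.mul_div_le Q k
  refine ⟨v, by exact_mod_cast hvP, ?_, hshort, hvB⟩
  by_contra! hlong
  refine hB v hv₀ (fun a ↦ ?_) hvB
  rcases eq_or_ne a a₀ with rfl | ha
  · exact hlong
  · exact (le_mul_of_one_le_left (abs_nonneg _) (by exact_mod_cast hk)).trans (hshort a ha)

end Pigeonhole

section DiagDominant

variable {ι : Type*} [Fintype ι] {Y : Matrix ι ι ℝ} {Q δ : ℝ}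

lemma abs_le_of_diag_dominant (hQ : 0 < Q) (hd : ∀ a, Q ≤ |Y a a|)
    (ho : ∀ a b, b ≠ a → Fintype.card ι * |Y a b| ≤ Q) {x : ι → ℝ}
    (hx : ∀ a, |∑ b, Y a b * x b| ≤ δ) (b : ι) : |x b| ≤ Fintype.card ι * δ / Q := by
  classical
  have hι : (0 : ℝ) < Fintype.card ι := by exact_mod_cast Fintype.card_pos_iff.mpr ⟨b⟩
  obtain ⟨a, -, ha⟩ := Finset.exists_max_image Finset.univ (fun b ↦ |x b|) ⟨b, Finset.mem_univ b⟩
  refine (ha b (Finset.mem_univ b)).trans ((le_div_iff₀' hQ).mpr ?_)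
  have hsplit := Finset.add_sum_erase Finset.univ (fun b ↦ Y a b * x b) (Finset.mem_univ a)
  have hdiag : |Y a a * x a| ≤ δ + |∑ b ∈ Finset.univ.erase a, Y a b * x b| := by
    rw [eq_sub_of_add_eq hsplit]
    exact (abs_sub _ _).trans (by gcongr; exact hx a)
  have hoff : Fintype.card ι * |∑ b ∈ Finset.univ.erase a, Y a b * x b| ≤
      (Fintype.card ι - 1) * (Q * |x a|) :=
    calc _ ≤ ∑ b ∈ Finset.univ.erase a, Fintype.card ι * |Y a b * x b| := by
          rw [← Finset.mul_sum]
          gcongr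
          exact Finset.abs_sum_le_sum_abs _ _
      _ ≤ ∑ _b ∈ Finset.univ.erase a, Q * |x a| := by
          refine Finset.sum_le_sum fun b hb ↦ ?_
          rw [abs_mul, ← mul_assoc]
          exact mul_le_mul (ho a b (Finset.ne_of_mem_erase hb)) (ha b (Finset.mem_univ b))
            (abs_nonneg _) hQ.le
      _ = _ := by
          rw [Finset.sum_const, Finset.card_erase_of_mem (Finset.mem_univ a), Finset.card_univ,
            nsmul_eq_mul, Nat.cast_sub (by exact_mod_cast hι), Nat.cast_one]
  have hQa : Q * |x a| ≤ |Y a a * x a| := by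
    rw [abs_mul]
    gcongr
    exact hd a
  linarith [mul_le_mul_of_nonneg_left (hQa.trans hdiag) hι.le]

lemma det_ne_zero_of_diag_dominant [DecidableEq ι] (hQ : 0 < Q) (hd : ∀ a, Q ≤ |Y a a|)
    (ho : ∀ a b, b ≠ a → Fintype.card ι * |Y a b| ≤ Q) : Y.det ≠ 0 := by
  intro hdet
  obtain ⟨x, hx₀, hx⟩ := Matrix.exists_mulVec_eq_zero_iff.mpr hdet
  refine hx₀ (funext fun b ↦ abs_nonpos_iff.mp ?_)
  simpa using abs_le_of_diag_dominant hQ hd ho (δ := 0)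
    (fun a ↦ (congrArg abs (congrFun hx a)).le.trans abs_zero.le) b

lemma exists_sum_eq_of_diag_dominant (hQ : 0 < Q) (hd : ∀ a, Q ≤ |Y a a|)
    (ho : ∀ a b, b ≠ a → Fintype.card ι * |Y a b| ≤ Q) {x w : ι → ℝ}
    (hx : ∀ a, |∑ b, Y a b * x b - w a| ≤ δ) :
    ∃ x' : ι → ℝ, (∀ a, ∑ b, Y a b * x' b = w a) ∧ ∀ b, |x b - x' b| ≤ Fintype.card ι * δ / Q := by
  classical
  have hx' a : ∑ b, Y a b * (Y⁻¹.mulVec w) b = w a := by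
    have : Y.mulVec (Y⁻¹.mulVec w) = w := by
      rw [Matrix.mulVec_mulVec, Matrix.mul_nonsing_inv _
        (det_ne_zero_of_diag_dominant hQ hd ho).isUnit, Matrix.one_mulVec]
    exact congrFun this a
  refine ⟨Y⁻¹.mulVec w, hx', abs_le_of_diag_dominant (x := x - Y⁻¹.mulVec w) hQ hd ho fun a ↦ ?_⟩
  simpa only [Pi.sub_apply, mul_sub, Finset.sum_sub_distrib, hx'] using hx a

end DiagDominant

section RatCenters

variable {n k m N : ℕ} (e : (Fin k ⊕ Fin m) ⊕ Fin N ≃ Fin n)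

/-- The matrices `A` for which the subspace with coordinates `(A, B₂)` contains `k` integer vectors
with entries bounded by `T`, independent in the first `k` coordinates: the centres of the balls of
well approximable subspaces in the fibre of the chart over `B₂`. -/
def ratCenters (B₂ : Fin N → Fin m → ℝ) (T : ℝ) : Set (Fin N → Fin k → ℝ) :=
  {A | ∃ p : Fin k → Fin n → ℤ, (∀ a j, |(p a j : ℝ)| ≤ T) ∧
    (Matrix.of fun a b ↦ (p a (e (.inl (.inl b))) : ℝ)).det ≠ 0 ∧
    ∀ a, castVec (p a) ∈ (chart e A B₂).1}

lemma zero_mem_ratCenters (B₂ : Fin N → Fin m → ℝ) : 0 ∈ ratCenters e B₂ 1 := by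
  refine ⟨fun a ↦ Pi.single (e (.inl (.inl a))) 1, fun a j ↦ ?_, ?_, fun a i ↦ ?_⟩
  · simp only [Pi.single_apply]
    split_ifs <;> simp
  · have : (Matrix.of fun a b : Fin k ↦ ((Pi.single (e (.inl (.inl a))) 1 : Fin n → ℤ)
        (e (.inl (.inl b))) : ℝ)) = 1 := by
      ext a b
      simp [Matrix.one_apply, Pi.single_apply, eq_comm]
    rw [this, Matrix.det_one]
    exact one_ne_zero
  · simp [castVec, Pi.single_apply]

variable {e} {A B₁ : Fin N → Fin k → ℝ} {B₂ : Fin N → Fin m → ℝ} {r T : ℝ}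

lemma dPP_chart_le {P : Submodule ℝ (Fin n → ℝ)} (hP : P ≤ (chart e A B₂).1)
    (hA : dist B₁ A ≤ r) : dPP P (chart e B₁ B₂).1 ≤ n * (k * r) := by
  have hr : 0 ≤ r := dist_nonneg.trans hA
  refine dPP_graphSub_le e ((Submodule.finrank_mono hP).trans (finrank_graphSub e _).le)
    (by positivity) fun v hv i ↦ ?_
  have hdiff b : |A i b - B₁ i b| ≤ r := by
    rw [abs_sub_comm, ← Real.dist_eq]
    exact (dist_le_pi_dist _ _ b).trans ((dist_le_pi_dist _ _ i).trans hA)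
  have hle := abs_sum_mul_le_card_mul (y := fun b ↦ v (e (.inl (.inl b)))) hdiff
    fun b ↦ abs_le_eucNorm v _
  rw [Fintype.card_fin, ← mul_assoc] at hle
  refine le_trans (le_of_eq ?_) hle
  rw [hP hv i, ← Finset.sum_sub_distrib, Fintype.sum_sum_type]
  simp [sub_mul]

lemma exists_isPrimitive_of_mem_ratCenters (hT : 0 ≤ T) (hA : A ∈ ratCenters e B₂ T)
    (hB₁ : dist B₁ A ≤ r) :
    ∃ f : Fin k → Fin n → ℤ, IsPrimitive f ∧
      heightB f ≤ Fintype.card (WedgeIdx n k) * (k.factorial * T ^ k) ∧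
      dPP (ratSpan f) (chart e B₁ B₂).1 ≤ n * (k * r) := by
  obtain ⟨p, hpT, hdet, hp⟩ := hA
  have hli : LinearIndependent ℝ (castVec ∘ p) :=
    .of_comp (LinearMap.funLeft ℝ ℝ fun b ↦ e (.inl (.inl b)))
      (Matrix.linearIndependent_rows_of_det_ne_zero hdet)
  obtain ⟨f, hf, hspan, hle⟩ := exists_isPrimitive_heightB_le hli
  refine ⟨f, hf, hle.trans (heightB_le_of_abs_le hT hpT), dPP_chart_le ?_ hB₁⟩
  rw [hspan, ratSpan, Submodule.span_le]
  rintro _ ⟨a, rfl⟩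
  exact hp a

lemma exists_mem_ratCenters_of_diag_dominant {P Q η : ℝ} (hQ : 0 < Q) (hη : 0 ≤ η) (hηP : η ≤ P)
    (hB : ∀ i c, |Sum.elim (B₁ i) (B₂ i) c| ≤ 1) {y : Fin k → Fin k ⊕ Fin m → ℤ}
    (hyP : ∀ a c, |(y a c : ℝ)| ≤ P) (hd : ∀ a, Q ≤ |(y a (.inl a) : ℝ)|)
    (ho : ∀ a b, b ≠ a → k * |(y a (.inl b) : ℝ)| ≤ Q)
    (hy : ∀ a i, ∃ z : ℤ, |∑ c, Sum.elim (B₁ i) (B₂ i) c * (y a c : ℝ) - z| ≤ η) :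
    ∃ A ∈ ratCenters e B₂ ((k + m + 1) * P), dist B₁ A ≤ k * η / Q := by
  have hP : 0 ≤ P := hη.trans hηP
  choose z hz using hy
  set Y : Matrix (Fin k) (Fin k) ℝ := Matrix.of fun a b ↦ (y a (.inl b) : ℝ)
  have ho' a b (hb : b ≠ a) : Fintype.card (Fin k) * |Y a b| ≤ Q := by
    rw [Fintype.card_fin]
    exact ho a b hb
  have hsol i := exists_sum_eq_of_diag_dominant (Y := Y) hQ hd ho' (x := B₁ i) (δ := η)
    (w := fun a ↦ z a i - ∑ b, B₂ i b * (y a (.inr b) : ℝ)) fun a ↦ by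
      refine le_trans (le_of_eq ?_) (hz a i)
      simp only [Fintype.sum_sum_type, Sum.elim_inl, Sum.elim_inr, Y, Matrix.of_apply,
        mul_comm (B₁ i _)]
      ring_nf
  choose A hA hBA using hsol
  refine ⟨A, ⟨fun a j ↦ Sum.elim (y a) (z a) (e.symm j), fun a ↦ (forall_sum_iff e).mpr ⟨?_, ?_⟩,
    by simpa using det_ne_zero_of_diag_dominant hQ hd ho', fun a i ↦ ?_⟩, ?_⟩
  · intro c
    have hone : (1 : ℝ) ≤ k + m + 1 := le_add_of_nonneg_left (by positivity)
    simpa using (hyP a c).trans (le_mul_of_one_le_left hP hone)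
  · intro i
    have hsum := abs_sum_mul_le_card_mul (hB i) (hyP a)
    have hzη := abs_sub_abs_le_abs_sub (z a i : ℝ) (∑ c, Sum.elim (B₁ i) (B₂ i) c * (y a c : ℝ))
    rw [abs_sub_comm] at hzη
    simp only [Fintype.card_sum, Fintype.card_fin, one_mul, Nat.cast_add] at hsum
    simpa using (by linarith [hz a i] : |(z a i : ℝ)| ≤ (k + m + 1) * P)
  · have := hA i a
    simp only [Y, Matrix.of_apply, mul_comm _ (A i _)] at this
    simp [castVec, Fintype.sum_sum_type, this]
  · simpa only [dist_pi_le_iff (by positivity : 0 ≤ k * η / Q), Real.dist_eq, Fintype.card_fin]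
      using hBA

end RatCenters

section Generic

variable {n k m N Q : ℕ} {B₁ : Fin N → Fin k → ℝ} {B₂ : Fin N → Fin m → ℝ} {η κ : ℝ}

open Classical in
/-- The values of the linear forms `B₂` at the integer points of the cube `[-Q, Q]^m`. -/
def shifts (B₂ : Fin N → Fin m → ℝ) (Q : ℕ) : Finset (Fin N → ℝ) :=
  (intBox m Q).image fun y i ↦ ∑ a, B₂ i a * (y a : ℝ)

lemma card_shifts_le (B₂ : Fin N → Fin m → ℝ) (Q : ℕ) : (shifts B₂ Q).card ≤ (2 * Q + 1) ^ m :=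
  Finset.card_image_le.trans (card_intBox m Q).le

lemma not_near_int_of_notMem_nearSet {b₁ : Fin N → Fin k → ℝ} {b₂ : Fin N → Fin m → ℝ} {r₁ r₂ : ℝ}
    (hB₁ : B₁ ∈ Metric.closedBall b₁ r₁) (hB₂ : B₂ ∈ Metric.closedBall b₂ r₂)
    (h₁ : B₁ ∉ nearSet b₁ r₁ (shifts B₂ Q) Q η) (h₂ : B₂ ∉ nearSet b₂ r₂ {0} Q η)
    {y : Fin k ⊕ Fin m → ℤ} (hy : y ≠ 0) (hyQ : ∀ a, |y a| ≤ Q) :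
    ¬ ∀ i, ∃ z : ℤ, |∑ a, Sum.elim (B₁ i) (B₂ i) a * (y a : ℝ) - z| ≤ η := by
  intro hz
  simp only [Fintype.sum_sum_type, Sum.elim_inl, Sum.elim_inr] at hz
  by_cases h₀ : y ∘ Sum.inl = 0
  · have hl a : y (.inl a) = 0 := congrFun h₀ a
    refine h₂ ⟨hB₂, 0, Finset.mem_singleton_self 0, y ∘ Sum.inr, mem_intBox.mpr fun a ↦ hyQ _,
      fun hr ↦ hy ?_, by simpa [hl] using hz⟩
    ext (a | a)
    exacts [hl a, congrFun hr a]
  · exact h₁ ⟨hB₁, _, Finset.mem_image_of_mem _ (mem_intBox.mpr fun a ↦ hyQ (.inr a)),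
      y ∘ Sum.inl, mem_intBox.mpr fun a ↦ hyQ _, h₀, hz⟩

lemma natCeil_inv_dirichletScale_pow_mul_lt {l R : ℕ} (hN : N ≠ 0) (hl : l ≠ 0) (hκ₀ : 0 < κ)
    (hκ : κ ≤ 2) (hQ : 1 ≤ Q) (hR : (2 / κ) ^ N * (k : ℝ) ^ (l - 1) ≤ R) :
    ⌈1 / dirichletScale κ l N Q⌉₊ ^ N * (R * k) ^ (l - 1) < (R * Q + 1) ^ l := by
  set η := dirichletScale κ l N Q with hη
  have hη₀ : 0 < η := dirichletScale_pos hκ₀ l N hQ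
  have hceil : (⌈1 / η⌉₊ : ℝ) ≤ 2 / η := by
    rw [div_eq_mul_one_div 2 η]
    refine Nat.ceil_le_two_mul ?_
    rw [one_div]
    exact inv_anti₀ hη₀ ((dirichletScale_le hκ₀.le l N hQ).trans hκ)
  have : (0 : ℝ) < Q := by exact_mod_cast hQ
  suffices (⌈1 / η⌉₊ : ℝ) ^ N * (R * k) ^ (l - 1) < (R * Q + 1) ^ l by exact_mod_cast this
  calc (⌈1 / η⌉₊ : ℝ) ^ N * (R * k) ^ (l - 1)
      ≤ (2 / η) ^ N * (R * k) ^ (l - 1) := by gcongr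
    _ = (2 / κ) ^ N * (k : ℝ) ^ (l - 1) * R ^ (l - 1) * Q ^ l := by
        rw [div_pow, div_pow, hη, dirichletScale_pow _ hN, mul_pow]
        field_simp
    _ ≤ R * R ^ (l - 1) * Q ^ l := by gcongr
    _ = (R * Q) ^ l := by rw [mul_pow, mul_pow_sub_one hl]
    _ < (R * Q + 1) ^ l := pow_lt_pow_left₀ (by linarith) (by positivity) hl

-- The pigeonhole principle gives integer vectors with a nearly integral image, one for each of the
-- first `k` coordinates; genericity forces that coordinate to be long, so the vectors are
-- independent there, and moving `B₁` slightly makes their images integral.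
lemma exists_mem_ratCenters (e : (Fin k ⊕ Fin m) ⊕ Fin N ≃ Fin n) (hN : N ≠ 0) (hk : 1 ≤ k)
    (hκ₀ : 0 < κ) (hκ : κ ≤ 1) :
    ∃ T : ℝ, 1 ≤ T ∧ ∀ Q : ℕ, 1 ≤ Q → ∀ (b B₁ : Fin N → Fin k → ℝ) (r : ℝ)
      (B₂ : Fin N → Fin m → ℝ), B₁ ∈ Metric.closedBall 0 1 → B₂ ∈ Metric.closedBall 0 1 →
        B₁ ∈ Metric.closedBall b r →
        B₁ ∉ nearSet b r (shifts B₂ Q) Q (dirichletScale κ (k + m) N Q) →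
        B₂ ∉ nearSet 0 1 {0} Q (dirichletScale κ (k + m) N Q) →
        ∃ A ∈ ratCenters e B₂ (T * Q), dist B₁ A ≤ k * dirichletScale κ (k + m) N Q / Q := by
  obtain ⟨R, hR⟩ := exists_nat_ge (max 1 ((2 / κ) ^ N * (k : ℝ) ^ (k + m - 1)))
  obtain ⟨hR₁, hR₂⟩ := max_le_iff.mp hR
  refine ⟨(k + m + 1) * R, one_le_mul_of_one_le_of_one_le
    (le_add_of_nonneg_left (by positivity)) hR₁, ?_⟩
  intro Q hQ b B₁ r B₂ hB₁ hB₂ hB₁b h₁ h₂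
  set η := dirichletScale κ (k + m) N Q
  have hη₀ : 0 < η := dirichletScale_pos hκ₀ _ _ hQ
  have hQ₁ : (1 : ℝ) ≤ Q := by exact_mod_cast hQ
  have hM : 0 < ⌈1 / η⌉₊ := Nat.ceil_pos.mpr (by positivity)
  have hMη : 1 / (⌈1 / η⌉₊ : ℝ) ≤ η := one_div_le hη₀ (by exact_mod_cast hM) |>.mp (Nat.le_ceil _)
  have hcard := natCeil_inv_dirichletScale_pow_mul_lt (l := k + m) hN (by omega) hκ₀
    (by linarith) hQ hR₂
  have hlong (a : Fin k) := exists_long_coordinate hk (by exact_mod_cast hR₁) hM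
    (by simpa only [Fintype.card_fin, Fintype.card_sum] using hcard)
    (fun i ↦ Sum.elim (B₁ i) (B₂ i))
    (fun y hy hyQ hz ↦ not_near_int_of_notMem_nearSet hB₁b hB₂ h₁ h₂ hy hyQ fun i ↦
      (hz i).imp fun _ h ↦ h.trans hMη) (.inl a)
  choose y hyR hyd hyo hyz using hlong
  rw [mul_assoc]
  refine exists_mem_ratCenters_of_diag_dominant (by linarith) hη₀.le (?_ : η ≤ R * Q) ?_
    (y := y) (fun a c ↦ ?_) (fun a ↦ ?_) (fun a b hb ↦ ?_)
    fun a i ↦ (hyz a i).imp fun _ h ↦ h.trans hMη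
  · exact ((dirichletScale_le hκ₀.le _ _ hQ).trans hκ).trans
      (one_le_mul_of_one_le_of_one_le hR₁ hQ₁)
  · rintro i (a | a)
    exacts [(mem_closedBall_matrix_iff zero_le_one).mp hB₁ i a,
      (mem_closedBall_matrix_iff zero_le_one).mp hB₂ i a]
  · exact_mod_cast hyR a c
  · exact_mod_cast (hyd a).le
  · exact_mod_cast hyo a (.inl b) (by simpa using hb)

end Generic

/-! ### The lower bound -/

section Frequently

variable {ψ : ℝ → ℝ} {C g : ℝ} {k : ℕ}

lemma eventually_mul_rpow_neg_lt (K : ℝ) {p q : ℝ} (h : p < q) :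
    ∀ᶠ Q : ℕ in atTop, K * (Q : ℝ) ^ (-q) < (Q : ℝ) ^ (-p) := by
  have hlim : Tendsto (fun Q : ℕ ↦ K * (Q : ℝ) ^ (-(q - p))) atTop (nhds 0) := by
    simpa only [mul_zero, Function.comp_def] using ((tendsto_rpow_neg_atTop (sub_pos.mpr h)).comp
      tendsto_natCast_atTop_atTop).const_mul K
  filter_upwards [hlim.eventually_lt_const one_pos, eventually_ge_atTop 1] with Q hlt hQ
  have hQ₀ : (0 : ℝ) < Q := by exact_mod_cast hQ
  calc K * (Q : ℝ) ^ (-q) = K * (Q : ℝ) ^ (-(q - p)) * (Q : ℝ) ^ (-p) := by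
        rw [mul_assoc, ← Real.rpow_add hQ₀]; ring_nf
    _ < (Q : ℝ) ^ (-p) := mul_lt_of_lt_one_left (by positivity) hlt

lemma frequently_rpow_neg_le (hψpos : ∀ t > 0, 0 < ψ t) (hg : gammaE ψ < g) :
    ∃ᶠ t in atTop, t ^ (-g) ≤ ψ t := by
  refine ((frequently_lt_of_liminf_lt (by isBoundedDefault) hg).and_eventually
    (eventually_gt_atTop (1 : ℝ))).mono fun t ⟨hlt, ht⟩ ↦ ?_
  have ht₀ : 0 < t := one_pos.trans ht
  rw [EReal.coe_lt_coe_iff, div_lt_iff₀ (Real.log_pos ht)] at hlt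
  rw [← Real.log_le_log_iff (by positivity) (hψpos t ht₀), Real.log_rpow ht₀]
  linarith

lemma exists_nat_mul_pow_le (hC : 0 < C) (hk : k ≠ 0) {J : ℕ} (hJ : 1 ≤ J) {t : ℝ}
    (ht : C * (J : ℝ) ^ k ≤ t) :
    ∃ Q ≥ J, C * (Q : ℝ) ^ k ≤ t ∧ t ≤ C * 2 ^ k * (Q : ℝ) ^ k := by
  have htC : (J : ℝ) ^ k ≤ t / C := (le_div_iff₀' hC).mpr ht
  have htC₀ : 0 ≤ t / C := le_trans (by positivity) htC
  set x := (t / C) ^ (k : ℝ)⁻¹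
  have hx₀ : 0 ≤ x := by positivity
  have hxk : x ^ k = t / C := Real.rpow_inv_natCast_pow htC₀ hk
  have hJx : (J : ℝ) ≤ x := le_of_pow_le_pow_left₀ hk hx₀ (hxk ▸ htC)
  have hJQ : J ≤ ⌊x⌋₊ := Nat.le_floor hJx
  have hx₂ : x ≤ 2 * ⌊x⌋₊ := by
    have hQ₁ : (1 : ℝ) ≤ ⌊x⌋₊ := by exact_mod_cast hJ.trans hJQ
    linarith [Nat.lt_floor_add_one x]
  refine ⟨⌊x⌋₊, hJQ, (le_div_iff₀' hC).mp ?_, ?_⟩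
  · exact hxk ▸ pow_le_pow_left₀ (by positivity) (Nat.floor_le hx₀) k
  · rw [mul_assoc, ← mul_pow, ← div_le_iff₀' hC, ← hxk]
    gcongr

lemma frequently_rpow_le_of_gammaE_lt (hψpos : ∀ t > 0, 0 < ψ t) (hψ : AntitoneOn ψ (Set.Ioi 0))
    (hk : 1 ≤ k) (hC : 0 < C) (hg : gammaE ψ < g) :
    ∃ᶠ Q : ℕ in atTop, (Q : ℝ) ^ (-(k * g)) ≤ ψ (C * (Q : ℝ) ^ k) := by
  obtain ⟨g₀, hγ, hg₀⟩ := EReal.lt_iff_exists_real_btwn.mp hg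
  have hg₀_nonneg : 0 ≤ g₀ := by exact_mod_cast (gammaE_nonneg hψpos hψ).trans hγ.le
  obtain ⟨J, hJ⟩ := eventually_atTop.mp (eventually_mul_rpow_neg_lt ((C * 2 ^ k) ^ g₀)
    (mul_lt_mul_of_pos_left (EReal.coe_lt_coe_iff.mp hg₀) (by positivity : (0 : ℝ) < k)))
  refine frequently_atTop.mpr fun Q₀ ↦ ?_
  obtain ⟨t, ht, hψt⟩ := frequently_atTop.mp (frequently_rpow_neg_le hψpos hγ)
    (C * ((max (max Q₀ J) 1 : ℕ) : ℝ) ^ k)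
  obtain ⟨Q, hQ, hQt, htQ⟩ := exists_nat_mul_pow_le hC (by omega) (le_max_right _ _) ht
  have hQ₀ : (0 : ℝ) < Q := by exact_mod_cast (by omega : 0 < Q)
  have ht₀ : 0 < t := (by positivity : 0 < C * (Q : ℝ) ^ k).trans_le hQt
  refine ⟨Q, by omega, ?_⟩
  calc (Q : ℝ) ^ (-(k * g)) ≤ ((C * 2 ^ k) ^ g₀)⁻¹ * (Q : ℝ) ^ (-(k * g₀)) := by
        rw [le_inv_mul_iff₀ (by positivity)]
        exact (hJ Q (by omega)).le
    _ = (C * 2 ^ k * (Q : ℝ) ^ k) ^ (-g₀) := by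
        rw [Real.mul_rpow (x := C * 2 ^ k) (by positivity) (by positivity),
          Real.rpow_neg (x := C * 2 ^ k) (by positivity), ← Real.rpow_natCast_mul hQ₀.le, mul_neg]
    _ ≤ t ^ (-g₀) := Real.rpow_le_rpow_of_nonpos ht₀ htQ (neg_nonpos.mpr hg₀_nonneg)
    _ ≤ ψ t := hψt
    _ ≤ ψ (C * (Q : ℝ) ^ k) := hψ (Set.mem_Ioi.mpr (by positivity)) ht₀ hQt

lemma eventually_mul_rpow_lt_of_rpow_le (hψ : AntitoneOn ψ (Set.Ioi 0)) (hk : 1 ≤ k)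
    (hC : 0 < C) {α τ c : ℝ} (hα : 0 ≤ α) (hτ : α + g < τ) (hc : 0 < c) (K : ℝ) :
    ∀ᶠ Q : ℕ in atTop, (Q : ℝ) ^ (-(k * g)) ≤ ψ (C * (Q : ℝ) ^ k) →
      ∀ H, 0 < H → H ≤ C * (Q : ℝ) ^ k → K * (Q : ℝ) ^ (-(k * τ)) < c * H ^ (-α) * ψ H := by
  filter_upwards [eventually_mul_rpow_neg_lt (K / (c * C ^ (-α)))
    (mul_lt_mul_of_pos_left hτ (by positivity : (0 : ℝ) < k)), eventually_ge_atTop 1]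
    with Q hlt hQ hψQ H hH₀ hH
  have hQ₀ : (0 : ℝ) < Q := by exact_mod_cast hQ
  have hHψ : (Q : ℝ) ^ (-(k * g)) ≤ ψ H := hψQ.trans (hψ hH₀ (hH₀.trans_le hH) hH)
  rw [div_mul_eq_mul_div, div_lt_iff₀' (by positivity)] at hlt
  calc K * (Q : ℝ) ^ (-(k * τ)) < c * C ^ (-α) * (Q : ℝ) ^ (-(k * (α + g))) := hlt
    _ = c * (C * (Q : ℝ) ^ k) ^ (-α) * (Q : ℝ) ^ (-(k * g)) := by
        rw [Real.mul_rpow hC.le (by positivity), ← Real.rpow_natCast_mul hQ₀.le, mul_add, neg_add,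
          Real.rpow_add hQ₀, mul_neg]
        ring
    _ ≤ c * H ^ (-α) * ψ H := by
        gcongr ?_ * ?_ * ?_
        · exact Real.rpow_le_rpow_of_nonpos hH₀ hH (neg_nonpos.mpr hα)

end Frequently

section MassTransference

variable {N k : ℕ}

lemma eventually_scale_le {K δ τ s d t : ℝ} (hK : 0 ≤ K) (hδ : 0 < δ) (hsτ : s * τ < δ * d)
    (ht : 0 < t) :
    ∀ᶠ Q : ℕ in atTop, 4 * (K * (Q : ℝ) ^ (-δ)) ≤ t ∧
      8 * (6 * (K * (Q : ℝ) ^ (-δ))) ^ d * t ^ s ≤ ((Q : ℝ) ^ (-τ)) ^ s * t ^ d := by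
  filter_upwards [eventually_mul_rpow_neg_lt (4 * K / t) hδ,
    eventually_mul_rpow_neg_lt (8 * (6 * K) ^ d * t ^ s / t ^ d) hsτ] with Q h₁ h₂
  constructor
  · rw [neg_zero, Real.rpow_zero, div_mul_eq_mul_div, div_lt_one ht] at h₁
    linarith
  · rw [div_mul_eq_mul_div, div_lt_iff₀ (by positivity)] at h₂
    rw [← mul_assoc 6, Real.mul_rpow (by positivity) (by positivity),
      ← Real.rpow_mul (by positivity), ← Real.rpow_mul (by positivity), neg_mul, neg_mul,
      mul_comm τ s]
    linarith

lemma le_hausdorffContent_limsup_matrix (hk : 1 ≤ k) {S : ℕ → Set (Fin N → Fin k → ℝ)}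
    {Q : ℕ → ℕ} (hQ : Tendsto Q atTop atTop) (hQ₁ : ∀ j, 1 ≤ Q j) {s δ τ : ℝ} (hs : 0 < s)
    (hδ : 0 < δ) (hδτ : δ ≤ τ) (hsτ : s * τ < δ * (k * N : ℕ))
    (H : ∀ t > 0, ∀ᶠ j in atTop, ∀ b : Fin N → Fin k → ℝ,
      Metric.closedBall b t ⊆ Metric.closedBall 0 1 →
      ∃ Bad : Set (Fin N → Fin k → ℝ), volume Bad ≤ ENNReal.ofReal (t ^ (k * N) / 2) ∧
        ∀ x ∈ Metric.closedBall b t, x ∉ Bad → ∃ a ∈ S j, dist x a ≤ k * (Q j : ℝ) ^ (-δ)) :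
    ENNReal.ofReal (nestConst (k * N : ℕ)) ≤ hausdorffContent s
      {x | x ∈ Metric.closedBall 0 1 ∧
        ∀ j₀, ∃ j ≥ j₀, ∃ a ∈ S j, dist x a ≤ (Q j : ℝ) ^ (-τ)} := by
  have hQ₁' (j : ℕ) : (1 : ℝ) ≤ Q j := by exact_mod_cast hQ₁ j
  have hQ₀ (j : ℕ) : (0 : ℝ) < Q j := one_pos.trans_le (hQ₁' j)
  have hsd : s ≤ (k * N : ℕ) := by nlinarith
  have hvol (x : Fin N → Fin k → ℝ) (r : ℝ) (hr : 0 < r) : volume (Metric.closedBall x r) =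
      ENNReal.ofReal (2 ^ (k * N) * r ^ ((k * N : ℕ) : ℝ)) := by
    rw [volume_closedBall_matrix x hr, ENNReal.ofReal_mul (by positivity),
      ENNReal.ofReal_rpow_of_pos hr, ENNReal.ofReal_pow zero_le_two, ENNReal.ofReal_ofNat]
  have hlim := le_hausdorffContent_limsup (d := (k * N : ℕ)) (x₀ := (0 : Fin N → Fin k → ℝ))
    (R := 1) (S := S) (r := fun j ↦ (Q j : ℝ) ^ (-τ)) (ρ := fun j ↦ k * (Q j : ℝ) ^ (-δ)) hvol
    (by positivity) hs hsd (fun j ↦ Real.rpow_pos_of_pos (hQ₀ j) _) ?_ one_pos ?_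
  · rwa [Real.one_rpow, mul_one] at hlim
  · intro j
    calc (Q j : ℝ) ^ (-τ) ≤ (Q j : ℝ) ^ (-δ) :=
          Real.rpow_le_rpow_of_exponent_le (hQ₁' j) (neg_le_neg hδτ)
      _ ≤ k * (Q j : ℝ) ^ (-δ) :=
          le_mul_of_one_le_left (by positivity) (by exact_mod_cast hk)
  · intro b t ht hbt j₀
    obtain ⟨j, hj, ⟨h₁, h₂⟩, hB⟩ := ((eventually_ge_atTop j₀).and
      ((hQ.eventually (eventually_scale_le k.cast_nonneg hδ hsτ ht)).and (H t ht))).exists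
    obtain ⟨Bad, hBad, hS⟩ := hB b hbt
    refine ⟨j, hj, h₁, h₂, Bad, ?_, fun x hx ↦
      hS x (Metric.closedBall_subset_closedBall (by linarith) hx)⟩
    rwa [Real.rpow_natCast, ← mul_pow, mul_div_cancel₀ t two_ne_zero]

end MassTransference

section LowerBound

variable {n k m N : ℕ} {e : (Fin k ⊕ Fin m) ⊕ Fin N ≃ Fin n} {ψ : ℝ → ℝ}

lemma exists_ubiquity_ratCenters (e : (Fin k ⊕ Fin m) ⊕ Fin N ≃ Fin n) (hN : N ≠ 0)
    (hk : 1 ≤ k) :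
    ∃ κ T : ℝ, 0 < κ ∧ κ ≤ 1 / 2 ∧ 1 ≤ T ∧ ∀ t > 0, ∀ᶠ Q : ℕ in atTop,
      ∀ (B₂ : Fin N → Fin m → ℝ) (b : Fin N → Fin k → ℝ), B₂ ∈ Metric.closedBall 0 1 →
        B₂ ∉ nearSet 0 1 {0} Q (dirichletScale κ (k + m) N Q) →
        Metric.closedBall b t ⊆ Metric.closedBall 0 1 →
        ∃ Bad : Set (Fin N → Fin k → ℝ), volume Bad ≤ ENNReal.ofReal (t ^ (k * N) / 2) ∧
          ∀ x ∈ Metric.closedBall b t, x ∉ Bad →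
            ∃ a ∈ ratCenters e B₂ (T * Q), dist x a ≤ k * (Q : ℝ) ^ (-((n : ℝ) / N)) := by
  obtain ⟨κ, hκ₀, hκ, hvol⟩ := exists_scale_volume_nearSet_le N k m hN hk
  obtain ⟨T, hT, hcent⟩ := exists_mem_ratCenters e hN hk hκ₀ (hκ.trans (by norm_num))
  refine ⟨κ, T, hκ₀, hκ, hT, fun t ht ↦ ?_⟩
  filter_upwards [hvol t ht, eventually_ge_atTop 1] with Q hQvol hQ B₂ b hB₂ hgen hbt
  refine ⟨_, hQvol b (shifts B₂ Q) (card_shifts_le B₂ Q), fun x hx hxB ↦ ?_⟩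
  obtain ⟨a, ha, hxa⟩ := hcent Q hQ b x t B₂ (hbt hx) hB₂ hx hxB hgen
  refine ⟨a, ha, hxa.trans ?_⟩
  have hQ₀ : (0 : ℝ) < Q := by exact_mod_cast hQ
  have hn : n = k + m + N := by simpa using (Fintype.card_congr e).symm
  have hexp : -((n : ℝ) / N) = -(((k + m : ℕ) : ℝ) / N) - 1 := by
    rw [hn]; push_cast; field_simp; ring
  rw [hexp, Real.rpow_sub_one hQ₀.ne', mul_div_assoc, dirichletScale]
  gcongr
  exact mul_le_of_le_one_left (by positivity) (hκ.trans (by norm_num))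

lemma chart_mem_compl_Elk_of_frequently (hψ : AntitoneOn ψ (Set.Ioi 0)) (hk : 1 ≤ k)
    {C T g τ : ℝ} (hT : 0 ≤ T) (hC₀ : 0 < C)
    (hC : Fintype.card (WedgeIdx n k) * (k.factorial * T ^ k) ≤ C)
    (hτ : n / (k * N) + g < τ) {B₁ : Fin N → Fin k → ℝ} {B₂ : Fin N → Fin m → ℝ}
    (h : ∃ᶠ Q : ℕ in atTop, (Q : ℝ) ^ (-(k * g)) ≤ ψ (C * (Q : ℝ) ^ k) ∧
      ∃ A ∈ ratCenters e B₂ (T * Q), dist B₁ A ≤ (Q : ℝ) ^ (-(k * τ))) :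
    chart e B₁ B₂ ∈ (Elk n k (k + m) ψ)ᶜ := by
  have hn : n = k + m + N := by simpa using (Fintype.card_congr e).symm
  refine mem_compl_Elk_iff.mpr fun c hc ↦ ?_
  obtain ⟨Q, ⟨hψQ, A, hA, hBA⟩, hlt⟩ := (h.and_eventually
    (eventually_mul_rpow_lt_of_rpow_le hψ hk hC₀ (by positivity) hτ hc (n * k))).exists
  obtain ⟨f, hf, hfH, hfd⟩ := exists_isPrimitive_of_mem_ratCenters (by positivity) hA hBA
  refine ⟨f, hf, hfd.trans_lt ?_⟩
  rw [neg_div_mul_sub_eq hn, ← mul_assoc]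
  refine hlt hψQ _ (one_pos.trans_le (one_le_heightB hf.linearIndependent)) (hfH.trans ?_)
  rw [mul_pow, ← mul_assoc, ← mul_assoc, mul_assoc (_ : ℝ) _ (T ^ k)]
  gcongr

lemma exists_strictMono_measure_iUnion_lt {X : Type*} [MeasurableSpace X] {μ : Measure X}
    {p : ℕ → Prop} (hp : ∃ᶠ Q in atTop, p Q) {V : ℕ → Set X}
    (hV : Tendsto (fun Q ↦ μ (V Q)) atTop (nhds 0)) {ε : ℝ≥0∞} (hε : ε ≠ 0) :
    ∃ Q : ℕ → ℕ, StrictMono Q ∧ (∀ j, p (Q j)) ∧ μ (⋃ j, V (Q j)) < ε := by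
  obtain ⟨u, hu, hsum⟩ := ENNReal.exists_pos_sum_of_countable hε ℕ
  obtain ⟨Q, hQ, hpQ⟩ := extraction_forall_of_frequently fun j ↦ hp.and_eventually
    (hV.eventually_le_const (ENNReal.coe_pos.mpr (hu j)))
  refine ⟨Q, hQ, fun j ↦ (hpQ j).1, ?_⟩
  exact ((measure_iUnion_le _).trans (ENNReal.tsum_le_tsum fun j ↦ (hpQ j).2)).trans_lt hsum

lemma volume_closedBall_matrix_diff_ne_zero {V : Set (Fin N → Fin m → ℝ)} (hV : volume V < 1) :
    volume (Metric.closedBall (0 : Fin N → Fin m → ℝ) 1 \ V) ≠ 0 := by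
  have hball : 1 ≤ volume (Metric.closedBall (0 : Fin N → Fin m → ℝ) 1) := by
    rw [volume_closedBall_matrix _ one_pos, ENNReal.ofReal_one, ENNReal.one_rpow, mul_one]
    exact one_le_pow₀ one_le_two
  exact ((tsub_pos_of_lt (hV.trans_le hball)).trans_le le_measure_sdiff).ne'

lemma hMeasD_compl_Elk_eq_top (hk : 1 ≤ k) (hN : N ≠ 0) (hn : n = k + m + N)
    (hψpos : ∀ t > 0, 0 < ψ t) (hψ : AntitoneOn ψ (Set.Ioi 0)) {g s s' : ℝ} (hg : gammaE ψ < g)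
    (hs : 0 < s) (hsg : s * (n / (k * N) + g) < n) (hs'₀ : 0 < s') (hs' : s' < s + (m * N : ℕ)) :
    hMeasD dGr s' (Elk n k (k + m) ψ)ᶜ = ⊤ := by
  have hn₀ : 0 < n := by omega
  have hg₀ : 0 < g := by exact_mod_cast (gammaE_nonneg hψpos hψ).trans_lt hg
  obtain ⟨τ, hτ, hsτ⟩ := exists_between ((lt_div_iff₀' hs).mpr hsg)
  rw [lt_div_iff₀' hs] at hsτ
  let e : (Fin k ⊕ Fin m) ⊕ Fin N ≃ Fin n := Fintype.equivOfCardEq (by simp [hn])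
  obtain ⟨κ, T, hκ₀, hκ, hT, hubi⟩ := exists_ubiquity_ratCenters e hN hk
  set C : ℝ := Fintype.card (WedgeIdx n k) * (k.factorial * T ^ k) + 1
  have hC₀ : 0 < C := by positivity
  obtain ⟨Q, hQ, hpQ, hvol⟩ := exists_strictMono_measure_iUnion_lt
    ((frequently_rpow_le_of_gammaE_lt hψpos hψ hk hC₀ hg).and_eventually (eventually_ge_atTop 1))
    (tendsto_volume_nearSet_singleton (k := k) hN hk hκ₀ hκ one_pos (0 : Fin N → Fin m → ℝ) 0)
    one_ne_zero
  refine hMeasD_eq_top_of_fibres e (s := s)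
    (η := ENNReal.ofReal (nestConst (k * N : ℕ))) (by simpa using nestConst_pos _) hn₀
    Set.sdiff_subset (volume_closedBall_matrix_diff_ne_zero hvol) (fun B₂ hB₂ ↦ ?_) hs'₀ hs'
  have hgen (j : ℕ) := fun h ↦ hB₂.2 (Set.mem_iUnion.mpr ⟨j, h⟩)
  have hnk : (n : ℝ) / N = k * (n / (k * N)) := by field_simp
  have hcontent := le_hausdorffContent_limsup_matrix (N := N) (τ := k * τ) (δ := (n : ℝ) / N) hk
    hQ.tendsto_atTop (fun j ↦ (hpQ j).2) hs (by positivity) (by rw [hnk]; gcongr; linarith)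
    (by push_cast; field_simp; linarith) fun t ht ↦
      (hQ.tendsto_atTop.eventually (hubi t ht)).mono fun j hj b ↦ hj B₂ b hB₂.1 (hgen j)
  refine hcontent.trans (hausdorffContent_mono fun B₁ ⟨hB₁, hlim⟩ ↦ ⟨hB₁, ?_⟩)
  refine chart_mem_compl_Elk_of_frequently hψ hk (zero_le_one.trans hT) hC₀ (by simp [C]) hτ ?_
  exact hQ.tendsto_atTop.frequently
    ((frequently_atTop.mpr hlim).mono fun j hj ↦ ⟨(hpQ j).1, hj⟩)

lemma hMeasD_compl_Elk_eq_top_of_lt (hn : n = k + m + N) (hn₀ : 0 < n)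
    (hψpos : ∀ t > 0, 0 < ψ t) {s' : ℝ} (hs'₀ : 0 < s') (hs' : s' < (m * N : ℕ)) :
    hMeasD dGr s' (Elk n k (k + m) ψ)ᶜ = ⊤ := by
  let e : (Fin k ⊕ Fin m) ⊕ Fin N ≃ Fin n := Fintype.equivOfCardEq (by simp [hn])
  refine hMeasD_eq_top_of_fibres e one_ne_zero hn₀ subset_rfl
    (by simpa using volume_closedBall_matrix_diff_ne_zero (N := N) (m := m) (V := ∅) (by simp))
    (fun B₂ _ ↦ one_le_hausdorffContent_zero ⟨0, by simp, ?_⟩) hs'₀ (by rwa [zero_add])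
  refine mem_compl_Elk_iff.mpr fun c hc ↦ ?_
  obtain ⟨f, hf, -, hfd⟩ := exists_isPrimitive_of_mem_ratCenters zero_le_one
    (zero_mem_ratCenters e B₂) (dist_self _).le
  have hH₀ : 0 < heightB f := one_pos.trans_le (one_le_heightB hf.linearIndependent)
  refine ⟨f, hf, hfd.trans_lt ?_⟩
  have hψH := hψpos _ hH₀
  rw [mul_zero, mul_zero]
  positivity

end LowerBound

/-! ### The Hausdorff dimension -/

section Dimension

lemma hDimD_eq_of_threshold {X : Type*} {d : X → X → ℝ} {E : Set X} {D : ℝ}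
    (hlow : ∀ s : ℝ, 0 < s → s < D → hMeasD d s E = ⊤)
    (hup : ∀ s : ℝ, D < s → hMeasD d s E ≠ ⊤) : hDimD d E = ENNReal.ofReal D := by
  apply le_antisymm
  · refine iSup₂_le fun s hs ↦ ?_
    rw [← ENNReal.ofReal_coe_nnreal]
    refine ENNReal.ofReal_le_ofReal ?_
    by_contra! h
    exact hup s h hs
  · refine le_of_forall_lt fun a ha ↦ ?_
    obtain ⟨b, hab, hb⟩ := exists_between ha
    lift b to ℝ≥0 using (hb.trans ENNReal.ofReal_lt_top).ne
    refine hab.trans_le (le_iSup₂_of_le b (hlow b ?_ ?_) le_rfl)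
    · exact_mod_cast pos_of_gt hab
    · simpa [ENNReal.lt_ofReal_iff_toReal_lt] using hb

variable {n k m N : ℕ} {ψ : ℝ → ℝ}

lemma hDimD_compl_Elk_of_gammaE_eq_top (hk : 1 ≤ k) (hn : n = k + m + N)
    (hψpos : ∀ t > 0, 0 < ψ t) (hψ : AntitoneOn ψ (Set.Ioi 0)) (hγ : gammaE ψ = ⊤) :
    hDimD dGr (Elk n k (k + m) ψ)ᶜ = ENNReal.ofReal ((m * N : ℕ) : ℝ) := by
  refine hDimD_eq_of_threshold
    (fun s ↦ hMeasD_compl_Elk_eq_top_of_lt hn (by omega) hψpos) fun s hs ↦ ?_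
  have hp : 0 < s - (m * N : ℕ) := sub_pos.mpr hs
  obtain ⟨g, hg⟩ := exists_gt ((n : ℝ) / (s - (m * N : ℕ)) - n / (k * N))
  rw [sub_lt_iff_lt_add', div_lt_iff₀' hp] at hg
  have hfin := hMeasD_compl_Elk_ne_top hk hn hψpos hψ (hγ ▸ EReal.coe_lt_top g) hp hg
  rwa [sub_add_cancel] at hfin

lemma hDimD_compl_Elk_of_gammaE_eq_coe (hk : 1 ≤ k) (hN : N ≠ 0) (hn : n = k + m + N)
    (hψpos : ∀ t > 0, 0 < ψ t) (hψ : AntitoneOn ψ (Set.Ioi 0)) {c : ℝ} (hγ : gammaE ψ = c) :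
    hDimD dGr (Elk n k (k + m) ψ)ᶜ =
      ENNReal.ofReal ((m * N : ℕ) + (n : ℝ) / (n / (k * N) + c)) := by
  have hc : 0 ≤ c := by exact_mod_cast hγ ▸ gammaE_nonneg hψpos hψ
  have hn₀ : 0 < n := by omega
  set α : ℝ := n / (k * N)
  have : 0 < α := by positivity
  have hD : 0 < (n : ℝ) / (α + c) := by positivity
  refine hDimD_eq_of_threshold (fun s hs₀ hs ↦ ?_) fun s hs ↦ ?_
  · obtain ⟨q, hq, hqD⟩ := exists_between (max_lt hD (sub_lt_iff_lt_add'.mpr hs))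
    obtain ⟨hq₀, hsq⟩ := max_lt_iff.mp hq
    rw [lt_div_iff₀ (by positivity), ← lt_div_iff₀' hq₀] at hqD
    obtain ⟨g, hcg, hg⟩ := exists_between (lt_sub_iff_add_lt'.mpr hqD)
    rw [lt_sub_iff_add_lt', lt_div_iff₀' hq₀] at hg
    exact hMeasD_compl_Elk_eq_top hk hN hn hψpos hψ (hγ ▸ EReal.coe_lt_coe_iff.mpr hcg) hq₀ hg hs₀
      (sub_lt_iff_lt_add.mp hsq)
  · have hp : n / (α + c) < s - (m * N : ℕ) := lt_sub_iff_add_lt'.mpr hs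
    have hp₀ := hD.trans hp
    rw [div_lt_iff₀ (by positivity), ← div_lt_iff₀' hp₀] at hp
    obtain ⟨g, hg, hgc⟩ := exists_between (sub_lt_iff_lt_add'.mpr hp)
    rw [sub_lt_iff_lt_add', div_lt_iff₀' hp₀] at hg
    have hfin := hMeasD_compl_Elk_ne_top hk hn hψpos hψ (hγ ▸ EReal.coe_lt_coe_iff.mpr hgc) hp₀ hg
    rwa [sub_add_cancel] at hfin

end Dimension

theorem dimH_Elk_compl
    (n k l : ℕ) (hk : 1 ≤ k) (hkl : k ≤ l) (hln : l < n)
    (ψ : ℝ → ℝ) (hψpos : ∀ t > 0, 0 < ψ t)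
    (hψdec : ∀ s t : ℝ, 0 < s → s ≤ t → ψ t ≤ ψ s) :
    (0 : EReal) ≤ gammaE ψ ∧
    (gammaE ψ = ⊤ →
      hDimD dGr (Elk n k l ψ)ᶜ =
        ENNReal.ofReal (((l : ℝ) - (k : ℝ)) * ((n : ℝ) - (l : ℝ)))) ∧
    (∀ c : ℝ, gammaE ψ = (c : EReal) →
      hDimD dGr (Elk n k l ψ)ᶜ =
        ENNReal.ofReal
          (((l : ℝ) - (k : ℝ)) * ((n : ℝ) - (l : ℝ)) +
            (n : ℝ) / ((n : ℝ) / ((k : ℝ) * ((n : ℝ) - (l : ℝ))) + c))) := by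
  obtain ⟨m, rfl⟩ := Nat.exists_eq_add_of_le hkl
  obtain ⟨N, hn⟩ := Nat.exists_eq_add_of_le hln.le
  have hψ : AntitoneOn ψ (Set.Ioi 0) := fun s hs t _ hst ↦ hψdec s t hs hst
  have hm : ((k + m : ℕ) : ℝ) - k = m := by rw [Nat.cast_add, add_sub_cancel_left]
  have hN : (n : ℝ) - (k + m : ℕ) = N := by rw [hn, Nat.cast_add _ N, add_sub_cancel_left]
  rw [hm, hN, ← Nat.cast_mul]
  exact ⟨gammaE_nonneg hψpos hψ, hDimD_compl_Elk_of_gammaE_eq_top hk hn hψpos hψ,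
    fun _ ↦ hDimD_compl_Elk_of_gammaE_eq_coe hk (by omega) hn hψpos hψ⟩

end
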